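/- Let Φ = D_n, let I, J ⊆ Δ, and let λ be an integral Φ_I-regular weight with Φ_{λ̄} = Φ_J. Suppose that for some 1 ≤ i ≤ n the weight s_{e_i}λ is Φ_I-regular and λ ⟷̸ s_{e_i}λ. If n̄_{m̄} ≠ 0 and (n_m, n̄_{m̄}) ≠ (m̄, m), then (Φ, Φ_I, Φ_J) is strongly separable. -/

import Mathlib

namespace JantzenBlocks

open scoped Classical

/-- The three classical types `B`, `C`, `D`. -/
inductive CType : Type
  | B | C | D
deriving DecidableEq

/-- The weight space `ℝ^n`. -/
abbrev V (n : ℕ) := Fin n → ℝ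

noncomputable section

/-- The standard inner product on `ℝ^n`. -/
def inn {n : ℕ} (x y : V n) : ℝ := ∑ i, x i * y i

/-- The standard basis vector `e i`. -/
def ee {n : ℕ} (i : Fin n) : V n := Pi.single i 1

/-- The reflection `s_v` in the vector `v`. -/
def sRefl {n : ℕ} (v x : V n) : V n := x - (2 * inn x v / inn v v) • v

/-- The roots `±e_i ± e_j` (`i ≠ j`), i.e. the root system of type `D_n`. -/
def DRoots (n : ℕ) : Set (V n) :=
  {v | ∃ i j : Fin n, i ≠ j ∧ (v = ee i + ee j ∨ v = ee i - ee j ∨ v = -ee i - ee j)}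

/-- The ambient root system `Φ` of type `B_n`, `C_n` or `D_n`. -/
def Phi (n : ℕ) : CType → Set (V n)
  | CType.B => DRoots n ∪ {v | ∃ i : Fin n, v = ee i ∨ v = -ee i}
  | CType.C => DRoots n ∪ {v | ∃ i : Fin n, v = (2:ℝ) • ee i ∨ v = -((2:ℝ) • ee i)}
  | CType.D => DRoots n

/-- The standard positive system `Φ⁺`: roots whose first nonzero coordinate is positive. -/
def PhiPos (n : ℕ) (ct : CType) : Set (V n) :=
  {v | v ∈ Phi n ct ∧ ∃ i : Fin n, 0 < v i ∧ ∀ j : Fin n, j < i → v j = 0}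

/-- The simple root `α_{i+1}` (`0`-based index `i`). -/
def alphaR (n : ℕ) (ct : CType) (i : Fin n) : V n :=
  if h : i.1 + 1 < n then ee i - ee ⟨i.1 + 1, h⟩
  else
    match ct with
    | CType.B => ee i
    | CType.C => (2:ℝ) • ee i
    | CType.D => ee ⟨n - 2, Nat.sub_lt i.pos (by norm_num)⟩ + ee i

/-- The subsystem `Φ_I` generated by the simple roots indexed by `I`. -/
def PhiI (n : ℕ) (ct : CType) (I : Finset (Fin n)) : Set (V n) :=
  Phi n ct ∩ (Submodule.span ℝ (alphaR n ct '' (I : Set (Fin n))) : Set (V n))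

/-- `λ` is `Φ_I`-regular. -/
def RegI (n : ℕ) (ct : CType) (I : Finset (Fin n)) (lam : V n) : Prop :=
  ∀ β ∈ PhiI n ct I, inn lam β ≠ 0

/-- `λ` is integral. -/
def IntegralW (n : ℕ) (ct : CType) (lam : V n) : Prop :=
  ∀ β ∈ Phi n ct, ∃ k : ℤ, 2 * inn lam β / inn β β = (k : ℝ)

/-- `λ` is dominant. -/
def DominantW (n : ℕ) (ct : CType) (lam : V n) : Prop :=
  ∀ i : Fin n, 0 ≤ inn lam (alphaR n ct i)

/-- `μ` lies in the `W_I`-orbit of `λ` (`W_I` generated by the reflections `s_α`, `α ∈ I`). -/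
def WIOrb (n : ℕ) (ct : CType) (I : Finset (Fin n)) : V n → V n → Prop :=
  Relation.ReflTransGen (fun x y => ∃ i ∈ I, y = sRefl (alphaR n ct i) x)

/-- `μ` lies in the `W`-orbit of `λ`. -/
def WOrb (n : ℕ) (ct : CType) : V n → V n → Prop := WIOrb n ct Finset.univ

/-- `λ ∈ Λ_I⁺`. -/
def LamIPlus (n : ℕ) (ct : CType) (I : Finset (Fin n)) (lam : V n) : Prop :=
  IntegralW n ct lam ∧ ∀ i ∈ I, 0 < inn lam (alphaR n ct i)

/-- The sorted list `q_1 < q_2 < … < q_{m-1}` (`1`-based values) of indices of `Δ∖I`. -/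
def Qlist (n : ℕ) (I : Finset (Fin n)) : List ℕ :=
  ((Finset.univ \ I).sort (· ≤ ·)).map (fun j => j.1 + 1)

/-- The number `m` of segments determined by `I`. -/
def mval (n : ℕ) (I : Finset (Fin n)) : ℕ := (Qlist n I).length + 1

/-- `q_s`, with the conventions `q_0 = 0` and `q_m = n`. -/
def qval (n : ℕ) (I : Finset (Fin n)) (s : ℕ) : ℕ :=
  if s = 0 then 0 else if s < mval n I then (Qlist n I).getD (s - 1) 0 else n

/-- `I` is standard (automatic in types `B`, `C`). -/
def StandardI (n : ℕ) (ct : CType) (I : Finset (Fin n)) : Prop :=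
  ct = CType.D → ∀ h : 2 ≤ n,
    ((⟨n - 2, by omega⟩ : Fin n) ∈ I ∨ (⟨n - 1, by omega⟩ : Fin n) ∉ I)

/-- `q_s`, corrected for nonstandard `I` (where `q_{m-1}` is replaced by `n`,
so that the `(m-1)`-st segment is `(q_{m-2}, n]` and the `m`-th segment is empty). -/
def qv (n : ℕ) (ct : CType) (I : Finset (Fin n)) (s : ℕ) : ℕ :=
  if ¬ StandardI n ct I ∧ s = mval n I - 1 then n else qval n I s

/-- The segment length `n_s`. -/
def nsval (n : ℕ) (ct : CType) (I : Finset (Fin n)) (s : ℕ) : ℕ :=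
  qv n ct I s - qv n ct I (s - 1)

/-- The (`0`-based) index `i` lies in the `s`-th segment, i.e. `q_{s-1} < i+1 ≤ q_s`. -/
def InSeg (n : ℕ) (ct : CType) (I : Finset (Fin n)) (s : ℕ) (i : Fin n) : Prop :=
  qv n ct I (s - 1) < i.1 + 1 ∧ i.1 + 1 ≤ qv n ct I s

/-- `n_s^λ(a)`: the number of entries of the `s`-th segment of `λ` with absolute value `a`. -/
def nsl (n : ℕ) (ct : CType) (I : Finset (Fin n)) (lam : V n) (s : ℕ) (a : ℝ) : ℕ :=
  (Finset.univ.filter (fun i : Fin n => InSeg n ct I s i ∧ |lam i| = a)).card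

/-- `a_t = λ̄_{q̄_t}` for `1 ≤ t < m̄`, and `a_{m̄} = 0`. -/
def aval (n : ℕ) (ct : CType) (J : Finset (Fin n)) (lbar : V n) (t : ℕ) : ℝ :=
  if t < mval n J then
    (if h : qv n ct J t - 1 < n then lbar ⟨qv n ct J t - 1, h⟩ else 0)
  else 0

/-- `n_s^λ(a)` is maximal among all `Φ_I`-regular weights in the orbit of `λ`. -/
def IsMaxN (n : ℕ) (ct : CType) (I : Finset (Fin n)) (lam : V n) (s : ℕ) (a : ℝ) : Prop :=
  ∀ mu : V n, WOrb n ct lam mu → RegI n ct I mu →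
    nsl n ct I mu s a ≤ nsl n ct I lam s a

/-- The exceptional configurations of Proposition 4.7 (types `B` and `C`, with
`shortR i` the short/long root `e_i` resp. `2e_i`). -/
def ExcBC (n : ℕ) (ct : CType) (I : Finset (Fin n)) (shortR : Fin n → V n)
    (lam β : V n) : Prop :=
  ∃ s : ℕ, 1 ≤ s ∧ s < mval n I ∧ ∃ a : ℝ, 0 < a ∧
    nsl n ct I lam s a = 1 ∧
    nsl n ct I lam s 0 + nsl n ct I lam (mval n I) a = 1 ∧
    ((∃ i j : Fin n, InSeg n ct I s i ∧ InSeg n ct I s j ∧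
        |lam i| = a ∧ lam j = 0 ∧ (β = shortR i ∨ β = ee i + ee j)) ∨
     (∃ i j : Fin n, InSeg n ct I s i ∧ InSeg n ct I (mval n I) j ∧
        ((lam i = a ∧ lam j = a) ∨ (lam i = -a ∧ lam j = -a)) ∧
        (β = shortR i ∨ β = ee i + ee j)) ∨
     (∃ i j : Fin n, InSeg n ct I s i ∧ InSeg n ct I (mval n I) j ∧
        ((lam i = a ∧ lam j = -a) ∨ (lam i = -a ∧ lam j = a)) ∧
        (β = shortR i ∨ β = ee i - ee j)))

/-- The exceptional configurations of Proposition 4.7 (type `D`). -/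
def ExcD (n : ℕ) (I : Finset (Fin n)) (lam β : V n) : Prop :=
  ∃ s : ℕ, 1 ≤ s ∧ s < mval n I ∧ ∃ a : ℝ, 0 < a ∧
    nsl n CType.D I lam s a = 1 ∧ nsl n CType.D I lam (mval n I) a = 1 ∧
    nsl n CType.D I lam s 0 = 1 ∧ nsl n CType.D I lam (mval n I) 0 = 1 ∧
    ∃ i j k l : Fin n, InSeg n CType.D I s i ∧ InSeg n CType.D I s j ∧
      InSeg n CType.D I (mval n I) k ∧ InSeg n CType.D I (mval n I) l ∧
      lam j = 0 ∧ lam l = 0 ∧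
      ((((lam i = a ∧ lam k = a) ∨ (lam i = -a ∧ lam k = -a)) ∧
          (β = ee i + ee j ∨ β = ee i + ee k)) ∨
       (((lam i = a ∧ lam k = -a) ∨ (lam i = -a ∧ lam k = a)) ∧
          (β = ee i + ee j ∨ β = ee i - ee k)))

/-- The exceptional configurations in which `β` fails to be a linked root. -/
def Exc (n : ℕ) (ct : CType) (I : Finset (Fin n)) (lam β : V n) : Prop :=
  match ct with
  | CType.B => ExcBC n CType.B I (fun i => ee i) lam β
  | CType.C => ExcBC n CType.C I (fun i => (2:ℝ) • ee i) lam β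
  | CType.D => ExcD n I lam β

/-- `β` is a linked root of the `Φ_I`-regular weight `λ` (for standard `I`). -/
def PlainLinked (n : ℕ) (ct : CType) (I : Finset (Fin n)) (lam β : V n) : Prop :=
  RegI n ct I lam ∧ β ∈ PhiPos n ct ∧ β ∉ PhiI n ct I ∧
  RegI n ct I (sRefl β lam) ∧ sRefl β lam ≠ lam ∧ ¬ Exc n ct I lam β

/-- The transposition of the last two indices. -/
def swapLast (n : ℕ) (j : Fin n) : Fin n :=
  if j.1 = n - 1 then ⟨n - 2, Nat.sub_lt j.pos (by norm_num)⟩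
  else if j.1 = n - 2 then ⟨n - 1, Nat.sub_lt j.pos (by norm_num)⟩
  else j

/-- The isomorphism `φ = s_{e_n}` (negating the last coordinate). -/
def phiW {n : ℕ} (x : V n) : V n := fun j => if j.1 = n - 1 then -x j else x j

/-- The image `φ(I)` of an index set under `φ` (interchanging `α_{n-1}` and `α_n`). -/
def phiIdx (n : ℕ) (I : Finset (Fin n)) : Finset (Fin n) := I.image (swapLast n)

/-- `β` is a linked root of `λ`; for nonstandard `I` the notion is transported along `φ`. -/
def LinkedRoot (n : ℕ) (ct : CType) (I : Finset (Fin n)) (lam β : V n) : Prop :=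
  if StandardI n ct I then PlainLinked n ct I lam β
  else PlainLinked n ct (phiIdx n I) (phiW lam) (phiW β)

/-- One step in a connecting chain: `y ∈ W_I x`, or `y = w s_β x` for a linked root `β` of `x`. -/
def ConnStep (n : ℕ) (ct : CType) (I : Finset (Fin n)) (x y : V n) : Prop :=
  RegI n ct I x ∧ RegI n ct I y ∧
  (WIOrb n ct I x y ∨ ∃ β : V n, LinkedRoot n ct I x β ∧ WIOrb n ct I (sRefl β x) y)

/-- `λ ⟷ μ`: `λ` and `μ` are connected by a chain of linked roots. -/
def Conn (n : ℕ) (ct : CType) (I : Finset (Fin n)) (lam mu : V n) : Prop :=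
  RegI n ct I lam ∧ RegI n ct I mu ∧
  Relation.ReflTransGen (ConnStep n ct I) lam mu

/-- The set `^IW^Jλ̄ = Wλ̄ ∩ Λ_I⁺` of weights parametrizing the simple modules. -/
def IWJset (n : ℕ) (ct : CType) (I : Finset (Fin n)) (lbar : V n) : Set (V n) :=
  {mu | WOrb n ct lbar mu ∧ LamIPlus n ct I mu}

/-- `(S, S̄)` is a separable pair for the weight `λ`. -/
def IsSepPair (n : ℕ) (ct : CType) (I J : Finset (Fin n)) (lbar lam : V n)
    (S Sb : Finset ℕ) : Prop :=
  S.Nonempty ∧ Sb.Nonempty ∧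
  S ⊆ Finset.Icc 1 (mval n I) ∧ Sb ⊆ Finset.Icc 1 (mval n J) ∧
  1 < mval n I ∧ 1 < mval n J ∧
  (∀ s ∈ S, ∀ t ∈ Sb, IsMaxN n ct I lam s (aval n ct J lbar t)) ∧
  (∀ s ∈ Finset.Icc 1 (mval n I), s ∉ S →
     ∀ t ∈ Finset.Icc 1 (mval n J), t ∉ Sb →
       nsl n ct I lam s (aval n ct J lbar t) = 0) ∧
  (match ct with
   | CType.B => (mval n I ∈ S ↔ mval n J ∉ Sb)
   | CType.C => (mval n I ∈ S ↔ mval n J ∉ Sb)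
   | CType.D => (mval n I ∈ S ↔ mval n J ∈ Sb))

/-- `𝒟`: the set of separable pairs of the system `(Φ, Φ_I, Φ_J)`. -/
def DSet (n : ℕ) (ct : CType) (I J : Finset (Fin n)) (lbar : V n) :
    Set (Finset ℕ × Finset ℕ) :=
  {p | ∀ lam ∈ IWJset n ct I lbar, IsSepPair n ct I J lbar lam p.1 p.2}

/-- The four weakly separable pairs. -/
def IsWeakPair (n : ℕ) (I J : Finset (Fin n)) (p : Finset ℕ × Finset ℕ) : Prop :=
  p = (Finset.Icc 1 (mval n I - 1), {mval n J}) ∨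
  p = (Finset.Icc 1 (mval n I), {mval n J}) ∨
  p = ({mval n I}, Finset.Icc 1 (mval n J - 1)) ∨
  p = ({mval n I}, Finset.Icc 1 (mval n J))

/-- The system `(Φ, Φ_I, Φ_J)` is separable. -/
def SepSys (n : ℕ) (ct : CType) (I J : Finset (Fin n)) (lbar : V n) : Prop :=
  (DSet n ct I J lbar).Nonempty

/-- The system `(Φ, Φ_I, Φ_J)` is strongly separable. -/
def StronglySepSys (n : ℕ) (ct : CType) (I J : Finset (Fin n)) (lbar : V n) : Prop :=
  ∃ p ∈ DSet n ct I J lbar, ¬ IsWeakPair n I J p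

/-- The system `(Φ, Φ_I, Φ_J)` is weakly separable. -/
def WeaklySepSys (n : ℕ) (ct : CType) (I J : Finset (Fin n)) (lbar : V n) : Prop :=
  SepSys n ct I J lbar ∧ ∀ p ∈ DSet n ct I J lbar, IsWeakPair n I J p

/-- The partial ordering on separable pairs: `(S₁,S̄₁) ≤ (S₂,S̄₂)` iff `S₁ ⊆ S₂`, `S̄₁ ⊇ S̄₂`. -/
def pairLE (p q : Finset ℕ × Finset ℕ) : Prop := p.1 ⊆ q.1 ∧ q.2 ⊆ p.2

/-- Strict version of `pairLE`. -/
def pairLT (p q : Finset ℕ × Finset ℕ) : Prop := pairLE p q ∧ p ≠ q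

/-- The generating relations of the equivalence `∼` on `𝒟`. -/
def PairRel (D : Set (Finset ℕ × Finset ℕ)) (p q : Finset ℕ × Finset ℕ) : Prop :=
  p ∈ D ∧ q ∈ D ∧ ((p.2 = q.2 ∧ p.1 ⊆ q.1) ∨ (p.1 = q.1 ∧ p.2 ⊆ q.2))

/-- The equivalence relation `∼` on separable pairs. -/
def PairEquiv (D : Set (Finset ℕ × Finset ℕ)) :
    Finset ℕ × Finset ℕ → Finset ℕ × Finset ℕ → Prop :=
  Relation.EqvGen (PairRel D)

/-- A trivial separable pair. -/
def TrivialPair (n : ℕ) (ct : CType) (I J : Finset (Fin n)) (lbar : V n)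
    (p : Finset ℕ × Finset ℕ) : Prop :=
  match ct with
  | CType.B | CType.C =>
    (∃ s0 : ℕ, 1 ≤ s0 ∧ s0 < mval n I ∧
       PairEquiv (DSet n ct I J lbar) p ({s0}, Finset.Icc 1 (mval n J))) ∨
    (∃ t0 : ℕ, 1 ≤ t0 ∧ t0 < mval n J ∧
       PairEquiv (DSet n ct I J lbar) p (Finset.Icc 1 (mval n I), {t0}))
  | CType.D =>
    (∃ s0 : ℕ, 1 ≤ s0 ∧ s0 < mval n I ∧
       PairEquiv (DSet n ct I J lbar) p ({s0}, Finset.Icc 1 (mval n J - 1))) ∨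
    (∃ t0 : ℕ, 1 ≤ t0 ∧ t0 < mval n J ∧
       PairEquiv (DSet n ct I J lbar) p (Finset.Icc 1 (mval n I - 1), {t0}))

/-- The set of blocks: equivalence classes of `^IW^Jλ̄` under `⟷`. -/
def BlockSet (n : ℕ) (ct : CType) (I : Finset (Fin n)) (lbar : V n) : Set (Set (V n)) :=
  {Cl | ∃ lam ∈ IWJset n ct I lbar,
     Cl = {mu | mu ∈ IWJset n ct I lbar ∧ Conn n ct I lam mu}}

/-- The parity `P(λ)` of the number of negative entries of `λ`. -/
def Pfun (n : ℕ) (lam : V n) : ℕ :=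
  (Finset.univ.filter (fun i : Fin n => lam i < 0)).card % 2

/-- A fundamental chain `c 1 ∼ c 2 ∼ … ∼ c k` in `𝒟`. -/
def IsFundChain (D : Set (Finset ℕ × Finset ℕ)) (c : ℕ → Finset ℕ × Finset ℕ)
    (k : ℕ) : Prop :=
  1 ≤ k ∧ (∀ i, 1 ≤ i → i ≤ k → c i ∈ D) ∧
  (∀ i, 1 ≤ i → i < k →
     ((c i).1 = (c (i+1)).1 ∨ (c i).2 = (c (i+1)).2) ∧
     (pairLT (c i) (c (i+1)) ∨ pairLT (c (i+1)) (c i)))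

/-- The list of parts of the partition `π_I`. -/
def piParts (n : ℕ) (ct : CType) (I : Finset (Fin n)) : List ℕ :=
  (List.range (mval n I - 1)).map (fun s => nsval n ct I (s+1)) ++
  (List.range (mval n I - 1)).map (fun s => nsval n ct I (s+1)) ++
  (match ct with
   | CType.B => [2 * nsval n ct I (mval n I) + 1]
   | CType.C => [2 * nsval n ct I (mval n I)]
   | CType.D => if nsval n ct I (mval n I) = 0 then []
                else [2 * nsval n ct I (mval n I) - 1, 1])

/-- The `i`-th part (`1`-based) of the partition with list of parts `L`. -/
def partAt (L : List ℕ) (i : ℕ) : ℕ :=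
  (L.mergeSort (fun a b => decide (b ≤ a))).getD (i - 1) 0

/-- The `i`-th part (`1`-based) of the dual partition `π^t`: the number of parts `≥ i`. -/
def dualAt (L : List ℕ) (i : ℕ) : ℕ :=
  (L.filter (fun x => decide (i ≤ x))).length

/-- `k` is compatible with the system `(Φ, Φ_I, Φ_J)`. -/
def CompatibleK (n : ℕ) (ct : CType) (I J : Finset (Fin n)) (k : ℕ) : Prop :=
  1 ≤ k ∧ k ≤ 2 * mval n I - 1 ∧
  (match ct with
   | CType.B =>
     (Odd k ∧ k ≤ partAt (piParts n CType.B J) 2 ∧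
        2 * nsval n CType.B J (mval n J) + 1 ≤ k ∧
        partAt (piParts n CType.B I) k ≤ 2 * nsval n CType.B I (mval n I) + 1) ∨
     (Even k ∧ k ≤ 2 * nsval n CType.B J (mval n J) ∧
        2 * nsval n CType.B I (mval n I) + 1 ≤ partAt (piParts n CType.B I) k)
   | CType.C =>
     (Odd k ∧ k ≤ partAt (piParts n CType.C J) 2 ∧
        2 * nsval n CType.C J (mval n J) + 1 ≤ k ∧
        partAt (piParts n CType.C I) k ≤ 2 * nsval n CType.C I (mval n I)) ∨
     (Even k ∧ k ≤ 2 * nsval n CType.C J (mval n J) ∧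
        2 * nsval n CType.C I (mval n I) + 1 ≤ partAt (piParts n CType.C I) k)
   | CType.D =>
     (Even k ∧ k ≤ partAt (piParts n CType.D J) 2 ∧
        2 * nsval n CType.D J (mval n J) ≤ k ∧
        2 * nsval n CType.D I (mval n I) ≤ partAt (piParts n CType.D I) k) ∨
     (Odd k ∧ k ≤ 2 * nsval n CType.D J (mval n J) - 1 ∧
        partAt (piParts n CType.D I) k ≤ 2 * nsval n CType.D I (mval n I) - 1))

/-- `s_{e_{k_1}}^{ε_1} ⋯ s_{e_{k_r}}^{ε_r} μ`. -/
def applyFlips (n : ℕ) (ks : ℕ → Fin n) (eps : ℕ → Bool) : ℕ → V n → V n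
  | 0, v => v
  | (r+1), v =>
      if eps (r+1) then sRefl (ee (ks (r+1))) (applyFlips n ks eps r v)
      else applyFlips n ks eps r v

end

/-!
A regular weight is a filling of rows, the segments of `I`, in which each row admits only a limited
number of entries `±t`. Its residual digraph joins rows and absolute values: there is an edge from
`s` to `t` if there is room for a further `±t` in row `s`, and an edge from `t` to `s` if `±t`
occurs in row `s`. Reflections in linked roots exchange entries of different rows along the paths of
this digraph. Moving a zero to the row of the `i`-th entry or to the last row, or, if all rows
contain a zero, moving an entry out of the last row, makes room for flipping the sign of the `i`-th
entry by a short sequence of reflections; undoing the exchanges then connects `λ` with `s_{e_i} λ`.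

If no such path exists, the rows `P` and the absolute values `Q` that can be reached form a closed
pair: rows in `P` are saturated with values outside `Q`, and values in `Q` occur only in rows from
`P`. Counting shows that every regular weight of the orbit has the same property, so `P` and the
complement of `Q` define a separable pair. If no pair arising in this way is strongly separable,
then every row contains a zero and every absolute value occurs in the last row, which means
`(n_m, n̄_m̄) = (m̄, m)`.
-/

section SignedSwaps

variable {ι : Type*} [DecidableEq ι]

/-- The reflection `s_{e_i}`, which negates the `i`-th entry of a weight. -/
def flipSign (i : ι) (x : ι → ℝ) : ι → ℝ := Function.update x i (-x i)

/-- The reflection in `e_i - e • e_j` for a sign `e`, which exchanges the `i`-th and the `j`-th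
entry of a weight and multiplies both by `e`. -/
def signedSwap (e : ℤˣ) (i j : ι) (x : ι → ℝ) : ι → ℝ :=
  Function.update (Function.update x i (e • x j)) j (e • x i)

theorem abs_units_smul (e : ℤˣ) (r : ℝ) : |e • r| = |r| := by
  rcases Int.units_eq_one_or e with rfl | rfl <;> simp

theorem exists_units_smul_eq {a b : ℝ} (h : |a| = |b|) : ∃ e : ℤˣ, e • b = a := by
  rcases abs_eq_abs.mp h with rfl | rfl
  · exact ⟨1, one_smul _ _⟩
  · exact ⟨-1, by simp⟩

@[simp]
theorem flipSign_apply_self (i : ι) (x : ι → ℝ) : flipSign i x i = -x i :=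
  Function.update_self ..

theorem flipSign_apply_of_ne {i k : ι} (h : k ≠ i) (x : ι → ℝ) : flipSign i x k = x k :=
  Function.update_of_ne h ..

@[simp]
theorem abs_flipSign_apply (i : ι) (x : ι → ℝ) (k : ι) : |flipSign i x k| = |x k| := by
  by_cases h : k = i
  · rw [h, flipSign_apply_self, abs_neg]
  · rw [flipSign_apply_of_ne h]

theorem flipSign_apply_ne_zero {x : ι → ℝ} (i : ι) {k : ι} (h : x k ≠ 0) :
    flipSign i x k ≠ 0 := by
  rwa [← abs_ne_zero, abs_flipSign_apply, abs_ne_zero]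

@[simp]
theorem flipSign_flipSign (i : ι) (x : ι → ℝ) : flipSign i (flipSign i x) = x := by
  simp [flipSign]

theorem flipSign_comm (i j : ι) (x : ι → ℝ) :
    flipSign i (flipSign j x) = flipSign j (flipSign i x) := by
  by_cases h : i = j
  · rw [h]
  · simp only [flipSign, Function.update_of_ne h, Function.update_of_ne (Ne.symm h)]
    exact Function.update_comm (Ne.symm h) ..

theorem flipSign_eq_self {i : ι} {x : ι → ℝ} (h : x i = 0) : flipSign i x = x := by
  simp [flipSign, h]

@[simp]
theorem signedSwap_apply_right (e : ℤˣ) (i j : ι) (x : ι → ℝ) :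
    signedSwap e i j x j = e • x i :=
  Function.update_self ..

theorem signedSwap_apply_left {i j : ι} (h : i ≠ j) (e : ℤˣ) (x : ι → ℝ) :
    signedSwap e i j x i = e • x j := by
  rw [signedSwap, Function.update_of_ne h, Function.update_self]

theorem signedSwap_apply_of_ne {i j k : ι} (hi : k ≠ i) (hj : k ≠ j) (e : ℤˣ) (x : ι → ℝ) :
    signedSwap e i j x k = x k := by
  rw [signedSwap, Function.update_of_ne hj, Function.update_of_ne hi]

theorem signedSwap_flipSign {i j k : ι} (hi : k ≠ i) (hj : k ≠ j) (e : ℤˣ) (x : ι → ℝ) :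
    signedSwap e i j (flipSign k x) = flipSign k (signedSwap e i j x) := by
  simp only [signedSwap, flipSign, Function.update_of_ne hi, Function.update_of_ne hj,
    Function.update_of_ne hi.symm, Function.update_of_ne hj.symm]
  rw [Function.update_comm hi, Function.update_comm hj]

end SignedSwaps

section Rows

variable {ι ρ : Type*} (row : ι → ρ) (m : ρ)

/-- The value `t` occurs, up to sign, in row `s` of `x`, i.e. `n_s^x(t) ≠ 0`. The rows are the
segments of a weight, `row i` being the segment of the index `i`. -/
def Occurs (x : ι → ℝ) (s : ρ) (t : ℝ) : Prop := ∃ i, row i = s ∧ |x i| = t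

/-- The value `v` can be added to row `s` of `x` without destroying regularity. -/
def Fits (x : ι → ℝ) (s : ρ) (v : ℝ) : Prop :=
  ∀ i, row i = s → x i ≠ v ∧ (s = m → x i ≠ -v)

/-- There is room for a further `±t` in row `s` of `x`. This encodes that `n_s^x(t)` is not
maximal, without reference to the Weyl group orbit of `x`. -/
def HasRoom (x : ι → ℝ) (s : ρ) (t : ℝ) : Prop := ∃ v, |v| = t ∧ Fits row m x s v

/-- Combinatorial form of `Φ_I`-regularity in type `D`: the entries of a row are distinct, and
those of the last row `m` are distinct even up to sign. -/
def RowRegular (x : ι → ℝ) : Prop :=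
  ∀ i j, i ≠ j → row i = row j → x i ≠ x j ∧ (row i = m → x i ≠ -x j)

/-- No other entry of its row agrees with `x i` up to sign. For regular `x` with `x i ≠ 0` this
says that `s_{e_i} x` is regular. -/
def IsSingle (x : ι → ℝ) (i : ι) : Prop := ∀ j, j ≠ i → row j = row i → |x j| ≠ |x i|

variable {row m} {x : ι → ℝ}

theorem fits_of_not_occurs {s : ρ} {v : ℝ} (h : ¬Occurs row x s |v|) : Fits row m x s v :=
  fun i hi => ⟨fun hv => h ⟨i, hi, by rw [hv]⟩, fun _ hv => h ⟨i, hi, by rw [hv, abs_neg]⟩⟩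

theorem hasRoom_of_not_occurs {s : ρ} {v : ℝ} (h : ¬Occurs row x s |v|) :
    HasRoom row m x s |v| :=
  ⟨v, rfl, fits_of_not_occurs h⟩

theorem HasRoom.not_occurs_last {t : ℝ} (h : HasRoom row m x m t) : ¬Occurs row x m t := by
  rintro ⟨i, hi, hit⟩
  obtain ⟨v, rfl, hfits⟩ := h
  exact (abs_eq_abs.mp hit).elim (hfits i hi).1 ((hfits i hi).2 rfl)

theorem HasRoom.not_occurs_zero {s : ρ} (h : HasRoom row m x s 0) : ¬Occurs row x s 0 := by
  rintro ⟨i, hi, hi0⟩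
  obtain ⟨v, hv, hfits⟩ := h
  exact (hfits i hi).1 (by rw [abs_eq_zero.mp hi0, abs_eq_zero.mp hv])

theorem HasRoom.exists_fits_smul {s : ρ} {r : ℝ} (h : HasRoom row m x s |r|) :
    ∃ e : ℤˣ, Fits row m x s (e • r) := by
  obtain ⟨v, hv, hfits⟩ := h
  obtain ⟨e, rfl⟩ := exists_units_smul_eq hv
  exact ⟨e, hfits⟩

theorem IsSingle.hasRoom {i : ι} (h : IsSingle row x i) (hi : row i ≠ m) (h0 : x i ≠ 0) :
    HasRoom row m x (row i) |x i| := by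
  refine ⟨-x i, abs_neg _, fun j hj => ⟨fun hji => ?_, fun hm => absurd hm hi⟩⟩
  by_cases hne : j = i
  · exact h0 (self_eq_neg.mp (hne ▸ hji))
  · exact h j hne hj (by rw [hji, abs_neg])

theorem RowRegular.isSingle_of_row_eq (h : RowRegular row m x) {i : ι} (hi : row i = m) :
    IsSingle row x i := fun j hj hji habs =>
  (abs_eq_abs.mp habs).elim (h j i hj hji).1 ((h j i hj hji).2 (hji.trans hi))

theorem RowRegular.eq_neg_of_abs_eq (h : RowRegular row m x) {i j : ι} (hij : i ≠ j)
    (hrow : row i = row j) (habs : |x i| = |x j|) : x i = -x j :=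
  (abs_eq_abs.mp habs).resolve_left (h i j hij hrow).1

theorem RowRegular.isSingle_of_hasRoom (h : RowRegular row m x) {i : ι}
    (hroom : HasRoom row m x (row i) |x i|) : IsSingle row x i := fun j hj hji habs => by
  obtain ⟨v, hv, hfits⟩ := hroom
  have hneg := h.eq_neg_of_abs_eq hj hji habs
  rcases abs_eq_abs.mp hv with rfl | rfl
  · exact (hfits i rfl).1 rfl
  · exact (hfits j hji).1 hneg

variable [DecidableEq ι]

theorem RowRegular.update (h : RowRegular row m x) {i : ι} {v : ℝ}
    (hv : ∀ k, k ≠ i → row k = row i → x k ≠ v ∧ (row i = m → x k ≠ -v)) :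
    RowRegular row m (Function.update x i v) := by
  intro a b hab hrow
  rcases eq_or_ne a i with rfl | ha
  · rw [Function.update_self, Function.update_of_ne hab.symm]
    have := hv b hab.symm hrow.symm
    exact ⟨this.1.symm, fun hm heq => this.2 hm (by rw [heq, neg_neg])⟩
  rcases eq_or_ne b i with rfl | hb
  · rw [Function.update_self, Function.update_of_ne hab]
    exact ⟨(hv a hab hrow).1, fun hm => (hv a hab hrow).2 (hrow ▸ hm)⟩
  · rw [Function.update_of_ne ha, Function.update_of_ne hb]
    exact h a b hab hrow

theorem RowRegular.flipSign_of_isSingle (h : RowRegular row m x) {i : ι} (hi : IsSingle row x i) :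
    RowRegular row m (flipSign i x) :=
  h.update fun k hk hki => ⟨fun heq => hi k hk hki (by rw [heq, abs_neg]),
    fun _ heq => hi k hk hki (by rw [heq, neg_neg])⟩

theorem RowRegular.isSingle_of_flipSign (h : RowRegular row m x) {i : ι}
    (hflip : RowRegular row m (flipSign i x)) : IsSingle row x i :=
  fun j hj hji habs => (hflip j i hj hji).1 <| by
    rw [flipSign_apply_of_ne hj, flipSign_apply_self]
    exact h.eq_neg_of_abs_eq hj hji habs

theorem RowRegular.signedSwap_of_fits (h : RowRegular row m x) {e : ℤˣ} {p q : ι}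
    (hpq : row p ≠ row q) (hp : Fits row m x (row p) (e • x q))
    (hq : Fits row m x (row q) (e • x p)) :
    RowRegular row m (signedSwap e p q x) := by
  refine (h.update fun k _ hk => hp k hk).update fun k _ hk => ?_
  have hkp : k ≠ p := fun hkp => hpq (hkp ▸ hk)
  rw [Function.update_of_ne hkp]
  exact hq k hk

@[simp]
theorem occurs_flipSign {i : ι} {s : ρ} {t : ℝ} :
    Occurs row (flipSign i x) s t ↔ Occurs row x s t := by
  simp only [Occurs, abs_flipSign_apply]

@[simp]
theorem isSingle_flipSign {i j : ι} : IsSingle row (flipSign j x) i ↔ IsSingle row x i := by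
  simp only [IsSingle, abs_flipSign_apply]

theorem RowRegular.exists_signedSwap_of_hasRoom (h : RowRegular row m x) {p q : ι}
    (hpq : row p ≠ row q) (hp : HasRoom row m x (row p) |x q|)
    (hq : ¬Occurs row x (row q) |x p|) : ∃ e, RowRegular row m (signedSwap e p q x) := by
  obtain ⟨e, he⟩ := hp.exists_fits_smul
  exact ⟨e, h.signedSwap_of_fits hpq he (fits_of_not_occurs (by rwa [abs_units_smul]))⟩

end Rows

section Moves

variable {ι ρ : Type*}

/-- The zero in position `p` can be exchanged with the entry in position `q`, which lies in a row
without zero. -/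
structure CanMoveZero (row : ι → ρ) (m : ρ) (x : ι → ℝ) (p q : ι) : Prop where
  row_ne : row p ≠ row q
  eq_zero : x p = 0
  not_occurs : ¬Occurs row x (row q) 0
  hasRoom : HasRoom row m x (row p) |x q|

variable {row : ι → ρ} {m : ρ} {x : ι → ℝ} {p q r i j : ι}

theorem ne_zero_of_not_occurs (h : ¬Occurs row x (row i) 0) : x i ≠ 0 :=
  fun hi => h ⟨i, rfl, by rw [hi, abs_zero]⟩

theorem ne_of_row_ne (h : row p ≠ row q) : p ≠ q := fun hpq => h (congrArg row hpq)

namespace CanMoveZero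

theorem ne_zero (h : CanMoveZero row m x p q) : x q ≠ 0 := ne_zero_of_not_occurs h.not_occurs

theorem abs_ne (h : CanMoveZero row m x p q) : |x p| ≠ |x q| := by
  rw [h.eq_zero, abs_zero]
  exact (abs_pos.mpr h.ne_zero).ne

theorem exists_signedSwap [DecidableEq ι] (h : CanMoveZero row m x p q) (hx : RowRegular row m x) :
    ∃ e, RowRegular row m (signedSwap e p q x) :=
  hx.exists_signedSwap_of_hasRoom h.row_ne h.hasRoom <| by
    rw [h.eq_zero, abs_zero]
    exact h.not_occurs

end CanMoveZero

variable [DecidableEq ι]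

theorem signedSwap_signedSwap_signedSwap_of_zero (npq : p ≠ q) (nrp : r ≠ p) (nrq : r ≠ q)
    (hp : x p = 0) {f g : ℤˣ} (hf : f • x q = -x r) :
    signedSwap 1 r p (signedSwap g r q (signedSwap f p q x)) =
      flipSign r (Function.update x q (g • x r)) := by
  funext k
  rcases eq_or_ne k r with rfl | hkr
  · simp [signedSwap_apply_left nrp, signedSwap_apply_of_ne nrp.symm npq,
      signedSwap_apply_left npq, hf, nrq]
  rcases eq_or_ne k p with rfl | hkp
  · simp [signedSwap_apply_left nrq, flipSign_apply_of_ne hkr, npq, hp]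
  rw [signedSwap_apply_of_ne hkr hkp, flipSign_apply_of_ne hkr]
  rcases eq_or_ne k q with rfl | hkq
  · simp [signedSwap_apply_of_ne nrp nrq]
  · rw [signedSwap_apply_of_ne hkr hkq, Function.update_of_ne hkq,
      signedSwap_apply_of_ne hkp hkq]

theorem not_occurs_zero_signedSwap (hx : RowRegular row m x) (hpq : row p ≠ row q) (hp : x p = 0)
    (hq : x q ≠ 0) (e : ℤˣ) : ¬Occurs row (signedSwap e p q x) (row p) 0 := by
  rintro ⟨k, hk, hk0⟩
  rw [abs_eq_zero] at hk0
  have hkq : k ≠ q := ne_of_row_ne (hk ▸ hpq)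
  rcases eq_or_ne k p with rfl | hkp
  · rw [signedSwap_apply_left hkq, smul_eq_zero_iff_eq] at hk0
    exact hq hk0
  · rw [signedSwap_apply_of_ne hkp hkq] at hk0
    exact (hx k p hkp hk).1 (hk0.trans hp.symm)

theorem IsSingle.signedSwap_of_abs_ne (hi : IsSingle row x i) (hip : i ≠ p) (hiq : i ≠ q)
    (hp : row p = row i → |x q| ≠ |x i|) (hq : row q = row i → |x p| ≠ |x i|) (e : ℤˣ) :
    IsSingle row (signedSwap e p q x) i := by
  intro k hki hk
  rw [signedSwap_apply_of_ne hip hiq]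
  rcases eq_or_ne k q with rfl | hkq
  · rw [signedSwap_apply_right, abs_units_smul]
    exact hq hk
  rcases eq_or_ne k p with rfl | hkp
  · rw [signedSwap_apply_left hkq, abs_units_smul]
    exact hp hk
  · rw [signedSwap_apply_of_ne hkp hkq]
    exact hi k hki hk

/-- The moves on regular weights from which all connections in the proof are built, for a relation
`C` on weights that plays the role of `⟷`. -/
structure MoveSystem (row : ι → ρ) (m : ρ) (C : (ι → ℝ) → (ι → ℝ) → Prop) : Prop where
  symm {x y : ι → ℝ} : C x y → C y x
  trans {x y z : ι → ℝ} : C x y → C y z → C x z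
  signedSwap_of_row_ne {x : ι → ℝ} {i j : ι} {e : ℤˣ} : row i ≠ row j → |x i| ≠ |x j| →
    RowRegular row m x → RowRegular row m (signedSwap e i j x) → C x (signedSwap e i j x)
  swap_of_row_eq {x : ι → ℝ} {i j : ι} : row i = row j → i ≠ j → RowRegular row m x →
    C x (signedSwap 1 i j x)
  flip_flip_of_last {x : ι → ℝ} {i j : ι} : row i = m → row j = m → i ≠ j → RowRegular row m x →
    C x (flipSign i (flipSign j x))
  flip_flip_of_abs_eq {x : ι → ℝ} {i j : ι} : row i ≠ m → row j = m → |x i| = |x j| →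
    ¬Occurs row x (row i) 0 → RowRegular row m x → RowRegular row m (flipSign i (flipSign j x)) →
    C x (flipSign i (flipSign j x))
  flip_of_zero {x : ι → ℝ} {i p : ι} : row i = row p → row i ≠ m → x i ≠ 0 → x p = 0 →
    ¬(Occurs row x m 0 ∧ Occurs row x m |x i|) → RowRegular row m x → IsSingle row x i →
    C x (flipSign i x)

namespace MoveSystem

variable {C : (ι → ℝ) → (ι → ℝ) → Prop} (M : MoveSystem row m C)

include M

theorem flip_of_signedSwap {e : ℤˣ} (hpq : row p ≠ row q) (habs : |x p| ≠ |x q|)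
    (hx : RowRegular row m x) (hy : RowRegular row m (signedSwap e p q x)) (hip : i ≠ p)
    (hiq : i ≠ q) (hi : IsSingle row x i) (hi' : IsSingle row (signedSwap e p q x) i)
    (hC : C (signedSwap e p q x) (flipSign i (signedSwap e p q x))) : C x (flipSign i x) := by
  have hflip := M.signedSwap_of_row_ne (x := flipSign i x) (e := e) hpq
    (by simpa only [abs_flipSign_apply]) (hx.flipSign_of_isSingle hi)
    (by rw [signedSwap_flipSign hip hiq]; exact hy.flipSign_of_isSingle hi')
  rw [signedSwap_flipSign hip hiq] at hflip
  exact M.trans (M.trans (M.signedSwap_of_row_ne hpq habs hx hy) hC) (M.symm hflip)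

theorem flip_of_flip_abs_eq (hi : row i ≠ m) (hj : row j = m) (habs : |x i| = |x j|)
    (h0 : ¬Occurs row x (row i) 0) (hx : RowRegular row m x) (hsingle : IsSingle row x i)
    (hC : C x (flipSign j x)) : C x (flipSign i x) := by
  have h := M.flip_flip_of_abs_eq (x := flipSign j x) hi hj (by simpa only [abs_flipSign_apply])
    (by rwa [occurs_flipSign])
    (hx.flipSign_of_isSingle (hx.isSingle_of_row_eq hj))
    (by rw [flipSign_flipSign]; exact hx.flipSign_of_isSingle hsingle)
  rw [flipSign_flipSign] at h
  exact M.trans hC h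

theorem flip_of_flip_last (hi : row i = m) (hj : row j = m) (hx : RowRegular row m x)
    (hC : C x (flipSign j x)) : C x (flipSign i x) := by
  rcases eq_or_ne i j with rfl | hij
  · exact hC
  have h := M.flip_flip_of_last hi hj hij (hx.flipSign_of_isSingle (hx.isSingle_of_row_eq hj))
  rw [flipSign_flipSign] at h
  exact M.trans hC h

theorem flip_of_occurs_zero (hi : row i = m) (hi0 : x i ≠ 0) (hx : RowRegular row m x)
    (h0 : Occurs row x m 0) : C x (flipSign i x) := by
  obtain ⟨l, hl, hl0⟩ := h0
  rw [abs_eq_zero] at hl0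
  have h := M.flip_flip_of_last hi hl (fun hil => hi0 (hil ▸ hl0)) hx
  rwa [flipSign_eq_self hl0] at h

theorem flip_of_swap_back (h : CanMoveZero row m x p q) (hx : RowRegular row m x)
    (hp : ¬Occurs row x (row p) |x q|) (hq : IsSingle row x q) : C x (flipSign q x) := by
  have hne := ne_of_row_ne h.row_ne
  have hy : RowRegular row m (signedSwap 1 p q x) :=
    hx.signedSwap_of_fits h.row_ne (fits_of_not_occurs (by rwa [one_smul]))
      (fits_of_not_occurs (by rw [h.eq_zero, smul_zero, abs_zero]; exact h.not_occurs))
  have hback : signedSwap (-1) p q (signedSwap 1 p q x) = flipSign q x := by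
    funext k
    rcases eq_or_ne k q with rfl | hkq
    · simp [signedSwap_apply_left hne]
    rcases eq_or_ne k p with rfl | hkp
    · simp [signedSwap_apply_left hne, flipSign_apply_of_ne hne, h.eq_zero]
    · simp [signedSwap_apply_of_ne hkp hkq, flipSign_apply_of_ne hkq]
  have hC := M.signedSwap_of_row_ne (e := -1) h.row_ne
    (by simpa [signedSwap_apply_left hne] using h.abs_ne.symm) hy
    (by rw [hback]; exact hx.flipSign_of_isSingle hq)
  rw [hback] at hC
  exact M.trans (M.signedSwap_of_row_ne h.row_ne h.abs_ne hx hy) hC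

/-- Exchanging the zero at `p` with `q`, then `r` with the zero at `q`, and then `p` with `r`,
every exchange with the appropriate signs. -/
theorem flip_update_of_zero (hx : RowRegular row m x) (hpr : row p = row r) (hr : row r ≠ m)
    (hqr : row q ≠ row r) (hp : x p = 0) (h0 : ¬Occurs row x (row q) 0) (habs : |x q| = |x r|)
    (hsingle : IsSingle row x r) {v : ℝ} (hv : |v| = |x q|)
    (hfits : ∀ k, k ≠ q → row k = row q → x k ≠ v ∧ (row q = m → x k ≠ -v)) :
    C x (flipSign r (Function.update x q v)) := by
  have hq0 : x q ≠ 0 := ne_zero_of_not_occurs h0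
  have hr0 : x r ≠ 0 := by rwa [← abs_ne_zero, ← habs, abs_ne_zero]
  have hpq : row p ≠ row q := hpr ▸ hqr.symm
  have npq : p ≠ q := ne_of_row_ne hpq
  have nrq : r ≠ q := ne_of_row_ne hqr.symm
  have nrp : r ≠ p := fun h => hr0 (h ▸ hp)
  obtain ⟨f, hf⟩ := exists_units_smul_eq (a := -x r) (b := x q) (by rw [abs_neg, habs])
  obtain ⟨g, hg⟩ := exists_units_smul_eq (hv.trans habs)
  have yq : signedSwap f p q x q = 0 := by rw [signedSwap_apply_right, hp, smul_zero]
  have yr : signedSwap f p q x r = x r := signedSwap_apply_of_ne nrp nrq f x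
  have hy : RowRegular row m (signedSwap f p q x) := by
    refine hx.signedSwap_of_fits hpq (fun k hk => ⟨fun hkr => ?_, fun hm => ?_⟩)
      (fits_of_not_occurs (by rwa [hp, smul_zero, abs_zero]))
    · rw [hf] at hkr
      rcases eq_or_ne k r with rfl | hne
      · exact hr0 (self_eq_neg.mp hkr)
      · exact hsingle k hne (hk.trans hpr) (by rw [hkr, abs_neg])
    · exact absurd (hpr ▸ hm) hr
  have hz : RowRegular row m (signedSwap g r q (signedSwap f p q x)) := by
    refine hy.signedSwap_of_fits hqr.symm (fits_of_not_occurs ?_) (fun k hk => ?_)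
    · rw [yq, smul_zero, abs_zero, ← hpr]
      exact not_occurs_zero_signedSwap hx hpq hp hq0 f
    · rw [yr, hg]
      rcases eq_or_ne k q with rfl | hne
      · have hv0 : v ≠ 0 := by rwa [← abs_ne_zero, hv, abs_ne_zero]
        rw [yq]
        exact ⟨hv0.symm, fun _ h => hv0 (neg_eq_zero.mp h.symm)⟩
      · rw [signedSwap_apply_of_ne (ne_of_row_ne (hk ▸ hpq.symm)) hne]
        exact hfits k hne hk
  rw [← hg, ← signedSwap_signedSwap_signedSwap_of_zero npq nrp nrq hp hf]
  refine M.trans (M.signedSwap_of_row_ne hpq ?_ hx hy) (M.trans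
    (M.signedSwap_of_row_ne hqr.symm ?_ hy hz) (M.swap_of_row_eq hpr.symm nrp hz))
  · rw [hp, abs_zero]
    exact (abs_pos.mpr hq0).ne
  · rw [yr, yq, abs_zero]
    exact (abs_pos.mpr hr0).ne'

theorem flip_of_zero_of_abs_eq (hx : RowRegular row m x) (hpr : row p = row r) (hr : row r ≠ m)
    (hqr : row q ≠ row r) (hp : x p = 0) (h0 : ¬Occurs row x (row q) 0) (habs : |x q| = |x r|)
    (hsingle : IsSingle row x r) : C x (flipSign r x) := by
  have h := M.flip_update_of_zero hx hpr hr hqr hp h0 habs hsingle rfl fun k hk hkq =>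
    ⟨(hx k q hk hkq).1, fun hm => (hx k q hk hkq).2 (hkq.trans hm)⟩
  rwa [Function.update_eq_self] at h

theorem flip_of_canMoveZero (h : CanMoveZero row m x p q) (hx : RowRegular row m x)
    (hq : IsSingle row x q) : C x (flipSign q x) := by
  by_cases hocc : Occurs row x (row p) |x q|
  swap
  · exact M.flip_of_swap_back h hx hocc hq
  obtain ⟨r, hrp, habs⟩ := hocc
  have hr : IsSingle row x r := hx.isSingle_of_hasRoom (by rw [hrp, habs]; exact h.hasRoom)
  have hrm : row r ≠ m := fun hm => by
    have hroom := h.hasRoom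
    rw [← hrp, hm] at hroom
    exact hroom.not_occurs_last ⟨r, hm, habs⟩
  have hqr : row q ≠ row r := hrp ▸ h.row_ne.symm
  have hboth : C x (flipSign r (flipSign q x)) :=
    M.flip_update_of_zero hx hrp.symm hrm hqr h.eq_zero h.not_occurs habs.symm hr (abs_neg _)
      fun k hk hkq => ⟨fun hkv => hq k hk hkq (by rw [hkv, abs_neg]),
        fun _ hkv => hq k hk hkq (by rw [hkv, neg_neg])⟩
  have hback : C (flipSign q x) (flipSign r (flipSign q x)) :=
    M.flip_of_zero_of_abs_eq (hx.flipSign_of_isSingle hq) hrp.symm hrm hqr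
      (by rw [flipSign_apply_of_ne (ne_of_row_ne h.row_ne), h.eq_zero])
      (by rw [occurs_flipSign]; exact h.not_occurs)
      (by rw [abs_flipSign_apply, abs_flipSign_apply, habs])
      (isSingle_flipSign.mpr hr)
  exact M.trans hboth (M.symm hback)

end MoveSystem

end Moves

section Layers

variable {α : Type*} {base : Set α} {step : α → α → Prop}

/-- The vertices at distance at most `k` from `base` in the digraph with edges `step`. -/
def layer (base : Set α) (step : α → α → Prop) : ℕ → Set α
  | 0 => base
  | k + 1 => layer base step k ∪ {b | ∃ a ∈ layer base step k, step a b}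

theorem subset_layer (k : ℕ) : base ⊆ layer base step k := by
  induction k with
  | zero => exact subset_rfl
  | succ k ih => exact ih.trans Set.subset_union_left

theorem exists_step_of_mem_layer {b : α} {k : ℕ} (hb : b ∈ layer base step k) (hbase : b ∉ base) :
    ∃ l, b ∉ layer base step l ∧ ∃ a ∈ layer base step l, step a b := by
  induction k with
  | zero => exact absurd hb hbase
  | succ k ih =>
    by_cases h : b ∈ layer base step k
    · exact ih h
    · exact ⟨k, h, hb.resolve_left h⟩

end Layers

section Reductions

variable {ι ρ : Type*}

/-- The rows that a zero can reach in at most `k` exchanges. -/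
def zeroReach (row : ι → ρ) (m : ρ) (x : ι → ℝ) : ℕ → Set ρ :=
  layer {s | Occurs row x s 0} fun s s' => ∃ t, HasRoom row m x s t ∧ Occurs row x s' t

/-- The rows from which a zero can be removed in at most `k` exchanges. -/
def zeroCoreach (row : ι → ρ) (m : ρ) (x : ι → ℝ) : ℕ → Set ρ :=
  layer {s | ¬Occurs row x s 0} fun s s' => ∃ t, HasRoom row m x s' t ∧ Occurs row x s t

/-- The absolute values that can be removed from row `m` in at most `k` exchanges. -/
def lastReach (row : ι → ρ) (m : ρ) (x : ι → ℝ) : ℕ → Set ℝ :=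
  layer {t | HasRoom row m x m t} fun t t' => ∃ s, Occurs row x s t ∧ HasRoom row m x s t'

variable {row : ι → ρ} {m : ρ} {C : (ι → ℝ) → (ι → ℝ) → Prop} {T T' : Set (ρ × ℝ)}
  {x y : ι → ℝ} {s s' : ρ} {t t' : ℝ} {i p q r j : ι} {k : ℕ}

/-- The entry in position `q` of the last row can be exchanged with the entry in position `j` of
another row. -/
structure CanLeaveLast (row : ι → ρ) (m : ρ) (x : ι → ℝ) (q j : ι) : Prop where
  row_eq : row q = m
  row_ne : row j ≠ m
  not_occurs : ¬Occurs row x m |x j|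
  hasRoom : HasRoom row m x (row j) |x q|

theorem CanLeaveLast.row_ne_row (h : CanLeaveLast row m x q j) : row q ≠ row j :=
  h.row_eq ▸ h.row_ne.symm

theorem CanLeaveLast.abs_ne (h : CanLeaveLast row m x q j) : |x q| ≠ |x j| :=
  fun habs => h.not_occurs ⟨q, h.row_eq, habs⟩

variable [DecidableEq ι]

/-- A regular weight `y` obtained from `x` by exchanges, all of which take place within the set `T`
of cells (row, absolute value). Flips of single entries outside `T` may be performed on `y`
instead of `x`. -/
structure ReducesWithin (row : ι → ρ) (m : ρ)
    (C : (ι → ℝ) → (ι → ℝ) → Prop) (T : Set (ρ × ℝ)) (x y : ι → ℝ) : Prop where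
  regular : RowRegular row m y
  eq_of_notMem (i : ι) : (row i, |x i|) ∉ T ∨ (row i, |y i|) ∉ T → y i = x i
  flip_of_flip (i : ι) : (row i, |x i|) ∉ T → IsSingle row x i → C y (flipSign i y) →
    C x (flipSign i x)

namespace ReducesWithin

theorem refl (hx : RowRegular row m x) : ReducesWithin row m C T x x :=
  ⟨hx, fun _ _ => rfl, fun _ _ _ h => h⟩

theorem mono (h : ReducesWithin row m C T x y) (hT : T ⊆ T') : ReducesWithin row m C T' x y :=
  ⟨h.regular, fun i hi => h.eq_of_notMem i (hi.imp (mt (@hT _)) (mt (@hT _))),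
    fun i hi => h.flip_of_flip i (mt (@hT _) hi)⟩

theorem occurs_iff (h : ReducesWithin row m C T x y) (hst : (s, t) ∉ T) :
    Occurs row y s t ↔ Occurs row x s t := by
  constructor
  · rintro ⟨i, rfl, rfl⟩
    exact ⟨i, rfl, by rw [h.eq_of_notMem i (Or.inr hst)]⟩
  · rintro ⟨i, rfl, rfl⟩
    exact ⟨i, rfl, by rw [h.eq_of_notMem i (Or.inl hst)]⟩

theorem hasRoom (h : ReducesWithin row m C T x y) (hst : (s, t) ∉ T) (hroom : HasRoom row m x s t) :
    HasRoom row m y s t := by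
  obtain ⟨v, rfl, hfits⟩ := hroom
  refine ⟨v, rfl, fun i hi => ⟨fun hv => ?_, fun hm hv => ?_⟩⟩
  · have := h.eq_of_notMem i (Or.inr (by rwa [hi, hv]))
    exact (hfits i hi).1 (this.symm.trans hv)
  · have := h.eq_of_notMem i (Or.inr (by rwa [hi, hv, abs_neg]))
    exact (hfits i hi).2 hm (this.symm.trans hv)

theorem isSingle (h : ReducesWithin row m C T x y) (hiT : (row i, |x i|) ∉ T)
    (hi : IsSingle row x i) : IsSingle row y i := by
  intro u hu hui habs
  rw [h.eq_of_notMem i (Or.inl hiT)] at habs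
  rw [h.eq_of_notMem u (Or.inr (by rwa [hui, habs]))] at habs
  exact hi u hu hui habs

theorem signedSwap (M : MoveSystem row m C) (h : ReducesWithin row m C T x y) (hT : T ⊆ T')
    {e : ℤˣ} (hpq : row p ≠ row q) (habs : |y p| ≠ |y q|)
    (hy : RowRegular row m (signedSwap e p q y)) (hpp : (row p, |y p|) ∈ T')
    (hqq : (row q, |y q|) ∈ T') (hpq' : (row p, |y q|) ∈ T') (hqp' : (row q, |y p|) ∈ T') :
    ReducesWithin row m C T' x (signedSwap e p q y) := by
  have mem_of_mem {u : ι} (hu : (row u, |y u|) ∈ T') : (row u, |x u|) ∈ T' := by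
    by_contra hxu
    exact hxu (by rwa [← h.eq_of_notMem u (Or.inl (mt (@hT _) hxu))])
  have eq_of_notMem (u : ι)
      (hu : (row u, |x u|) ∉ T' ∨ (row u, |JantzenBlocks.signedSwap e p q y u|) ∉ T') :
      JantzenBlocks.signedSwap e p q y u = x u := by
    rcases eq_or_ne u q with rfl | huq
    · rw [signedSwap_apply_right, abs_units_smul] at hu
      exact (hu.elim (absurd (mem_of_mem hqq)) (absurd hqp'))
    rcases eq_or_ne u p with rfl | hup
    · rw [signedSwap_apply_left huq, abs_units_smul] at hu
      exact (hu.elim (absurd (mem_of_mem hpp)) (absurd hpq'))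
    rw [signedSwap_apply_of_ne hup huq] at hu ⊢
    exact h.eq_of_notMem u (hu.imp (mt (@hT _)) (mt (@hT _)))
  refine ⟨hy, eq_of_notMem, fun u huT hu hC => ?_⟩
  have hup : u ≠ p := fun hup => huT (mem_of_mem (hup ▸ hpp))
  have huq : u ≠ q := fun huq => huT (mem_of_mem (huq ▸ hqq))
  have hyu : y u = x u := h.eq_of_notMem u (Or.inl (mt (@hT _) huT))
  have hu' : IsSingle row y u := h.isSingle (mt (@hT _) huT) hu
  refine h.flip_of_flip u (mt (@hT _) huT) hu
    (M.flip_of_signedSwap hpq habs h.regular hy hup huq hu' ?_ hC)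
  exact hu'.signedSwap_of_abs_ne hup huq
    (fun hrow heq => huT (by rwa [← hyu, ← heq, ← hrow]))
    (fun hrow heq => huT (by rwa [← hyu, ← heq, ← hrow])) e

end ReducesWithin

theorem exists_canMoveZero_of_zeroReach_step
    (h : ReducesWithin row m C (zeroReach row m x k ×ˢ Set.univ) x y) (hs : s ∈ zeroReach row m x k)
    (hs' : s' ∉ zeroReach row m x k) (h0 : Occurs row y s 0)
    (hroom : ∀ t, t ≠ 0 → HasRoom row m x s t → HasRoom row m y s t) (hst : HasRoom row m x s t)
    (hocc : Occurs row x s' t) : ∃ p q, row p = s ∧ row q = s' ∧ CanMoveZero row m y p q := by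
  have off (u : ℝ) : (s', u) ∉ zeroReach row m x k ×ˢ Set.univ := fun hu => hs' hu.1
  have h0' : ¬Occurs row x s' 0 := fun h0' => hs' (subset_layer k h0')
  have ht : t ≠ 0 := fun ht => h0' (ht ▸ hocc)
  obtain ⟨p, hp, hp0⟩ := h0
  obtain ⟨q, hq, hqt⟩ := (h.occurs_iff (off t)).mpr hocc
  refine ⟨p, q, hp, hq, fun hpq => hs' (hq ▸ hpq ▸ hp ▸ hs), abs_eq_zero.mp hp0, ?_, ?_⟩
  · rwa [hq, h.occurs_iff (off 0)]
  · rw [hp, hqt]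
    exact hroom t ht hst

theorem CanMoveZero.hasRoom_signedSwap (h : CanMoveZero row m x p q) (e : ℤˣ) (ht : t ≠ 0)
    (hroom : HasRoom row m x (row q) t) : HasRoom row m (signedSwap e p q x) (row q) t := by
  obtain ⟨v, hv, hfits⟩ := hroom
  refine ⟨v, hv, fun u hu => ?_⟩
  rcases eq_or_ne u q with rfl | huq
  · have hv0 : v ≠ 0 := by rwa [← abs_ne_zero, hv]
    rw [signedSwap_apply_right, h.eq_zero, smul_zero]
    exact ⟨hv0.symm, fun _ h0 => hv0 (neg_eq_zero.mp h0.symm)⟩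
  · rw [signedSwap_apply_of_ne (ne_of_row_ne (hu ▸ h.row_ne.symm)) huq]
    exact hfits u hu

theorem exists_reducesWithin_zeroReach (M : MoveSystem row m C) (hx : RowRegular row m x)
    (hs : s ∈ zeroReach row m x k) : ∃ y,
      ReducesWithin row m C (zeroReach row m x k ×ˢ Set.univ) x y ∧ Occurs row y s 0 ∧
      ∀ t, t ≠ 0 → HasRoom row m x s t → HasRoom row m y s t := by
  induction k generalizing s with
  | zero => exact ⟨x, .refl hx, hs, fun _ _ h => h⟩
  | succ k ih =>
    have hsub : zeroReach row m x k ×ˢ (Set.univ : Set ℝ) ⊆ zeroReach row m x (k + 1) ×ˢ Set.univ :=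
      Set.prod_mono_left Set.subset_union_left
    by_cases hk : s ∈ zeroReach row m x k
    · obtain ⟨y, hy, hrest⟩ := ih hk
      exact ⟨y, hy.mono hsub, hrest⟩
    obtain ⟨s₀, hs₀, t, hst, hocc⟩ := hs.resolve_left hk
    obtain ⟨y, hy, h0, hroom⟩ := ih hs₀
    obtain ⟨p, q, rfl, rfl, hpq⟩ :=
      exists_canMoveZero_of_zeroReach_step hy hs₀ hk h0 hroom hst hocc
    obtain ⟨e, he⟩ := hpq.exists_signedSwap hy.regular
    refine ⟨signedSwap e p q y, hy.signedSwap M hsub hpq.row_ne hpq.abs_ne he ⟨Or.inl hs₀, trivial⟩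
      ⟨hs, trivial⟩ ⟨Or.inl hs₀, trivial⟩ ⟨hs, trivial⟩, ⟨q, rfl, ?_⟩, fun t ht hqt => ?_⟩
    · rw [signedSwap_apply_right, hpq.eq_zero, smul_zero, abs_zero]
    · exact hpq.hasRoom_signedSwap e ht (hy.hasRoom (fun h => hk h.1) hqt)

theorem exists_canMoveZero_of_zeroCoreach_step
    (h : ReducesWithin row m C (zeroCoreach row m x k ×ˢ Set.univ) x y)
    (hs : s ∈ zeroCoreach row m x k) (hs' : s' ∉ zeroCoreach row m x k) (h0 : ¬Occurs row y s 0)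
    (hocc : ∀ t, t ≠ 0 → Occurs row x s t → Occurs row y s t) (hst : HasRoom row m x s' t)
    (ht : Occurs row x s t) : ∃ p q, row p = s' ∧ row q = s ∧ CanMoveZero row m y p q := by
  have off (u : ℝ) : (s', u) ∉ zeroCoreach row m x k ×ˢ Set.univ := fun hu => hs' hu.1
  have h0' : Occurs row x s' 0 := by
    by_contra h0'
    exact hs' (subset_layer k h0')
  have ht0 : t ≠ 0 := fun ht0 => (ht0 ▸ hst).not_occurs_zero h0'
  obtain ⟨p, hp, hp0⟩ := (h.occurs_iff (off 0)).mpr h0'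
  obtain ⟨q, hq, hqt⟩ := hocc t ht0 ht
  refine ⟨p, q, hp, hq, fun hpq => hs' (hp ▸ hpq ▸ hq ▸ hs), abs_eq_zero.mp hp0, hq ▸ h0, ?_⟩
  rw [hp, hqt]
  exact h.hasRoom (off t) hst

theorem exists_reducesWithin_zeroCoreach (M : MoveSystem row m C) (hx : RowRegular row m x)
    (hs : s ∈ zeroCoreach row m x k) : ∃ y,
      ReducesWithin row m C (zeroCoreach row m x k ×ˢ Set.univ) x y ∧ ¬Occurs row y s 0 ∧
      ∀ t, t ≠ 0 → Occurs row x s t → Occurs row y s t := by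
  induction k generalizing s with
  | zero => exact ⟨x, .refl hx, hs, fun _ _ h => h⟩
  | succ k ih =>
    have hsub : zeroCoreach row m x k ×ˢ (Set.univ : Set ℝ) ⊆
        zeroCoreach row m x (k + 1) ×ˢ Set.univ :=
      Set.prod_mono_left Set.subset_union_left
    by_cases hk : s ∈ zeroCoreach row m x k
    · obtain ⟨y, hy, hrest⟩ := ih hk
      exact ⟨y, hy.mono hsub, hrest⟩
    obtain ⟨s₀, hs₀, t, hst, ht⟩ := hs.resolve_left hk
    obtain ⟨y, hy, h0, hocc⟩ := ih hs₀
    obtain ⟨p, q, rfl, rfl, hpq⟩ :=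
      exists_canMoveZero_of_zeroCoreach_step hy hs₀ hk h0 hocc hst ht
    obtain ⟨e, he⟩ := hpq.exists_signedSwap hy.regular
    refine ⟨signedSwap e p q y, hy.signedSwap M hsub hpq.row_ne hpq.abs_ne he ⟨hs, trivial⟩
      ⟨Or.inl hs₀, trivial⟩ ⟨hs, trivial⟩ ⟨Or.inl hs₀, trivial⟩,
      not_occurs_zero_signedSwap hy.regular hpq.row_ne hpq.eq_zero hpq.ne_zero e,
      fun t ht hpt => ?_⟩
    obtain ⟨u, hu, hut⟩ := (hy.occurs_iff fun h => hk h.1).mpr hpt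
    have hup : u ≠ p := fun hup => ht (by rw [← hut, hup, hpq.eq_zero, abs_zero])
    exact ⟨u, hu, by rw [signedSwap_apply_of_ne hup (ne_of_row_ne (hu ▸ hpq.row_ne)), hut]⟩

namespace CanLeaveLast

theorem exists_signedSwap (h : CanLeaveLast row m x q j) (hx : RowRegular row m x) :
    ∃ e, RowRegular row m (signedSwap e q j x) := by
  obtain ⟨e, he⟩ := h.hasRoom.exists_fits_smul
  refine ⟨e, hx.signedSwap_of_fits h.row_ne_row (fits_of_not_occurs ?_) he⟩
  rw [abs_units_smul, h.row_eq]
  exact h.not_occurs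

theorem not_occurs_signedSwap (h : CanLeaveLast row m x q j) (hx : RowRegular row m x) (e : ℤˣ) :
    ¬Occurs row (signedSwap e q j x) m |x q| := by
  rintro ⟨u, hu, habs⟩
  have huj : u ≠ j := fun huj => h.row_ne (huj ▸ hu)
  rcases eq_or_ne u q with rfl | huq
  · rw [signedSwap_apply_left huj, abs_units_smul] at habs
    exact h.abs_ne habs.symm
  · rw [signedSwap_apply_of_ne huq huj] at habs
    exact hx.isSingle_of_row_eq h.row_eq u huq (hu.trans h.row_eq.symm) habs

end CanLeaveLast

theorem exists_canLeaveLast_of_lastReach_step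
    (h : ReducesWithin row m C (Set.univ ×ˢ lastReach row m x k) x y)
    (ht' : t' ∉ lastReach row m x k)
    (h0 : ¬Occurs row y m t) (hocc : ∀ s, s ≠ m → Occurs row x s t → Occurs row y s t)
    (hst : Occurs row x s t) (hroom : HasRoom row m x s t') :
    ∃ q j, |y q| = t' ∧ |y j| = t ∧ CanLeaveLast row m y q j := by
  have off (u : ρ) : (u, t') ∉ Set.univ ×ˢ lastReach row m x k := fun hu => ht' hu.2
  have hsm : s ≠ m := fun hsm => ht' (subset_layer k (hsm ▸ hroom))
  have hm : Occurs row x m t' := by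
    by_contra hm
    obtain ⟨v, rfl, -⟩ := hroom
    exact ht' (subset_layer k (hasRoom_of_not_occurs hm))
  obtain ⟨q, hq, hqt⟩ := (h.occurs_iff (off m)).mpr hm
  obtain ⟨j, rfl, hjt⟩ := hocc s hsm hst
  exact ⟨q, j, hqt, hjt, hq, hsm, hjt ▸ h0, hqt ▸ h.hasRoom (off _) hroom⟩

theorem exists_reducesWithin_lastReach (M : MoveSystem row m C) (hx : RowRegular row m x)
    (ht : t ∈ lastReach row m x k) : ∃ y,
      ReducesWithin row m C (Set.univ ×ˢ lastReach row m x k) x y ∧ ¬Occurs row y m t ∧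
      ∀ s, s ≠ m → Occurs row x s t → Occurs row y s t := by
  induction k generalizing t with
  | zero => exact ⟨x, .refl hx, HasRoom.not_occurs_last ht, fun _ _ h => h⟩
  | succ k ih =>
    have hsub : (Set.univ : Set ρ) ×ˢ lastReach row m x k ⊆
        Set.univ ×ˢ lastReach row m x (k + 1) :=
      Set.prod_mono_right Set.subset_union_left
    by_cases hk : t ∈ lastReach row m x k
    · obtain ⟨y, hy, hrest⟩ := ih hk
      exact ⟨y, hy.mono hsub, hrest⟩
    obtain ⟨t₀, ht₀, s, hst, hroom⟩ := ht.resolve_left hk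
    obtain ⟨y, hy, h0, hocc⟩ := ih ht₀
    obtain ⟨q, j, rfl, rfl, hqj⟩ := exists_canLeaveLast_of_lastReach_step hy hk h0 hocc hst hroom
    obtain ⟨e, he⟩ := hqj.exists_signedSwap hy.regular
    refine ⟨signedSwap e q j y, hy.signedSwap M hsub hqj.row_ne_row hqj.abs_ne he ⟨trivial, ht⟩
      ⟨trivial, Or.inl ht₀⟩ ⟨trivial, Or.inl ht₀⟩ ⟨trivial, ht⟩,
      hqj.not_occurs_signedSwap hy.regular e, fun s' hs' hs't => ?_⟩
    obtain ⟨u, rfl, hut⟩ := (hy.occurs_iff fun h => hk h.2).mpr hs't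
    refine ⟨u, rfl, ?_⟩
    have huj : u ≠ j := fun huj => hqj.abs_ne (huj ▸ hut.symm)
    rwa [signedSwap_apply_of_ne (ne_of_row_ne (hqj.row_eq ▸ hs')) huj]

end Reductions

section Flips

variable {ι ρ : Type*} {row : ι → ρ} {m : ρ} {C : (ι → ℝ) → (ι → ℝ) → Prop} {x : ι → ℝ}
  {i j p q : ι} {k : ℕ}

theorem signedSwap_signedSwap_signedSwap_of_eq_neg [DecidableEq ι] (niq : i ≠ q) (nij : i ≠ j)
    (nqj : q ≠ j) (hqi : x q = -x i) :
    signedSwap 1 i j (signedSwap 1 i q (signedSwap 1 q j x)) = flipSign i (flipSign q x) := by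
  funext u
  rcases eq_or_ne u i with rfl | hui
  · simp [signedSwap_apply_left nij, signedSwap_apply_of_ne nij.symm nqj.symm, hqi,
      flipSign_apply_of_ne niq]
  rcases eq_or_ne u j with rfl | huj
  · simp [signedSwap_apply_left niq, signedSwap_apply_left nqj, flipSign_apply_of_ne hui,
      flipSign_apply_of_ne nqj.symm]
  rw [signedSwap_apply_of_ne hui huj, flipSign_apply_of_ne hui]
  rcases eq_or_ne u q with rfl | huq
  · simp [signedSwap_apply_of_ne niq nij, hqi]
  · rw [signedSwap_apply_of_ne hui huq, signedSwap_apply_of_ne huq huj, flipSign_apply_of_ne huq]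

namespace MoveSystem

variable [DecidableEq ι] (M : MoveSystem row m C)

include M

theorem flip_last_of_mem_zeroReach (hi : row i = m) (hi0 : x i ≠ 0) (hx : RowRegular row m x)
    (hk : m ∈ zeroReach row m x k) : C x (flipSign i x) := by
  by_cases h0 : Occurs row x m 0
  · exact M.flip_of_occurs_zero hi hi0 hx h0
  obtain ⟨l, hl, s, hs, t, hst, hocc⟩ := exists_step_of_mem_layer hk h0
  obtain ⟨y, hy, hys, hroom⟩ := exists_reducesWithin_zeroReach M hx hs
  obtain ⟨p, q, -, hq, hpq⟩ := exists_canMoveZero_of_zeroReach_step hy hs hl hys hroom hst hocc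
  refine hy.flip_of_flip i (fun h => hl (hi ▸ h.1)) (hx.isSingle_of_row_eq hi) ?_
  exact M.flip_of_flip_last hi hq hy.regular
    (M.flip_of_canMoveZero hpq hy.regular (hy.regular.isSingle_of_row_eq hq))

theorem flip_of_canMoveZero_of_row_eq (h : CanMoveZero row m x p q) (hqi : row q = row i)
    (hi : row i ≠ m) (hx : RowRegular row m x) (hsingle : IsSingle row x i) :
    C x (flipSign i x) := by
  have h0 : ¬Occurs row x (row i) 0 := hqi ▸ h.not_occurs
  have hi0 : x i ≠ 0 := ne_zero_of_not_occurs h0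
  by_cases hm : Occurs row x m |x i|
  · obtain ⟨r, hr, hri⟩ := hm
    have hr0 : x r ≠ 0 := by rwa [← abs_ne_zero, hri, abs_ne_zero]
    have hreach : m ∈ zeroReach row m x 2 :=
      Or.inr ⟨row i, Or.inr ⟨row p, ⟨p, rfl, by rw [h.eq_zero, abs_zero]⟩, _, h.hasRoom, q, hqi,
        rfl⟩, _, hsingle.hasRoom hi hi0, r, hr, hri⟩
    exact M.flip_of_flip_abs_eq hi hr hri.symm h0 hx hsingle
      (M.flip_last_of_mem_zeroReach hr hr0 hx hreach)
  rcases eq_or_ne q i with rfl | hne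
  · exact M.flip_of_canMoveZero h hx hsingle
  have hip : i ≠ p := fun hip => hi0 (hip ▸ h.eq_zero)
  obtain ⟨e, hy⟩ := h.exists_signedSwap hx
  have hy0 : signedSwap e p q x q = 0 := by rw [signedSwap_apply_right, h.eq_zero, smul_zero]
  have hyi : signedSwap e p q x i = x i := signedSwap_apply_of_ne hip hne.symm e x
  have hysingle : IsSingle row (signedSwap e p q x) i :=
    hsingle.signedSwap_of_abs_ne hip hne.symm (fun hpi => absurd (hpi.trans hqi.symm) h.row_ne)
      (fun _ => by rw [h.eq_zero, abs_zero]; exact (abs_pos.mpr hi0).ne) e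
  refine M.flip_of_signedSwap h.row_ne h.abs_ne hx hy hip hne.symm hsingle hysingle ?_
  refine M.flip_of_zero hqi.symm hi (by rwa [hyi]) hy0 (fun hocc => ?_) hy hysingle
  obtain ⟨u, hu, hui⟩ := hocc.2
  rw [hyi] at hui
  have huq : u ≠ q := fun huq => hi (by rw [← hqi, ← huq, hu])
  rcases eq_or_ne u p with rfl | hup
  · rw [signedSwap_apply_left huq, abs_units_smul] at hui
    exact hsingle q hne hqi hui
  · exact hm ⟨u, hu, by rwa [signedSwap_apply_of_ne hup huq] at hui⟩

theorem flip_of_mem_zeroReach (hi : row i ≠ m) (h0 : ¬Occurs row x (row i) 0)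
    (hx : RowRegular row m x) (hsingle : IsSingle row x i) (hk : row i ∈ zeroReach row m x k) :
    C x (flipSign i x) := by
  obtain ⟨l, hl, s, hs, t, hst, hocc⟩ := exists_step_of_mem_layer hk h0
  obtain ⟨y, hy, hys, hroom⟩ := exists_reducesWithin_zeroReach M hx hs
  obtain ⟨p, q, -, hq, hpq⟩ := exists_canMoveZero_of_zeroReach_step hy hs hl hys hroom hst hocc
  have hoff : (row i, |x i|) ∉ zeroReach row m x l ×ˢ Set.univ := fun h => hl h.1
  exact hy.flip_of_flip i hoff hsingle
    (M.flip_of_canMoveZero_of_row_eq hpq hq hi hy.regular (hy.isSingle hoff hsingle))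

theorem flip_of_canMoveZero_of_occurs_last (h : CanMoveZero row m x p q) (hpi : row p = row i)
    (hi : row i ≠ m) (hi0 : x i ≠ 0) (hqi : |x q| ≠ |x i|) (hm0 : Occurs row x m 0)
    (hm : Occurs row x m |x i|) (hx : RowRegular row m x) (hsingle : IsSingle row x i) :
    C x (flipSign i x) := by
  have hip : i ≠ p := fun hip => hi0 (hip ▸ h.eq_zero)
  have hiq : i ≠ q := fun hiq => hqi (by rw [hiq])
  have hqm : row q ≠ m := fun hqm => h.not_occurs (hqm ▸ hm0)
  obtain ⟨e, hy⟩ := h.exists_signedSwap hx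
  have hysingle : IsSingle row (signedSwap e p q x) i :=
    hsingle.signedSwap_of_abs_ne hip hiq (fun _ => hqi)
      (fun hqi => absurd (hpi.trans hqi.symm) h.row_ne) e
  refine M.flip_of_signedSwap h.row_ne h.abs_ne hx hy hip hiq hsingle hysingle ?_
  have hlast {u : ι} (hu : row u = m) : signedSwap e p q x u = x u :=
    signedSwap_apply_of_ne (fun hup => hi (by rw [← hpi, ← hup, hu]))
      (fun huq => hqm (by rw [← huq, hu])) e x
  obtain ⟨r, hr, hri⟩ := hm
  obtain ⟨l, hl, hl0⟩ := hm0
  refine M.flip_of_flip_abs_eq hi hr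
    (by rw [hlast hr, signedSwap_apply_of_ne hip hiq, hri])
    (hpi ▸ not_occurs_zero_signedSwap hx h.row_ne h.eq_zero h.ne_zero e) hy hysingle
    (M.flip_of_occurs_zero hr ?_ hy ⟨l, hl, by rw [hlast hl, hl0]⟩)
  rwa [hlast hr, ← abs_ne_zero, hri, abs_ne_zero]

theorem flip_of_mem_zeroCoreach (hi : row i ≠ m) (hi0 : x i ≠ 0) (h0 : Occurs row x (row i) 0)
    (hx : RowRegular row m x) (hsingle : IsSingle row x i) (hk : row i ∈ zeroCoreach row m x k) :
    C x (flipSign i x) := by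
  obtain ⟨l, hl, s, hs, t, hst, hocc⟩ := exists_step_of_mem_layer hk (not_not_intro h0)
  obtain ⟨y, hy, hys, hyocc⟩ := exists_reducesWithin_zeroCoreach M hx hs
  obtain ⟨p, q, hp, -, hpq⟩ := exists_canMoveZero_of_zeroCoreach_step hy hs hl hys hyocc hst hocc
  have hoff : (row i, |x i|) ∉ zeroCoreach row m x l ×ˢ Set.univ := fun h => hl h.1
  have hyi0 : y i ≠ 0 := by rwa [hy.eq_of_notMem i (Or.inl hoff)]
  have hysingle := hy.isSingle hoff hsingle
  refine hy.flip_of_flip i hoff hsingle ?_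
  by_cases hqi : |y q| = |y i|
  · exact M.flip_of_zero_of_abs_eq hy.regular hp hi (hp ▸ hpq.row_ne.symm) hpq.eq_zero
      hpq.not_occurs hqi hysingle
  by_cases hm : Occurs row y m 0 ∧ Occurs row y m |y i|
  · exact M.flip_of_canMoveZero_of_occurs_last hpq hp hi hyi0 hqi hm.1 hm.2 hy.regular hysingle
  · exact M.flip_of_zero hp.symm hi hyi0 hpq.eq_zero hm hy.regular hysingle

/-- The entry at `q` passes through row `i`: exchange it with `j`, then the new entry at `q` with
`i`, and then `i` with `j`. -/
theorem flip_flip_of_canLeaveLast (h : CanLeaveLast row m x q j) (hij : row i = row j)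
    (hqi : x q = -x i) (hi0 : x i ≠ 0) (hx : RowRegular row m x) (hsingle : IsSingle row x i) :
    C x (flipSign i (flipSign q x)) := by
  have habs : |x q| = |x i| := by rw [hqi, abs_neg]
  have hiq : row i ≠ row q := hij.trans_ne h.row_ne_row.symm
  have nij : i ≠ j := fun hij => h.abs_ne (by rw [habs, hij])
  have nqj : q ≠ j := ne_of_row_ne h.row_ne_row
  have him : row i ≠ m := hij ▸ h.row_ne
  have hy : RowRegular row m (signedSwap 1 q j x) := by
    refine hx.signedSwap_of_fits h.row_ne_row (fits_of_not_occurs ?_)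
      (fun u hu => ⟨fun hui => ?_, fun hjm => absurd hjm h.row_ne⟩)
    · rw [one_smul, h.row_eq]
      exact h.not_occurs
    · rw [one_smul, hqi] at hui
      rcases eq_or_ne u i with rfl | hne
      · exact hi0 (self_eq_neg.mp hui)
      · exact hsingle u hne (hu.trans hij.symm) (by rw [hui, abs_neg])
  have yi : signedSwap 1 q j x i = x i := signedSwap_apply_of_ne (ne_of_row_ne hiq) nij 1 x
  have yq : signedSwap 1 q j x q = x j := by rw [signedSwap_apply_left nqj, one_smul]
  have hz : RowRegular row m (signedSwap 1 i q (signedSwap 1 q j x)) := by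
    refine hy.signedSwap_of_fits hiq (fun u hu => ⟨fun huj' => ?_, fun him' => absurd him' him⟩)
      (fits_of_not_occurs ?_)
    · rw [one_smul, yq] at huj'
      rcases eq_or_ne u j with rfl | huj
      · rw [signedSwap_apply_right, one_smul] at huj'
        exact h.abs_ne (by rw [huj'])
      · have huq : u ≠ q := fun huq => hiq (by rw [← hu, huq])
        rw [signedSwap_apply_of_ne huq huj] at huj'
        exact (hx u j huj (hu.trans hij)).1 huj'
    · rw [one_smul, yi, h.row_eq, ← habs]
      exact h.not_occurs_signedSwap hx 1
  rw [← signedSwap_signedSwap_signedSwap_of_eq_neg (ne_of_row_ne hiq) nij nqj hqi]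
  refine M.trans (M.signedSwap_of_row_ne h.row_ne_row h.abs_ne hx hy) (M.trans
    (M.signedSwap_of_row_ne hiq ?_ hy hz) (M.swap_of_row_eq hij nij hz))
  rw [yi, yq, ← habs]
  exact h.abs_ne

theorem flip_of_canLeaveLast_of_row_eq (h : CanLeaveLast row m x q j) (hij : row i = row j)
    (hqi : |x q| = |x i|) (hi0 : x i ≠ 0) (hm0 : Occurs row x m 0) (hx : RowRegular row m x)
    (hsingle : IsSingle row x i) : C x (flipSign i x) := by
  have hq0 : x q ≠ 0 := by rwa [← abs_ne_zero, hqi, abs_ne_zero]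
  have hqi' : q ≠ i := ne_of_row_ne (hij.symm ▸ h.row_ne_row)
  rcases abs_eq_abs.mp hqi with heq | hneg
  · have hback : C (flipSign q x) (flipSign i x) := by
      have h' : CanLeaveLast row m (flipSign q x) q j :=
        ⟨h.row_eq, h.row_ne, by simpa using h.not_occurs, by
          have := (isSingle_flipSign (j := q)).mpr hsingle
          simpa [hij, hqi] using this.hasRoom (hij ▸ h.row_ne) (flipSign_apply_ne_zero q hi0)⟩
      have := M.flip_flip_of_canLeaveLast h' hij (i := i)
        (by rw [flipSign_apply_self, flipSign_apply_of_ne hqi'.symm, heq])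
        (flipSign_apply_ne_zero q hi0)
        (hx.flipSign_of_isSingle (hx.isSingle_of_row_eq h.row_eq)) (isSingle_flipSign.mpr hsingle)
      rwa [flipSign_flipSign] at this
    exact M.trans (M.flip_of_occurs_zero h.row_eq hq0 hx hm0) hback
  · have hend : C (flipSign i x) (flipSign q (flipSign i x)) :=
      M.flip_of_occurs_zero h.row_eq (flipSign_apply_ne_zero i hq0)
        (hx.flipSign_of_isSingle hsingle) (by rwa [occurs_flipSign])
    rw [flipSign_comm] at hend
    exact M.trans (M.flip_flip_of_canLeaveLast h hij hneg hi0 hx hsingle) (M.symm hend)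

theorem flip_of_canLeaveLast_of_row_ne (h : CanLeaveLast row m x q j) (hij : row j ≠ row i)
    (hqi : |x q| = |x i|) (hi : row i ≠ m) (hi0 : x i ≠ 0) (h0 : Occurs row x (row i) 0)
    (hx : RowRegular row m x) (hsingle : IsSingle row x i) : C x (flipSign i x) := by
  have hiq : row q ≠ row i := h.row_eq.trans_ne hi.symm
  have niq : i ≠ q := (ne_of_row_ne hiq).symm
  have nij : i ≠ j := (ne_of_row_ne hij).symm
  obtain ⟨e, hy⟩ := h.exists_signedSwap hx
  have hyi : signedSwap e q j x i = x i := signedSwap_apply_of_ne niq nij e x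
  have hysingle : IsSingle row (signedSwap e q j x) i :=
    hsingle.signedSwap_of_abs_ne niq nij (fun h => absurd h hiq) (fun h => absurd h hij) e
  refine M.flip_of_signedSwap h.row_ne_row h.abs_ne hx hy niq nij hsingle hysingle ?_
  obtain ⟨p, hp, hp0⟩ := h0
  refine M.flip_of_zero hp.symm hi (by rwa [hyi]) ?_ (fun hocc => ?_) hy hysingle
  · rw [signedSwap_apply_of_ne (ne_of_row_ne (hp.trans_ne hiq.symm))
      (ne_of_row_ne (hp.trans_ne hij.symm))]
    exact abs_eq_zero.mp hp0
  · rw [hyi, ← hqi] at hocc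
    exact h.not_occurs_signedSwap hx e hocc.2

theorem flip_of_mem_lastReach (hi : row i ≠ m) (hi0 : x i ≠ 0) (h0 : Occurs row x (row i) 0)
    (hm0 : Occurs row x m 0) (hm : Occurs row x m |x i|) (hx : RowRegular row m x)
    (hsingle : IsSingle row x i) (hreach0 : ∀ l, 0 ∉ lastReach row m x l)
    (hk : |x i| ∈ lastReach row m x k) : C x (flipSign i x) := by
  obtain ⟨l, hl, t, ht, s, hst, hroom⟩ :=
    exists_step_of_mem_layer hk fun h => HasRoom.not_occurs_last h hm
  obtain ⟨y, hy, hyt, hyocc⟩ := exists_reducesWithin_lastReach M hx ht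
  obtain ⟨q, j, hqi, -, hqj⟩ := exists_canLeaveLast_of_lastReach_step hy hl hyt hyocc hst hroom
  have hoff : (row i, |x i|) ∉ Set.univ ×ˢ lastReach row m x l := fun h => hl h.2
  have hyi : y i = x i := hy.eq_of_notMem i (Or.inl hoff)
  have hzero (s : ρ) : Occurs row y s 0 ↔ Occurs row x s 0 := hy.occurs_iff fun h => hreach0 l h.2
  have hysingle := hy.isSingle hoff hsingle
  rw [← hyi] at hi0 hqi
  refine hy.flip_of_flip i hoff hsingle ?_
  by_cases hij : row j = row i
  · exact M.flip_of_canLeaveLast_of_row_eq hqj hij.symm hqi hi0 ((hzero m).mpr hm0) hy.regular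
      hysingle
  · exact M.flip_of_canLeaveLast_of_row_ne hqj hij hqi hi hi0 ((hzero _).mpr h0) hy.regular
      hysingle

end MoveSystem

end Flips

section Closedness

variable {ι ρ : Type*}

/-- A set `P` of rows and a set `Q` of absolute values that are closed in the residual digraph of
`x`, which has an edge from `s` to `t` if there is room for `±t` in row `s`, and an edge from `t` to
`s` if `±t` occurs in row `s`. -/
structure ResidualClosed (row : ι → ρ) (m : ρ) (x : ι → ℝ) (P : Set ρ) (Q : Set ℝ) : Prop where
  mem_of_hasRoom {s : ρ} {t : ℝ} : s ∈ P → HasRoom row m x s t → t ∈ Q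
  mem_of_occurs {s : ρ} {t : ℝ} : t ∈ Q → Occurs row x s t → s ∈ P

variable (row : ι → ρ) (m : ρ) (x : ι → ℝ)

theorem residualClosed_zeroReach : ResidualClosed row m x {s | ∃ k, s ∈ zeroReach row m x k}
    {t | t = 0 ∨ ∃ k, ∃ s ∈ zeroReach row m x k, HasRoom row m x s t} where
  mem_of_hasRoom := fun ⟨k, hk⟩ hroom => Or.inr ⟨k, _, hk, hroom⟩
  mem_of_occurs := by
    rintro s t (rfl | ⟨k, s', hs', hroom⟩) hocc
    · exact ⟨0, hocc⟩
    · exact ⟨k + 1, Or.inr ⟨s', hs', t, hroom, hocc⟩⟩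

theorem residualClosed_compl_zeroCoreach :
    ResidualClosed row m x {s | ∀ k, s ∉ zeroCoreach row m x k}
      {t | t ≠ 0 ∧ ∀ k, ∀ s ∈ zeroCoreach row m x k, ¬Occurs row x s t} where
  mem_of_hasRoom := fun hs hroom =>
    ⟨fun h => hs 0 (h ▸ hroom).not_occurs_zero,
      fun k s' hs' hocc => hs (k + 1) (Or.inr ⟨s', hs', _, hroom, hocc⟩)⟩
  mem_of_occurs := fun ht hocc k hs => ht.2 k _ hs hocc

theorem residualClosed_lastReach :
    ResidualClosed row m x {s | s = m ∨ ∃ k, ∃ t ∈ lastReach row m x k, Occurs row x s t}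
      {t | ∃ k, t ∈ lastReach row m x k} where
  mem_of_hasRoom := by
    rintro s t (rfl | ⟨k, t', ht', hocc⟩) hroom
    · exact ⟨0, hroom⟩
    · exact ⟨k + 1, Or.inr ⟨t', ht', s, hocc, hroom⟩⟩
  mem_of_occurs := fun ⟨k, hk⟩ hocc => Or.inr ⟨k, _, hk, hocc⟩

variable {row m x}

theorem zero_notMem_lastReach (h0 : ∀ i, Occurs row x (row i) 0) (hm : Occurs row x m 0) (k : ℕ) :
    0 ∉ lastReach row m x k := by
  induction k with
  | zero => exact fun h => HasRoom.not_occurs_last h hm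
  | succ k ih =>
    rintro (h | ⟨t, -, s, ⟨j, rfl, -⟩, hroom⟩)
    · exact ih h
    · exact hroom.not_occurs_zero (h0 j)

variable {C : (ι → ℝ) → (ι → ℝ) → Prop} [DecidableEq ι] {i : ι} {rows : Set ρ}

namespace MoveSystem

variable (M : MoveSystem row m C)

include M

theorem flip_of_occurs_zero_of_occurs_last (hx : RowRegular row m x) (hi0 : x i ≠ 0)
    (hsingle : IsSingle row x i) (hrows : ∀ j, row j ∈ rows) (hi : row i ≠ m)
    (h0 : Occurs row x (row i) 0) (hm0 : Occurs row x m 0) (hm : Occurs row x m |x i|)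
    (hlast : ∀ P Q, ResidualClosed row m x P Q → m ∈ P → 0 ∉ Q →
      ((∀ s ∈ rows, s ∈ P → s = m) ∧ ∀ j, |x j| ∉ Q) ∨ (rows ⊆ P ∧ ∀ j, x j ≠ 0 → |x j| ∈ Q))
    (hnot : ¬((∀ s ∈ rows, Occurs row x s 0) ∧ ∀ j, Occurs row x m |x j|)) :
    C x (flipSign i x) := by
  by_cases hco : ∃ k, row i ∈ zeroCoreach row m x k
  · obtain ⟨k, hk⟩ := hco
    exact M.flip_of_mem_zeroCoreach hi hi0 h0 hx hsingle hk
  have hall : ∀ s ∈ rows, Occurs row x s 0 := by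
    have hcl := residualClosed_compl_zeroCoreach row m x
    have hiP := not_exists.mp hco
    have hmP := hcl.mem_of_occurs (hcl.mem_of_hasRoom hiP (hsingle.hasRoom hi hi0)) hm
    rcases hlast _ _ hcl hmP (fun h => h.1 rfl) with ⟨h, -⟩ | ⟨h, -⟩
    · exact absurd (h _ (hrows i) hiP) hi
    · exact fun s hs => not_not.mp (h hs 0)
  have h0last := zero_notMem_lastReach (fun i => hall _ (hrows i)) hm0
  rcases hlast _ _ (residualClosed_lastReach row m x) (Or.inl rfl) (fun ⟨k, hk⟩ => h0last k hk)
    with ⟨-, h⟩ | ⟨-, h⟩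
  · refine absurd ⟨hall, fun j => ?_⟩ hnot
    by_contra hj
    exact h j ⟨0, hasRoom_of_not_occurs hj⟩
  · obtain ⟨k, hk⟩ := h i hi0
    exact M.flip_of_mem_lastReach hi hi0 h0 hm0 hm hx hsingle h0last hk

theorem flip_of_forall_residualClosed (hx : RowRegular row m x) (hi0 : x i ≠ 0)
    (hsingle : IsSingle row x i) (hrows : ∀ j, row j ∈ rows)
    (hzero : ∀ P Q, ResidualClosed row m x P Q → m ∉ P → 0 ∈ Q → |x i| ∈ Q)
    (hlast : row i ≠ m → ∀ P Q, ResidualClosed row m x P Q → m ∈ P → 0 ∉ Q →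
      ((∀ s ∈ rows, s ∈ P → s = m) ∧ ∀ j, |x j| ∉ Q) ∨ (rows ⊆ P ∧ ∀ j, x j ≠ 0 → |x j| ∈ Q))
    (hnot : row i ≠ m → ¬((∀ s ∈ rows, Occurs row x s 0) ∧ ∀ j, Occurs row x m |x j|)) :
    C x (flipSign i x) := by
  have hreach : (∃ k, m ∈ zeroReach row m x k) ∨ ∃ k, row i ∈ zeroReach row m x k := by
    refine or_iff_not_imp_left.mpr fun h => ?_
    have hcl := residualClosed_zeroReach row m x
    exact hcl.mem_of_occurs (hzero _ _ hcl h (Or.inl rfl)) ⟨i, rfl, rfl⟩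
  by_cases him : row i = m
  · rw [him, or_self] at hreach
    obtain ⟨k, hk⟩ := hreach
    exact M.flip_last_of_mem_zeroReach him hi0 hx hk
  by_cases h0 : Occurs row x (row i) 0
  · by_cases hm : Occurs row x m 0 ∧ Occurs row x m |x i|
    · exact M.flip_of_occurs_zero_of_occurs_last hx hi0 hsingle hrows him h0 hm.1 hm.2 (hlast him)
        (hnot him)
    · obtain ⟨p, hp, hp0⟩ := h0
      exact M.flip_of_zero hp.symm him hi0 (abs_eq_zero.mp hp0) hm hx hsingle
  by_cases hi : ∃ k, row i ∈ zeroReach row m x k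
  · obtain ⟨k, hk⟩ := hi
    exact M.flip_of_mem_zeroReach him h0 hx hsingle hk
  obtain ⟨k, hk⟩ := hreach.resolve_right hi
  have hocc : Occurs row x m |x i| := by
    by_contra hocc
    exact hi ⟨k + 1, Or.inr ⟨m, hk, _, hasRoom_of_not_occurs hocc, i, rfl, rfl⟩⟩
  obtain ⟨q, hq, hqi⟩ := hocc
  exact M.flip_of_flip_abs_eq him hq hqi.symm h0 hx hsingle
    (M.flip_last_of_mem_zeroReach hq (by rwa [← abs_ne_zero, hqi, abs_ne_zero]) hx hk)

end MoveSystem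

end Closedness

section Roots

variable {n : ℕ} {i j : Fin n}

theorem inn_eq_dotProduct (x y : V n) : inn x y = x ⬝ᵥ y := rfl

theorem inn_ee (x : V n) (i : Fin n) : inn x (ee i) = x i :=
  dotProduct_single_one x i

theorem sRefl_ee (i : Fin n) (x : V n) : sRefl (ee i) x = flipSign i x := by
  rw [sRefl, inn_ee, inn_ee]
  funext k
  rcases eq_or_ne k i with rfl | hk
  · simp [ee]
    ring
  · simp [ee, hk, flipSign_apply_of_ne hk]

/-- The root `e_i - e • e_j` of type `D_n`, for a sign `e`. -/
def signedRoot (e : ℤˣ) (i j : Fin n) : V n := ee i - e • ee j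

theorem signedRoot_one (i j : Fin n) : signedRoot 1 i j = ee i - ee j := by
  rw [signedRoot, one_smul]

theorem signedRoot_neg_one (i j : Fin n) : signedRoot (-1) i j = ee i + ee j := by
  rw [signedRoot, Units.neg_smul, one_smul, sub_neg_eq_add]

theorem inn_signedRoot (x : V n) (e : ℤˣ) (i j : Fin n) :
    inn x (signedRoot e i j) = x i - e • x j := by
  rw [signedRoot, inn_eq_dotProduct, dotProduct_sub, dotProduct_smul, ← inn_eq_dotProduct,
    ← inn_eq_dotProduct, inn_ee, inn_ee]

theorem inn_units_smul (x y : V n) (e : ℤˣ) : inn x (e • y) = e • inn x y :=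
  dotProduct_smul e x y

theorem signedRoot_apply_left (hij : i ≠ j) (e : ℤˣ) : signedRoot e i j i = 1 := by
  simp [signedRoot, ee, hij]

theorem signedRoot_apply_right (hij : i ≠ j) (e : ℤˣ) : signedRoot e i j j = -(e • 1) := by
  simp [signedRoot, ee, hij.symm]

theorem signedRoot_apply_of_ne {k : Fin n} (hi : k ≠ i) (hj : k ≠ j) (e : ℤˣ) :
    signedRoot e i j k = 0 := by
  simp [signedRoot, ee, hi, hj]

theorem signedRoot_apply_eq_zero_iff (hij : i ≠ j) {e : ℤˣ} {k : Fin n} :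
    signedRoot e i j k = 0 ↔ k ≠ i ∧ k ≠ j := by
  refine ⟨fun h => ⟨?_, ?_⟩, fun h => signedRoot_apply_of_ne h.1 h.2 e⟩
  · rintro rfl
    simp [signedRoot_apply_left hij] at h
  · rintro rfl
    simp [signedRoot_apply_right hij, smul_eq_zero_iff_eq] at h

theorem units_smul_smul_self (e : ℤˣ) {M : Type*} [MulAction ℤˣ M] (x : M) : e • e • x = x := by
  rw [smul_smul, Int.units_mul_self, one_smul]

theorem signedRoot_symm (e : ℤˣ) (i j : Fin n) : signedRoot e i j = -e • signedRoot e j i := by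
  rw [signedRoot, signedRoot, Units.neg_smul, smul_sub, units_smul_smul_self, neg_sub]

theorem sRefl_signedRoot (hij : i ≠ j) (e : ℤˣ) (x : V n) :
    sRefl (signedRoot e i j) x = signedSwap e i j x := by
  have hself : inn (signedRoot e i j) (signedRoot e i j) = 2 := by
    rw [inn_signedRoot, signedRoot_apply_left hij, signedRoot_apply_right hij, smul_neg,
      units_smul_smul_self, sub_neg_eq_add, one_add_one_eq_two]
  funext k
  rw [sRefl, hself, inn_signedRoot, mul_div_cancel_left₀ _ two_ne_zero, Pi.sub_apply,
    Pi.smul_apply, smul_eq_mul]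
  rcases eq_or_ne k i with rfl | hki
  · rw [signedRoot_apply_left hij, signedSwap_apply_left hij, mul_one, sub_sub_cancel]
  rcases eq_or_ne k j with rfl | hkj
  · rw [signedRoot_apply_right hij, signedSwap_apply_right, mul_neg, mul_smul_comm, mul_one,
      smul_sub, units_smul_smul_self]
    ring
  · rw [signedRoot_apply_of_ne hki hkj, signedSwap_apply_of_ne hki hkj, mul_zero, sub_zero]

theorem signedSwap_symm (e : ℤˣ) (i j : Fin n) (x : V n) :
    signedSwap e i j x = signedSwap e j i x := by
  rcases eq_or_ne i j with rfl | hij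
  · rfl
  · exact Function.update_comm hij ..

theorem signedSwap_signedSwap (hij : i ≠ j) (e : ℤˣ) (x : V n) :
    signedSwap e i j (signedSwap e i j x) = x := by
  funext k
  rcases eq_or_ne k i with rfl | hki
  · rw [signedSwap_apply_left hij, signedSwap_apply_right, units_smul_smul_self]
  rcases eq_or_ne k j with rfl | hkj
  · rw [signedSwap_apply_right, signedSwap_apply_left hij, units_smul_smul_self]
  · rw [signedSwap_apply_of_ne hki hkj, signedSwap_apply_of_ne hki hkj]

theorem signedSwap_conj {k : Fin n} (hij : i ≠ j) (hik : i ≠ k) (hjk : j ≠ k) (e : ℤˣ) (x : V n) :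
    signedSwap 1 j k (signedSwap e i j (signedSwap 1 j k x)) = signedSwap e i k x := by
  funext l
  simp only [signedSwap, one_smul, Function.update_apply]
  grind

theorem signedSwap_one_signedSwap_neg_one (hij : i ≠ j) (x : V n) :
    signedSwap 1 i j (signedSwap (-1) i j x) = flipSign i (flipSign j x) := by
  funext l
  simp only [signedSwap, flipSign, Units.neg_smul, one_smul, Function.update_apply]
  grind

theorem abs_signedSwap_apply (e : ℤˣ) (i j : Fin n) (x : V n) (k : Fin n) :
    |signedSwap e i j x k| = |x (Equiv.swap i j k)| := by
  rcases eq_or_ne k j with rfl | hkj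
  · rw [signedSwap_apply_right, abs_units_smul, Equiv.swap_apply_right]
  rcases eq_or_ne k i with rfl | hki
  · rw [signedSwap_apply_left hkj, abs_units_smul, Equiv.swap_apply_left]
  · rw [signedSwap_apply_of_ne hki hkj, Equiv.swap_apply_of_ne_of_ne hki hkj]

theorem exists_signedSwap_eq_flipSign_flipSign {x : V n} (hij : i ≠ j) (h : |x i| = |x j|) :
    ∃ e : ℤˣ, signedSwap e i j x = flipSign i (flipSign j x) := by
  obtain ⟨e, he⟩ := exists_units_smul_eq h
  refine ⟨-e, ?_⟩
  have he' : e • x i = x j := by rw [← he, units_smul_smul_self]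
  funext k
  simp only [signedSwap, flipSign, Units.neg_smul, he, he', Function.update_apply]
  grind

theorem mem_DRoots_iff {v : V n} :
    v ∈ DRoots n ↔ ∃ i j : Fin n, i < j ∧ ∃ e f : ℤˣ, v = f • signedRoot e i j := by
  constructor
  · rintro ⟨i, j, hij, hv⟩
    obtain ⟨e, f, rfl⟩ : ∃ e f : ℤˣ, v = f • signedRoot e i j := by
      rcases hv with rfl | rfl | rfl
      · exact ⟨-1, 1, by rw [signedRoot_neg_one, one_smul]⟩
      · exact ⟨1, 1, by rw [signedRoot_one, one_smul]⟩
      · exact ⟨-1, -1, by rw [signedRoot_neg_one, Units.neg_smul, one_smul, neg_add']⟩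
    rcases hij.lt_or_gt with h | h
    · exact ⟨i, j, h, e, f, rfl⟩
    · exact ⟨j, i, h, e, f * -e, by rw [signedRoot_symm, smul_smul]⟩
  · rintro ⟨i, j, hij, e, f, rfl⟩
    rcases Int.units_eq_one_or e with rfl | rfl <;> rcases Int.units_eq_one_or f with rfl | rfl
    · exact ⟨i, j, hij.ne, Or.inr (Or.inl (by rw [signedRoot_one, one_smul]))⟩
    · exact ⟨j, i, hij.ne', Or.inr (Or.inl (by
        rw [signedRoot_one, Units.neg_smul, one_smul, neg_sub]))⟩
    · exact ⟨i, j, hij.ne, Or.inl (by rw [signedRoot_neg_one, one_smul])⟩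
    · exact ⟨i, j, hij.ne, Or.inr (Or.inr (by
        rw [signedRoot_neg_one, Units.neg_smul, one_smul, neg_add']))⟩

theorem signedRoot_mem_DRoots (hij : i ≠ j) (e : ℤˣ) : signedRoot e i j ∈ DRoots n := by
  rw [mem_DRoots_iff]
  rcases hij.lt_or_gt with h | h
  · exact ⟨i, j, h, e, 1, (one_smul _ _).symm⟩
  · exact ⟨j, i, h, e, -e, signedRoot_symm e i j⟩

theorem signedRoot_mem_PhiPos (hij : i < j) (e : ℤˣ) : signedRoot e i j ∈ PhiPos n CType.D :=
  ⟨signedRoot_mem_DRoots hij.ne e, i, by rw [signedRoot_apply_left hij.ne]; exact one_pos,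
    fun _ hk => signedRoot_apply_of_ne hk.ne (hk.trans hij).ne e⟩

end Roots

section LastIndices

variable {n : ℕ} (hn : 2 ≤ n)

/-- The last index `n - 1` (indices being `0`-based). -/
def lastIdx : Fin n := ⟨n - 1, by omega⟩

/-- The last but one index `n - 2` (indices being `0`-based). -/
def penultIdx : Fin n := ⟨n - 2, by omega⟩

theorem penultIdx_lt_lastIdx : penultIdx hn < lastIdx hn := by
  simp only [penultIdx, lastIdx, Fin.mk_lt_mk]
  omega

theorem le_lastIdx (i : Fin n) : i ≤ lastIdx hn :=
  Nat.le_sub_one_of_lt i.2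

theorem le_penultIdx_of_lt {i j : Fin n} (hij : i < j) : i ≤ penultIdx hn := by
  simp only [penultIdx, Fin.le_def, Fin.lt_def] at hij ⊢
  omega

theorem penultIdx_succ (h : (penultIdx hn).1 + 1 < n) : ⟨(penultIdx hn).1 + 1, h⟩ = lastIdx hn := by
  simp only [penultIdx, lastIdx, Fin.mk.injEq]
  omega

theorem alphaR_of_lt {i : Fin n} (h : i.1 + 1 < n) :
    alphaR n CType.D i = signedRoot 1 i ⟨i.1 + 1, h⟩ := by
  rw [signedRoot_one, alphaR, dif_pos h]

theorem alphaR_penultIdx :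
    alphaR n CType.D (penultIdx hn) = signedRoot 1 (penultIdx hn) (lastIdx hn) := by
  have h : (penultIdx hn).1 + 1 < n := by
    simp only [penultIdx]
    omega
  rw [alphaR_of_lt h, penultIdx_succ]

theorem alphaR_lastIdx :
    alphaR n CType.D (lastIdx hn) = signedRoot (-1) (penultIdx hn) (lastIdx hn) := by
  have h : ¬(lastIdx hn).1 + 1 < n := by
    simp only [lastIdx]
    omega
  rw [signedRoot_neg_one, alphaR, dif_neg h]
  rfl

theorem eq_lastIdx_of_not_lt {i : Fin n} (h : ¬i.1 + 1 < n) : i = lastIdx hn :=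
  Fin.ext (by simp only [lastIdx]; omega)

end LastIndices

section Segments

theorem card_filter_lt_orderEmbOfFin {α : Type*} [LinearOrder α] (s : Finset α)
    (r : Fin s.card) : (s.filter (· < s.orderEmbOfFin rfl r)).card = r := by
  rw [← Fin.card_Iio r, ← Finset.card_map (s.orderEmbOfFin rfl).toEmbedding]
  congr 1
  ext b
  simp only [Finset.mem_filter, Finset.mem_map, Finset.mem_Iio, RelEmbedding.coe_toEmbedding]
  constructor
  · rintro ⟨hb, hbr⟩
    obtain ⟨c, rfl⟩ : b ∈ Set.range (s.orderEmbOfFin rfl) := by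
      rwa [Finset.range_orderEmbOfFin, Finset.mem_coe]
    exact ⟨c, (s.orderEmbOfFin rfl).lt_iff_lt.mp hbr, rfl⟩
  · rintro ⟨c, hc, rfl⟩
    exact ⟨Finset.orderEmbOfFin_mem .., (s.orderEmbOfFin rfl).lt_iff_lt.mpr hc⟩

theorem card_filter_lt_le_iff {α : Type*} [LinearOrder α] (s : Finset α) (r : Fin s.card) (a : α) :
    (s.filter (· < a)).card ≤ r ↔ a ≤ s.orderEmbOfFin rfl r := by
  rw [← card_filter_lt_orderEmbOfFin s r]
  constructor
  · contrapose!
    intro ha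
    refine Finset.card_lt_card ⟨fun b hb => ?_, fun hsub => ?_⟩
    · rw [Finset.mem_filter] at hb ⊢
      exact ⟨hb.1, hb.2.trans ha⟩
    · have hmem := hsub (Finset.mem_filter.mpr ⟨s.orderEmbOfFin_mem rfl r, ha⟩)
      exact lt_irrefl _ (Finset.mem_filter.mp hmem).2
  · intro ha
    exact Finset.card_le_card (Finset.monotone_filter_right s fun b _ hb => lt_of_lt_of_le hb ha)

variable {n : ℕ}

/-- The number of the segment of `I` which contains the index `i`, for standard `I`. -/
def segment (I : Finset (Fin n)) (i : Fin n) : ℕ := ((Finset.univ \ I).filter (· < i)).card + 1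

variable (I : Finset (Fin n))

theorem mval_eq : mval n I = (Finset.univ \ I).card + 1 := by
  simp [mval, Qlist]

theorem segment_mem_Icc (i : Fin n) : segment I i ∈ Set.Icc 1 (mval n I) :=
  ⟨Nat.le_add_left .., by
    rw [mval_eq]; exact Nat.succ_le_succ (Finset.card_filter_le ..)⟩

theorem monotone_segment : Monotone (segment I) := fun _ _ hij =>
  Nat.succ_le_succ (Finset.card_le_card
    (Finset.monotone_filter_right _ fun _ _ h => lt_of_lt_of_le h hij))

theorem mval_mem_Icc : mval n I ∈ Set.Icc 1 (mval n I) :=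
  ⟨by rw [mval_eq]; omega, le_rfl⟩

theorem exists_qval_eq {s : ℕ} (h1 : 1 ≤ s) (hs : s < mval n I) :
    ∃ k : Fin n, qval n I s = k.1 + 1 ∧ segment I k = s ∧
      ∀ i : Fin n, i ≤ k ↔ segment I i ≤ s := by
  have hcard : s - 1 < (Finset.univ \ I).card := by rw [mval_eq] at hs; omega
  refine ⟨(Finset.univ \ I).orderEmbOfFin rfl ⟨s - 1, hcard⟩, ?_, ?_, fun i => ?_⟩
  · rw [qval, if_neg (by omega), if_pos hs, Qlist, List.getD_eq_getElem _ _ (by simpa using hcard)]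
    simp [Finset.orderEmbOfFin_apply]
  · rw [segment, card_filter_lt_orderEmbOfFin, Nat.sub_add_cancel h1]
  · rw [← card_filter_lt_le_iff, segment]
    simp only
    omega

theorem lt_qval_iff {s : ℕ} (h1 : 1 ≤ s) (hs : s < mval n I) (i : Fin n) :
    i.1 < qval n I s ↔ segment I i ≤ s := by
  obtain ⟨k, hk, -, hle⟩ := exists_qval_eq I h1 hs
  rw [hk, Nat.lt_succ_iff, ← hle, Fin.le_def]

theorem segment_succ {i : Fin n} (h : i.1 + 1 < n) :
    segment I ⟨i.1 + 1, h⟩ = segment I i + if i ∈ I then 0 else 1 := by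
  have hlt : ∀ j : Fin n, j < ⟨i.1 + 1, h⟩ ↔ j = i ∨ j < i := by
    intro j
    rw [← le_iff_eq_or_lt, Fin.lt_def, Fin.le_def, Nat.lt_succ_iff]
  simp only [segment, hlt, Finset.filter_or, Finset.filter_eq', Finset.mem_sdiff,
    Finset.mem_univ, true_and]
  split_ifs with hi
  · simp
  · rw [Finset.card_union_of_disjoint (by simp), Finset.card_singleton]
    omega

theorem segment_last {i : Fin n} (h : i.1 + 1 = n) :
    segment I i + (if i ∈ I then 0 else 1) = mval n I := by
  have hfilter : (Finset.univ \ I).filter (· < i) = (Finset.univ \ I).erase i := by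
    ext j
    rw [Finset.mem_filter, Finset.mem_erase, and_comm, Fin.lt_def, Ne, Fin.ext_iff]
    have := j.2
    exact and_congr_left fun _ => by omega
  rw [segment, hfilter, mval_eq]
  split_ifs with hi
  · rw [Finset.erase_eq_of_notMem (by simpa using hi)]
  · rw [Finset.card_erase_add_one (by simpa using hi)]

variable {I}

theorem segment_succ_eq_iff {i : Fin n} (h : i.1 + 1 < n) :
    segment I i = segment I ⟨i.1 + 1, h⟩ ↔ i ∈ I := by
  rw [segment_succ]
  split_ifs with hi <;> simp [hi]

theorem segment_last_eq_iff {i : Fin n} (h : i.1 + 1 = n) : segment I i = mval n I ↔ i ∈ I := by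
  rw [← segment_last I h]
  split_ifs with hi <;> simp [hi]

theorem rel_of_segment_eq {r : Fin n → Fin n → Prop}
    (step : ∀ i ∈ I, ∀ h : i.1 + 1 < n, r i ⟨i.1 + 1, h⟩)
    (trans : ∀ {i j k}, i < j → j < k → r i j → r j k → r i k) {i j : Fin n} (hij : i < j)
    (h : segment I i = segment I j) : r i j := by
  obtain ⟨d, hd⟩ := Nat.exists_eq_add_of_lt hij
  induction d generalizing i with
  | zero =>
    have hlt : i.1 + 1 < n := by have := j.2; omega
    obtain rfl : ⟨i.1 + 1, hlt⟩ = j := Fin.ext hd.symm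
    exact step i ((segment_succ_eq_iff hlt).mp h) hlt
  | succ d ih =>
    have hlt : i.1 + 1 < n := by have := j.2; omega
    have hik : i < ⟨i.1 + 1, hlt⟩ := Nat.lt_succ_self i.1
    have hkj : ⟨i.1 + 1, hlt⟩ < j := Fin.lt_def.mpr (by simp only; omega)
    have hk : segment I i = segment I ⟨i.1 + 1, hlt⟩ :=
      le_antisymm (monotone_segment I hik.le) (h ▸ monotone_segment I hkj.le)
    exact trans hik hkj (step i ((segment_succ_eq_iff hlt).mp hk) hlt)
      (ih hkj (hk.symm.trans h) (by simp only; omega))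

theorem qv_mval : qv n CType.D I (mval n I) = n := by
  have hm := mval_eq I
  rw [qv, qval, if_neg (by omega), if_neg (by omega), if_neg (lt_irrefl _)]

theorem inSeg_iff_of_lt_qv_iff {I₀ : Finset (Fin n)} (hm : mval n I₀ = mval n I)
    (h0 : qv n CType.D I 0 = 0)
    (hlt : ∀ s, 1 ≤ s → s < mval n I → ∀ i : Fin n, i.1 < qv n CType.D I s ↔ segment I₀ i ≤ s)
    {s : ℕ} (hs : s ∈ Set.Icc 1 (mval n I)) (i : Fin n) :
    InSeg n CType.D I s i ↔ segment I₀ i = s := by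
  have hi := segment_mem_Icc I₀ i
  rw [hm, Set.mem_Icc] at hi
  have hupper : i.1 + 1 ≤ qv n CType.D I s ↔ segment I₀ i ≤ s := by
    rcases hs.2.lt_or_eq with h | rfl
    · rw [← hlt s hs.1 h i, Nat.succ_le_iff]
    · exact iff_of_true (by rw [qv_mval]; exact i.2) hi.2
  have hlower : qv n CType.D I (s - 1) < i.1 + 1 ↔ ¬segment I₀ i ≤ s - 1 := by
    rcases hs.1.eq_or_lt with rfl | h
    · exact iff_of_true (by simp [h0]) (by omega)
    · rw [← hlt (s - 1) (by omega) (by have := hs.2; omega) i, not_lt, Nat.lt_succ_iff]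
  rw [InSeg, hupper, hlower]
  omega

theorem StandardI.qv_eq (hI : StandardI n CType.D I) (s : ℕ) : qv n CType.D I s = qval n I s := by
  rw [qv, if_neg fun h => h.1 hI]

theorem StandardI.inSeg_iff (hI : StandardI n CType.D I) {s : ℕ}
    (hs : s ∈ Set.Icc 1 (mval n I)) (i : Fin n) : InSeg n CType.D I s i ↔ segment I i = s := by
  refine inSeg_iff_of_lt_qv_iff rfl ?_ (fun s h1 hs i => ?_) hs i
  · rw [hI.qv_eq, qval, if_pos rfl]
  · rw [hI.qv_eq, lt_qval_iff I h1 hs]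

variable (hn : 2 ≤ n)

theorem StandardI.last_mem (hI : StandardI n CType.D I) {i : Fin n} (hi : segment I i = mval n I) :
    lastIdx hn ∈ I ∧ penultIdx hn ∈ I := by
  have hlast : segment I (lastIdx hn) = mval n I :=
    le_antisymm (segment_mem_Icc I _).2 (hi ▸ monotone_segment I (le_lastIdx hn i))
  have hmem : lastIdx hn ∈ I :=
    (segment_last_eq_iff (by simp only [lastIdx]; omega)).mp hlast
  exact ⟨hmem, (hI rfl hn).resolve_right (not_not.mpr hmem)⟩

theorem StandardI.segment_last_eq (hI : StandardI n CType.D I) {i : Fin n}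
    (hi : segment I i = mval n I) :
    segment I (lastIdx hn) = mval n I ∧ segment I (penultIdx hn) = mval n I := by
  have hlast : segment I (lastIdx hn) = mval n I :=
    le_antisymm (segment_mem_Icc I _).2 (hi ▸ monotone_segment I (le_lastIdx hn i))
  have h : (penultIdx hn).1 + 1 < n := by simp only [penultIdx]; omega
  have hpen := (segment_succ_eq_iff h).mpr (hI.last_mem hn hi).2
  rw [penultIdx_succ] at hpen
  exact ⟨hlast, hpen.trans hlast⟩

end Segments

section RegularWeights

variable {n : ℕ} {I : Finset (Fin n)} {i j : Fin n}

/-- The span of the simple roots in `I`, which cuts out `Φ_I` in `Φ`. -/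
def rootSpan (I : Finset (Fin n)) : Submodule ℝ (V n) :=
  Submodule.span ℝ (alphaR n CType.D '' (I : Set (Fin n)))

theorem alphaR_mem_rootSpan (hi : i ∈ I) : alphaR n CType.D i ∈ rootSpan I :=
  Submodule.subset_span ⟨i, hi, rfl⟩

theorem units_smul_mem_iff {M : Type*} [AddCommGroup M] [Module ℝ M] {S : Submodule ℝ M} {v : M}
    (e : ℤˣ) : e • v ∈ S ↔ v ∈ S := by
  rcases Int.units_eq_one_or e with rfl | rfl <;> simp [Units.neg_smul]

theorem signedRoot_one_mem_rootSpan (h : segment I i = segment I j) :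
    signedRoot 1 i j ∈ rootSpan I := by
  wlog hij : i < j generalizing i j
  · rcases (not_lt.mp hij).eq_or_lt with rfl | hji
    · simp [signedRoot]
    · rw [signedRoot_symm, units_smul_mem_iff]
      exact this h.symm hji
  refine rel_of_segment_eq (r := fun i j => signedRoot 1 i j ∈ rootSpan I) (fun k hk hlt => ?_)
    (fun {a b c} _ _ hab hbc => ?_) hij h
  · rw [← alphaR_of_lt hlt]
    exact alphaR_mem_rootSpan hk
  · simp only [signedRoot_one] at hab hbc ⊢
    rw [← sub_add_sub_cancel]
    exact add_mem hab hbc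

/-- The sum of the entries of a segment, as a linear functional; it vanishes on `Φ_I` unless the
segment is the last one. -/
def segmentSum (I : Finset (Fin n)) (s : ℕ) : V n →ₗ[ℝ] ℝ :=
  ∑ k with segment I k = s, LinearMap.proj k

theorem segmentSum_ee (s : ℕ) (i : Fin n) :
    segmentSum I s (ee i) = if segment I i = s then 1 else 0 := by
  simp [segmentSum, ee, Pi.single_apply]

theorem segmentSum_signedRoot (s : ℕ) (e : ℤˣ) (i j : Fin n) :
    segmentSum I s (signedRoot e i j) =
      (if segment I i = s then 1 else 0) - e • (if segment I j = s then 1 else 0) := by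
  rw [signedRoot, map_sub, Units.smul_def, map_zsmul, ← Units.smul_def, segmentSum_ee,
    segmentSum_ee]

namespace StandardI

variable (hI : StandardI n CType.D I) (hn : 2 ≤ n)
include hI hn

theorem ee_mem_rootSpan (hi : segment I i = mval n I) : ee i ∈ rootSpan I := by
  obtain ⟨hlast, hpen⟩ := hI.segment_last_eq hn hi
  have hsub₁ : ee i - ee (lastIdx hn) ∈ rootSpan I := by
    rw [← signedRoot_one]
    exact signedRoot_one_mem_rootSpan (hi.trans hlast.symm)
  have hsub₂ : ee i - ee (penultIdx hn) ∈ rootSpan I := by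
    rw [← signedRoot_one]
    exact signedRoot_one_mem_rootSpan (hi.trans hpen.symm)
  have hadd : ee (penultIdx hn) + ee (lastIdx hn) ∈ rootSpan I := by
    rw [← signedRoot_neg_one, ← alphaR_lastIdx hn]
    exact alphaR_mem_rootSpan (hI.last_mem hn hi).1
  convert Submodule.smul_mem _ (1 / 2 : ℝ) (add_mem (add_mem hsub₁ hsub₂) hadd) using 1
  module

theorem segmentSum_eq_zero {s : ℕ} (hs : s ≠ mval n I) {v : V n} (hv : v ∈ rootSpan I) :
    segmentSum I s v = 0 := by
  suffices h : rootSpan I ≤ LinearMap.ker (segmentSum I s) from h hv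
  rw [rootSpan, Submodule.span_le]
  rintro _ ⟨i, hi, rfl⟩
  rw [SetLike.mem_coe, LinearMap.mem_ker]
  by_cases h : i.1 + 1 < n
  · rw [alphaR_of_lt h, segmentSum_signedRoot, ← (segment_succ_eq_iff h).mpr hi, one_smul, sub_self]
  · obtain rfl := eq_lastIdx_of_not_lt hn h
    have hlast := (segment_last_eq_iff (by have := (lastIdx hn).2; omega)).mpr hi
    rw [alphaR_lastIdx, segmentSum_signedRoot, hlast, (hI.segment_last_eq hn hlast).2,
      if_neg hs.symm, smul_zero, sub_zero]

theorem signedRoot_mem_rootSpan_iff {e : ℤˣ} :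
    signedRoot e i j ∈ rootSpan I ↔
      segment I i = segment I j ∧ (e = 1 ∨ segment I i = mval n I) := by
  constructor
  · intro h
    have hsum : ∀ s, s ≠ mval n I →
        (if segment I i = s then 1 else 0) - e • (if segment I j = s then 1 else 0) = (0 : ℝ) :=
      fun s hs => by rw [← segmentSum_signedRoot, hI.segmentSum_eq_zero hn hs h]
    have hseg : segment I i = segment I j := by
      by_contra hij
      by_cases hm : segment I i = mval n I
      · have := hsum _ (hm ▸ Ne.symm hij)
        rw [if_neg hij, if_pos rfl, zero_sub, neg_eq_zero, smul_eq_zero_iff_eq] at this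
        exact one_ne_zero this
      · simpa [Ne.symm hij] using hsum _ hm
    refine ⟨hseg, or_iff_not_imp_right.mpr fun hm => ?_⟩
    rcases Int.units_eq_one_or e with rfl | rfl
    · rfl
    · have := hsum _ hm
      norm_num [hseg] at this
  · rintro ⟨hseg, rfl | hm⟩
    · exact signedRoot_one_mem_rootSpan hseg
    · exact sub_mem (hI.ee_mem_rootSpan hn hm)
        ((units_smul_mem_iff e).mpr (hI.ee_mem_rootSpan hn (hseg ▸ hm)))

theorem regI_iff (x : V n) : RegI n CType.D I x ↔ RowRegular (segment I) (mval n I) x := by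
  constructor
  · intro h i j hij hseg
    have hne : ∀ e : ℤˣ, e = 1 ∨ segment I i = mval n I → x i ≠ e • x j := fun e he => by
      have := h _ ⟨signedRoot_mem_DRoots hij e,
        (hI.signedRoot_mem_rootSpan_iff hn).mpr ⟨hseg, he⟩⟩
      rwa [inn_signedRoot, sub_ne_zero] at this
    exact ⟨by simpa using hne 1 (Or.inl rfl), fun hm => by simpa using hne (-1) (Or.inr hm)⟩
  · rintro h β ⟨hβ, hspan⟩
    obtain ⟨i, j, hij, e, f, rfl⟩ := mem_DRoots_iff.mp hβ
    obtain ⟨hseg, he⟩ := (hI.signedRoot_mem_rootSpan_iff hn).mp ((units_smul_mem_iff f).mp hspan)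
    rw [inn_units_smul, Ne, smul_eq_zero_iff_eq, inn_signedRoot, sub_eq_zero]
    rcases Int.units_eq_one_or e with rfl | rfl
    · simpa using (h i j hij.ne hseg).1
    · simpa using (h i j hij.ne hseg).2 (he.resolve_left (by decide))

end StandardI

variable {x : V n}

theorem lt_of_segment_eq (hx : ∀ i ∈ I, 0 < inn x (alphaR n CType.D i)) (hij : i < j)
    (h : segment I i = segment I j) : x j < x i := by
  refine rel_of_segment_eq (r := fun i j => x j < x i) (fun k hk hlt => ?_)
    (fun _ _ hab hbc => hbc.trans hab) hij h
  have := hx k hk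
  rwa [alphaR_of_lt hlt, inn_signedRoot, one_smul, sub_pos] at this

theorem le_of_segment_eq (hx : ∀ i ∈ I, 0 < inn x (alphaR n CType.D i)) (hij : i ≤ j)
    (h : segment I i = segment I j) : x j ≤ x i := by
  rcases hij.eq_or_lt with rfl | hlt
  · exact le_rfl
  · exact (lt_of_segment_eq hx hlt h).le

theorem StandardI.rowRegular_of_pos (hI : StandardI n CType.D I) (hn : 2 ≤ n)
    (hx : ∀ i ∈ I, 0 < inn x (alphaR n CType.D i)) : RowRegular (segment I) (mval n I) x := by
  have hlt : ∀ {i j : Fin n}, i < j → segment I i = segment I j →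
      x j < x i ∧ (segment I i = mval n I → 0 < x i + x j) := by
    intro i j hij hseg
    refine ⟨lt_of_segment_eq hx hij hseg, fun hm => ?_⟩
    obtain ⟨hlast, hpen⟩ := hI.segment_last_eq hn hm
    have hi := le_of_segment_eq hx (le_penultIdx_of_lt hn hij) (hm.trans hpen.symm)
    have hj := le_of_segment_eq hx (le_lastIdx hn j) (hseg ▸ hm.trans hlast.symm)
    have hpos := hx _ (hI.last_mem hn hm).1
    rw [alphaR_lastIdx hn, inn_signedRoot, Units.neg_smul, one_smul] at hpos
    linarith
  intro i j hij hseg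
  rcases hij.lt_or_gt with h | h
  · have := hlt h hseg
    exact ⟨this.1.ne', fun hm => by have := this.2 hm; linarith⟩
  · have := hlt h hseg.symm
    exact ⟨this.1.ne, fun hm => by have := this.2 (hseg ▸ hm); linarith⟩

end RegularWeights

section Orbits

variable {n : ℕ} {I : Finset (Fin n)} {i j k : Fin n} {x y : V n}

theorem sRefl_sRefl (v x : V n) : sRefl v (sRefl v x) = x := by
  by_cases h : inn v v = 0
  · simp [sRefl, h]
  · have hneg : inn (sRefl v x) v = -inn x v := by
      rw [sRefl, inn_eq_dotProduct, sub_dotProduct, smul_dotProduct, ← inn_eq_dotProduct,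
        ← inn_eq_dotProduct, smul_eq_mul, div_mul_cancel₀ _ h]
      ring
    rw [sRefl, hneg, sRefl]
    module

theorem wiOrb_sRefl_alphaR (hi : i ∈ I) (x : V n) :
    WIOrb n CType.D I x (sRefl (alphaR n CType.D i) x) :=
  Relation.ReflTransGen.single ⟨i, hi, rfl⟩

theorem wiOrb_symm (h : WIOrb n CType.D I x y) : WIOrb n CType.D I y x := by
  have : Std.Symm fun x y => ∃ i ∈ I, y = sRefl (alphaR n CType.D i) x :=
    ⟨by rintro x _ ⟨i, hi, rfl⟩; exact ⟨i, hi, (sRefl_sRefl _ x).symm⟩⟩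
  exact Relation.ReflTransGen.stdSymm.symm _ _ h

theorem wiOrb_swap (hij : i ≠ j) (h : segment I i = segment I j) (x : V n) :
    WIOrb n CType.D I x (signedSwap 1 i j x) := by
  wlog hlt : i < j generalizing i j
  · rw [signedSwap_symm]
    exact this hij.symm h.symm (hij.symm.lt_of_le (not_lt.mp hlt))
  refine rel_of_segment_eq (r := fun i j => ∀ x, WIOrb n CType.D I x (signedSwap 1 i j x))
    (fun a ha hlt x => ?_) (fun {a b c} hab hbc h₁ h₂ x => ?_) hlt h x
  · have ha' : a < ⟨a.1 + 1, hlt⟩ := Nat.lt_succ_self a.1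
    rw [← sRefl_signedRoot ha'.ne, ← alphaR_of_lt hlt]
    exact wiOrb_sRefl_alphaR ha x
  · rw [← signedSwap_conj hab.ne (hab.trans hbc).ne hbc.ne]
    exact ((h₂ x).trans (h₁ _)).trans (h₂ _)

theorem wiOrb_signedSwap_conj {e : ℤˣ} (hij : i ≠ j) (hik : i ≠ k) (hjk : j ≠ k)
    (hseg : segment I j = segment I k) (h : ∀ x, WIOrb n CType.D I x (signedSwap e i j x))
    (x : V n) : WIOrb n CType.D I x (signedSwap e i k x) := by
  rw [← signedSwap_conj hij hik hjk]
  exact ((wiOrb_swap hjk hseg x).trans (h _)).trans (wiOrb_swap hjk hseg _)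

variable (hI : StandardI n CType.D I) (hn : 2 ≤ n)
include hI hn

theorem StandardI.wiOrb_signedSwap_neg_one (hij : i ≠ j) (hi : segment I i = mval n I)
    (hj : segment I j = mval n I) (x : V n) :
    WIOrb n CType.D I x (signedSwap (-1) i j x) := by
  obtain ⟨hlast, hpen⟩ := hI.segment_last_eq hn hi
  have hpl := (penultIdx_lt_lastIdx hn).ne
  have hlast_penult : ∀ x, WIOrb n CType.D I x (signedSwap (-1) (lastIdx hn) (penultIdx hn) x) := by
    intro x
    rw [signedSwap_symm, ← sRefl_signedRoot hpl, ← alphaR_lastIdx]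
    exact wiOrb_sRefl_alphaR (hI.last_mem hn hi).1 x
  have hlast_left : ∀ k, k ≠ lastIdx hn → segment I k = mval n I →
      ∀ x, WIOrb n CType.D I x (signedSwap (-1) (lastIdx hn) k x) := by
    intro k hk hkm
    rcases eq_or_ne (penultIdx hn) k with rfl | hkp
    · exact hlast_penult
    · exact wiOrb_signedSwap_conj hpl.symm hk.symm hkp (hpen.trans hkm.symm) hlast_penult
  rcases eq_or_ne i (lastIdx hn) with rfl | hil
  · exact hlast_left j hij.symm hj x
  rcases eq_or_ne j (lastIdx hn) with rfl | hjl
  · rw [signedSwap_symm]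
    exact hlast_left i hij hi x
  · refine wiOrb_signedSwap_conj hil hij hjl.symm (hlast.trans hj.symm) (fun y => ?_) x
    rw [signedSwap_symm]
    exact hlast_left i hil hi y

theorem StandardI.wiOrb_flipSign_flipSign (hij : i ≠ j) (hi : segment I i = mval n I)
    (hj : segment I j = mval n I) (x : V n) :
    WIOrb n CType.D I x (flipSign i (flipSign j x)) := by
  rw [← signedSwap_one_signedSwap_neg_one hij]
  exact (hI.wiOrb_signedSwap_neg_one hn hij hi hj x).trans (wiOrb_swap hij (hi.trans hj.symm) _)

end Orbits

section LinkedRoots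

variable {n : ℕ} {I : Finset (Fin n)} {i j p q : Fin n} {x y z : V n} {e : ℤˣ}

theorem signedSwap_ne_self (h : |x i| ≠ |x j|) : signedSwap e i j x ≠ x := fun heq => h <| by
  conv_rhs => rw [← heq, signedSwap_apply_right, abs_units_smul]

theorem RowRegular.signedSwap_one {row : Fin n → ℕ} {m : ℕ} (hx : RowRegular row m x)
    (hrow : row i = row j) : RowRegular row m (signedSwap 1 i j x) := by
  have hswap : signedSwap 1 i j x = x ∘ Equiv.swap j i := by
    rw [Equiv.comp_swap_eq_update, signedSwap, one_smul, one_smul]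
  have hinv : ∀ k, row (Equiv.swap j i k) = row k := fun k => by
    rw [Equiv.swap_apply_def]
    grind
  rw [hswap]
  intro a b hab hrow'
  have := hx _ _ ((Equiv.swap j i).injective.ne hab) (by rw [hinv, hinv, hrow'])
  rwa [hinv] at this

/-- Symmetric form of the exceptional case (2) of the definition of linked roots, for a root with
support `{p, q}`. The condition that the multiplicities be equal to `1` is dropped. -/
def Exceptional (I : Finset (Fin n)) (x : V n) (p q : Fin n) : Prop :=
  (segment I p = segment I q ∧ Occurs (segment I) x (mval n I) 0 ∧
    ((x q = 0 ∧ Occurs (segment I) x (mval n I) |x p|) ∨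
      (x p = 0 ∧ Occurs (segment I) x (mval n I) |x q|))) ∨
  (segment I p ≠ segment I q ∧ (segment I p = mval n I ∨ segment I q = mval n I) ∧
    |x p| = |x q| ∧ Occurs (segment I) x (segment I p) 0 ∧ Occurs (segment I) x (segment I q) 0)

theorem Exceptional.symm (h : Exceptional I x p q) : Exceptional I x q p := by
  rcases h with ⟨hseg, h0, h⟩ | ⟨hseg, hm, habs, hp, hq⟩
  · exact Or.inl ⟨hseg.symm, h0, h.symm⟩
  · exact Or.inr ⟨hseg.symm, hm.symm, habs.symm, hq, hp⟩

theorem eq_or_swap_of_signedRoot_eq {e' : ℤˣ} (hpq : p ≠ q) (hij : i ≠ j)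
    (h : signedRoot e p q = signedRoot e' i j) : p = i ∧ q = j ∨ p = j ∧ q = i := by
  have hsupport : ∀ k, k ≠ p ∧ k ≠ q ↔ k ≠ i ∧ k ≠ j := fun k => by
    rw [← signedRoot_apply_eq_zero_iff hpq, h, signedRoot_apply_eq_zero_iff hij]
  have hp := hsupport p
  have hq := hsupport q
  grind

theorem Exceptional.of_excD (hI : StandardI n CType.D I) (hpq : p ≠ q)
    (h : ExcD n I x (signedRoot e p q)) : Exceptional I x p q := by
  obtain ⟨s, hs1, hsm, a, ha, -, -, -, -, i, j, k, l, hi, hj, hk, hl, hj0, hl0, hβ⟩ := h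
  have hm : mval n I ∈ Set.Icc 1 (mval n I) := ⟨by omega, le_rfl⟩
  rw [hI.inSeg_iff ⟨hs1, hsm.le⟩] at hi hj
  rw [hI.inSeg_iff hm] at hk hl
  obtain ⟨hia, hka⟩ : |x i| = a ∧ |x k| = a := by
    rcases hβ with ⟨⟨hi, hk⟩ | ⟨hi, hk⟩, -⟩ | ⟨⟨hi, hk⟩ | ⟨hi, hk⟩, -⟩ <;>
      simp [hi, hk, abs_of_pos ha]
  have hroot : signedRoot e p q = signedRoot (-1) i j ∨
      ∃ e' : ℤˣ, signedRoot e p q = signedRoot e' i k := by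
    rw [← signedRoot_neg_one, ← signedRoot_neg_one, ← signedRoot_one] at hβ
    rcases hβ with ⟨-, h | h⟩ | ⟨-, h | h⟩
    exacts [Or.inl h, Or.inr ⟨_, h⟩, Or.inl h, Or.inr ⟨_, h⟩]
  have hij : i ≠ j := by
    rintro rfl
    rw [hj0, abs_zero] at hia
    exact ha.ne hia
  have hsk : segment I i ≠ segment I k := by rw [hi, hk]; exact hsm.ne
  have hzero_last : Occurs (segment I) x (mval n I) 0 := ⟨l, hl, by rw [hl0, abs_zero]⟩
  have hexc_ij : Exceptional I x i j :=
    Or.inl ⟨hi.trans hj.symm, hzero_last, Or.inl ⟨hj0, k, hk, hka.trans hia.symm⟩⟩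
  have hexc_ik : Exceptional I x i k :=
    Or.inr ⟨hsk, Or.inr hk, hia.trans hka.symm, ⟨j, hj.trans hi.symm, by rw [hj0, abs_zero]⟩,
      hk ▸ hzero_last⟩
  rcases hroot with h | ⟨e', h⟩
  · rcases eq_or_swap_of_signedRoot_eq hpq hij h with ⟨rfl, rfl⟩ | ⟨rfl, rfl⟩
    exacts [hexc_ij, hexc_ij.symm]
  · rcases eq_or_swap_of_signedRoot_eq hpq (ne_of_row_ne hsk) h with ⟨rfl, rfl⟩ | ⟨rfl, rfl⟩
    exacts [hexc_ik, hexc_ik.symm]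

theorem Conn.trans {ct : CType} (hxy : Conn n ct I x y) (hyz : Conn n ct I y z) :
    Conn n ct I x z :=
  ⟨hxy.1, hyz.2.1, hxy.2.2.trans hyz.2.2⟩

namespace StandardI

variable (hI : StandardI n CType.D I) (hn : 2 ≤ n)
include hI hn

theorem conn_of_wiOrb (hx : RowRegular (segment I) (mval n I) x)
    (hy : RowRegular (segment I) (mval n I) y) (h : WIOrb n CType.D I x y) :
    Conn n CType.D I x y := by
  rw [← hI.regI_iff hn] at hx hy
  exact ⟨hx, hy, Relation.ReflTransGen.single ⟨hx, hy, Or.inl h⟩⟩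

theorem conn_signedSwap (hij : i ≠ j) (hspan : signedRoot e i j ∉ rootSpan I)
    (hx : RowRegular (segment I) (mval n I) x)
    (hy : RowRegular (segment I) (mval n I) (signedSwap e i j x)) (hne : signedSwap e i j x ≠ x)
    (hexc : ¬Exceptional I x i j) : Conn n CType.D I x (signedSwap e i j x) := by
  wlog hlt : i < j generalizing i j
  · rw [signedSwap_symm] at hy hne ⊢
    refine this hij.symm ?_ hy hne (fun h => hexc h.symm) (hij.symm.lt_of_le (not_lt.mp hlt))
    rwa [signedRoot_symm, units_smul_mem_iff] at hspan
  rw [← hI.regI_iff hn] at hx hy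
  rw [← sRefl_signedRoot hij] at hy hne ⊢
  refine ⟨hx, hy, Relation.ReflTransGen.single
    ⟨hx, hy, Or.inr ⟨signedRoot e i j, ?_, Relation.ReflTransGen.refl⟩⟩⟩
  rw [LinkedRoot, if_pos hI]
  exact ⟨hx, signedRoot_mem_PhiPos hlt e, fun h => hspan h.2, hy, hne,
    fun h => hexc (Exceptional.of_excD hI hij h)⟩

end StandardI

/-- The relation `⟷`, made symmetric by definition. -/
def MutuallyConn (I : Finset (Fin n)) (x y : V n) : Prop :=
  Conn n CType.D I x y ∧ Conn n CType.D I y x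

theorem MutuallyConn.trans (hxy : MutuallyConn I x y) (hyz : MutuallyConn I y z) :
    MutuallyConn I x z :=
  ⟨hxy.1.trans hyz.1, hyz.2.trans hxy.2⟩

theorem MutuallyConn.symm (h : MutuallyConn I x y) : MutuallyConn I y x := And.symm h

theorem Occurs.signedSwap {ρ : Type*} {row : Fin n → ρ} {s : ρ} {t : ℝ}
    (h : Occurs row x s t) (hpq : row p = row q ∨ |x p| = |x q|) :
    Occurs row (signedSwap e p q x) s t := by
  obtain ⟨k, rfl, rfl⟩ := h
  rcases hpq with hrow | habs
  · refine ⟨Equiv.swap p q k, ?_, by rw [abs_signedSwap_apply, Equiv.swap_apply_self]⟩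
    rw [Equiv.swap_apply_def]
    grind
  · refine ⟨k, rfl, ?_⟩
    rw [abs_signedSwap_apply, Equiv.swap_apply_def]
    grind

theorem Exceptional.signedSwap (h : Exceptional I x p q) (hpq : p ≠ q) :
    Exceptional I (signedSwap e p q x) p q := by
  have hp : |JantzenBlocks.signedSwap e p q x p| = |x q| := by
    rw [abs_signedSwap_apply, Equiv.swap_apply_left]
  have hq : |JantzenBlocks.signedSwap e p q x q| = |x p| := by
    rw [abs_signedSwap_apply, Equiv.swap_apply_right]
  rcases h with ⟨hseg, h0, h⟩ | ⟨hseg, hm, habs, h0p, h0q⟩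
  · refine Or.inl ⟨hseg, h0.signedSwap (Or.inl hseg), ?_⟩
    rw [hp, hq, signedSwap_apply_right, signedSwap_apply_left hpq, smul_eq_zero_iff_eq,
      smul_eq_zero_iff_eq, or_comm]
    exact h.imp (And.imp_right fun h => h.signedSwap (Or.inl hseg))
      (And.imp_right fun h => h.signedSwap (Or.inl hseg))
  · exact Or.inr ⟨hseg, hm, by rw [hp, hq, habs], h0p.signedSwap (Or.inr habs),
      h0q.signedSwap (Or.inr habs)⟩

namespace StandardI

variable (hI : StandardI n CType.D I) (hn : 2 ≤ n)
include hI hn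

theorem mutuallyConn_of_wiOrb (hx : RowRegular (segment I) (mval n I) x)
    (hy : RowRegular (segment I) (mval n I) y) (h : WIOrb n CType.D I x y) :
    MutuallyConn I x y :=
  ⟨hI.conn_of_wiOrb hn hx hy h, hI.conn_of_wiOrb hn hy hx (wiOrb_symm h)⟩

theorem mutuallyConn_swap (hij : i ≠ j) (hseg : segment I i = segment I j)
    (hx : RowRegular (segment I) (mval n I) x) : MutuallyConn I x (signedSwap 1 i j x) :=
  hI.mutuallyConn_of_wiOrb hn hx (hx.signedSwap_one hseg) (wiOrb_swap hij hseg x)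

theorem mutuallyConn_signedSwap (hij : i ≠ j) (hspan : signedRoot e i j ∉ rootSpan I)
    (hx : RowRegular (segment I) (mval n I) x)
    (hy : RowRegular (segment I) (mval n I) (signedSwap e i j x)) (hne : signedSwap e i j x ≠ x)
    (hexc : ¬Exceptional I x i j) : MutuallyConn I x (signedSwap e i j x) := by
  refine ⟨hI.conn_signedSwap hn hij hspan hx hy hne hexc, ?_⟩
  have hinv := signedSwap_signedSwap hij e x
  have h := hI.conn_signedSwap hn (x := signedSwap e i j x) hij hspan hy (hinv.symm ▸ hx)
    (hinv.symm ▸ hne.symm) fun h => hexc (hinv ▸ h.signedSwap (e := e) hij)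
  rwa [hinv] at h

theorem mutuallyConn_flip_flip_of_abs_eq (hseg : segment I i ≠ segment I j) (habs : |x i| = |x j|)
    (hi : ¬Occurs (segment I) x (segment I i) 0) (hx : RowRegular (segment I) (mval n I) x)
    (hy : RowRegular (segment I) (mval n I) (flipSign i (flipSign j x))) :
    MutuallyConn I x (flipSign i (flipSign j x)) := by
  have hij := ne_of_row_ne hseg
  obtain ⟨e, he⟩ := exists_signedSwap_eq_flipSign_flipSign hij habs
  have hne : signedSwap e i j x ≠ x := fun h => ne_zero_of_not_occurs hi <| by
    have := congrFun (he.symm.trans h) i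
    rwa [flipSign_apply_self, flipSign_apply_of_ne hij, neg_eq_self] at this
  rw [← he] at hy ⊢
  refine hI.mutuallyConn_signedSwap hn hij
    (fun h => hseg ((hI.signedRoot_mem_rootSpan_iff hn).mp h).1) hx hy hne ?_
  rintro (⟨h, -⟩ | ⟨-, -, -, h, -⟩)
  exacts [hseg h, hi h]

theorem mutuallyConn_flip_of_zero (hseg : segment I i = segment I p) (hm : segment I i ≠ mval n I)
    (hi : x i ≠ 0) (hp : x p = 0)
    (hlast : ¬(Occurs (segment I) x (mval n I) 0 ∧ Occurs (segment I) x (mval n I) |x i|))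
    (hx : RowRegular (segment I) (mval n I) x) (hsingle : IsSingle (segment I) x i) :
    MutuallyConn I x (flipSign i x) := by
  have hip : i ≠ p := fun h => hi (h ▸ hp)
  have hflip : signedSwap 1 i p (signedSwap (-1) i p x) = flipSign i x := by
    rw [signedSwap_one_signedSwap_neg_one hip, flipSign_eq_self hp]
  have hy : RowRegular (segment I) (mval n I) (signedSwap (-1) i p x) := by
    rw [← signedSwap_signedSwap hip 1 (signedSwap (-1) i p x), hflip]
    exact (hx.flipSign_of_isSingle hsingle).signedSwap_one hseg
  have hlink : MutuallyConn I x (signedSwap (-1) i p x) := by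
    refine hI.mutuallyConn_signedSwap hn hip (fun h => ?_) hx hy (signedSwap_ne_self ?_) ?_
    · exact ((hI.signedRoot_mem_rootSpan_iff hn).mp h).2.elim (by decide) hm
    · rwa [hp, abs_zero, abs_ne_zero]
    · rintro (⟨-, h0, ⟨-, h⟩ | ⟨h, -⟩⟩ | ⟨h, -⟩)
      exacts [hlast ⟨h0, h⟩, hi h, h hseg]
  exact hflip ▸ hlink.trans (hI.mutuallyConn_swap hn hip hseg hy)

theorem moveSystem : MoveSystem (segment I) (mval n I) (MutuallyConn I) where
  symm := MutuallyConn.symm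
  trans := MutuallyConn.trans
  signedSwap_of_row_ne := by
    intro x i j e hseg habs hx hy
    refine hI.mutuallyConn_signedSwap hn (ne_of_row_ne hseg)
      (fun h => hseg ((hI.signedRoot_mem_rootSpan_iff hn).mp h).1) hx hy
      (signedSwap_ne_self habs) ?_
    rintro (⟨h, -⟩ | ⟨-, -, h, -⟩)
    exacts [hseg h, habs h]
  swap_of_row_eq hseg hij hx := hI.mutuallyConn_swap hn hij hseg hx
  flip_flip_of_last hi hj hij hx := by
    have hy := hx.flipSign_of_isSingle (hx.isSingle_of_row_eq hj)
    exact hI.mutuallyConn_of_wiOrb hn hx (hy.flipSign_of_isSingle (hy.isSingle_of_row_eq hi))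
      (hI.wiOrb_flipSign_flipSign hn hij hi hj _)
  flip_flip_of_abs_eq hi hj habs h0 hx hy :=
    hI.mutuallyConn_flip_flip_of_abs_eq hn (hj ▸ hi) habs h0 hx hy
  flip_of_zero := hI.mutuallyConn_flip_of_zero hn

end StandardI

end LinkedRoots

section Flips

variable {n : ℕ} {i j : Fin n}

theorem isLinearMap_flipSign (i : Fin n) : IsLinearMap ℝ (flipSign (ι := Fin n) i) where
  map_add x y := by
    funext k
    rcases eq_or_ne k i with rfl | hk
    · simp only [Pi.add_apply, flipSign_apply_self, neg_add]
    · simp only [Pi.add_apply, flipSign_apply_of_ne hk]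
  map_smul c x := by
    funext k
    rcases eq_or_ne k i with rfl | hk
    · simp only [Pi.smul_apply, flipSign_apply_self, smul_neg]
    · simp only [Pi.smul_apply, flipSign_apply_of_ne hk]

theorem inn_flipSign_flipSign (i : Fin n) (x y : V n) :
    inn (flipSign i x) (flipSign i y) = inn x y := by
  refine Finset.sum_congr rfl fun k _ => ?_
  rcases eq_or_ne k i with rfl | hk
  · rw [flipSign_apply_self, flipSign_apply_self, neg_mul_neg]
  · rw [flipSign_apply_of_ne hk, flipSign_apply_of_ne hk]

theorem inn_flipSign_left (i : Fin n) (x y : V n) :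
    inn (flipSign i x) y = inn x (flipSign i y) := by
  rw [← inn_flipSign_flipSign i x, flipSign_flipSign]

theorem sRefl_flipSign (i : Fin n) (v x : V n) :
    sRefl (flipSign i v) (flipSign i x) = flipSign i (sRefl v x) := by
  rw [sRefl, inn_flipSign_flipSign, inn_flipSign_flipSign, sRefl,
    (isLinearMap_flipSign i).map_sub, (isLinearMap_flipSign i).map_smul]

theorem flipSign_signedRoot_of_ne {k : Fin n} (hi : k ≠ i) (hj : k ≠ j) (e : ℤˣ) :
    flipSign k (signedRoot e i j) = signedRoot e i j :=
  flipSign_eq_self (signedRoot_apply_of_ne hi hj e)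

theorem flipSign_signedRoot_right (hij : i ≠ j) (e : ℤˣ) :
    flipSign j (signedRoot e i j) = signedRoot (-e) i j := by
  funext k
  rcases eq_or_ne k j with rfl | hkj
  · rw [flipSign_apply_self, signedRoot_apply_right hij, signedRoot_apply_right hij,
      Units.neg_smul]
  rcases eq_or_ne k i with rfl | hki
  · rw [flipSign_apply_of_ne hkj, signedRoot_apply_left hij, signedRoot_apply_left hij]
  · rw [flipSign_apply_of_ne hkj, signedRoot_apply_of_ne hki hkj, signedRoot_apply_of_ne hki hkj]

variable (hn : 2 ≤ n)

theorem phiW_eq_flipSign (x : V n) : phiW x = flipSign (lastIdx hn) x := by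
  funext k
  simp only [phiW, flipSign, Function.update_apply, lastIdx, Fin.ext_iff]
  split_ifs with hk
  · congr 2
    exact Fin.ext hk
  · rfl

include hn

theorem phiW_phiW (x : V n) : phiW (phiW x) = x := by
  rw [phiW_eq_flipSign hn, phiW_eq_flipSign hn, flipSign_flipSign]

theorem phiW_mem_DRoots {v : V n} (hv : v ∈ DRoots n) : phiW v ∈ DRoots n := by
  obtain ⟨i, j, hij, e, f, rfl⟩ := mem_DRoots_iff.mp hv
  have hi : lastIdx hn ≠ i := (hij.trans_le (le_lastIdx hn j)).ne'
  have hsmul : phiW (f • signedRoot e i j) = f • phiW (signedRoot e i j) := by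
    simp only [phiW_eq_flipSign hn, Units.smul_def, ← Int.cast_smul_eq_zsmul ℝ]
    exact (isLinearMap_flipSign _).map_smul ..
  rw [hsmul, phiW_eq_flipSign hn, mem_DRoots_iff]
  rcases eq_or_ne (lastIdx hn) j with rfl | hj
  · exact ⟨i, _, hij, -e, f, by rw [flipSign_signedRoot_right hij.ne]⟩
  · exact ⟨i, j, hij, e, f, by rw [flipSign_signedRoot_of_ne hi hj]⟩

end Flips

section LastTransposition

variable {n : ℕ} (hn : 2 ≤ n) (I : Finset (Fin n))

theorem swapLast_eq_swap (i : Fin n) : swapLast n i = Equiv.swap (penultIdx hn) (lastIdx hn) i := by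
  simp only [swapLast, Equiv.swap_apply_def, penultIdx, lastIdx, Fin.ext_iff]
  split_ifs <;> first | rfl | omega

include hn

theorem swapLast_swapLast (i : Fin n) : swapLast n (swapLast n i) = i := by
  rw [swapLast_eq_swap hn, swapLast_eq_swap hn, Equiv.swap_apply_self]

theorem alphaR_swapLast (i : Fin n) :
    alphaR n CType.D (swapLast n i) = phiW (alphaR n CType.D i) := by
  rw [swapLast_eq_swap hn, phiW_eq_flipSign hn]
  have hne := (penultIdx_lt_lastIdx hn).ne
  rcases eq_or_ne i (lastIdx hn) with rfl | hlast
  · rw [Equiv.swap_apply_right, alphaR_penultIdx, alphaR_lastIdx hn, flipSign_signedRoot_right hne,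
      neg_neg]
  rcases eq_or_ne i (penultIdx hn) with rfl | hpen
  · rw [Equiv.swap_apply_left, alphaR_penultIdx, alphaR_lastIdx, flipSign_signedRoot_right hne]
  · have h : i.1 + 1 < n := by
      by_contra h
      exact hlast (eq_lastIdx_of_not_lt hn h)
    have hsucc : lastIdx hn ≠ ⟨i.1 + 1, h⟩ := fun h' => hpen (Fin.ext (by
      simp only [lastIdx, penultIdx, Fin.mk.injEq] at h' ⊢
      omega))
    rw [Equiv.swap_apply_of_ne_of_ne hpen hlast, alphaR_of_lt h,
      flipSign_signedRoot_of_ne hlast.symm hsucc]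

variable {I}

theorem mem_phiIdx_iff {i : Fin n} : i ∈ phiIdx n I ↔ swapLast n i ∈ I := by
  rw [phiIdx, Finset.mem_image]
  exact ⟨fun ⟨k, hk, hki⟩ => by rwa [← hki, swapLast_swapLast hn],
    fun h => ⟨_, h, swapLast_swapLast hn i⟩⟩

theorem lastIdx_mem_phiIdx_iff : lastIdx hn ∈ phiIdx n I ↔ penultIdx hn ∈ I := by
  rw [mem_phiIdx_iff hn, swapLast_eq_swap hn, Equiv.swap_apply_right]

theorem penultIdx_mem_phiIdx_iff : penultIdx hn ∈ phiIdx n I ↔ lastIdx hn ∈ I := by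
  rw [mem_phiIdx_iff hn, swapLast_eq_swap hn, Equiv.swap_apply_left]

variable (I)

theorem phiIdx_phiIdx : phiIdx n (phiIdx n I) = I := by
  ext i
  rw [mem_phiIdx_iff hn, mem_phiIdx_iff hn, swapLast_swapLast hn]

theorem mval_phiIdx : mval n (phiIdx n I) = mval n I := by
  have hcard : (phiIdx n I).card = I.card := Finset.card_image_of_injective _
    (Function.LeftInverse.injective (swapLast_swapLast hn))
  rw [mval_eq, mval_eq, ← Finset.compl_eq_univ_sdiff, ← Finset.compl_eq_univ_sdiff,
    Finset.card_compl, Finset.card_compl, hcard]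

theorem segment_phiIdx {i : Fin n} (hi : i ≠ lastIdx hn) :
    segment (phiIdx n I) i = segment I i := by
  have hlt : i < lastIdx hn := lt_of_le_of_ne (le_lastIdx hn i) hi
  rw [segment, segment]
  congr 2
  ext j
  simp only [Finset.mem_filter, Finset.mem_sdiff, Finset.mem_univ, true_and]
  refine and_congr_left fun hj => ?_
  have hpen : j ≠ penultIdx hn := (hj.trans_le (le_penultIdx_of_lt hn hlt)).ne
  rw [mem_phiIdx_iff hn, swapLast_eq_swap hn,
    Equiv.swap_apply_of_ne_of_ne hpen (hj.trans hlt).ne]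

variable {I}

theorem not_standardI_iff :
    ¬StandardI n CType.D I ↔ penultIdx hn ∉ I ∧ lastIdx hn ∈ I := by
  simp [StandardI, hn, penultIdx, lastIdx]

variable (hI : ¬StandardI n CType.D I)
include hI

theorem standardI_phiIdx : StandardI n CType.D (phiIdx n I) := fun _ _ =>
  Or.inl ((penultIdx_mem_phiIdx_iff hn).mpr ((not_standardI_iff hn).mp hI).2)

theorem inSeg_iff_of_not_standardI {s : ℕ} (hs : s ∈ Set.Icc 1 (mval n I)) (i : Fin n) :
    InSeg n CType.D I s i ↔ segment (phiIdx n I) i = s := by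
  obtain ⟨hpen, hlast⟩ := (not_standardI_iff hn).mp hI
  have hpen_lt : (penultIdx hn).1 + 1 < n := by simp only [penultIdx]; omega
  have hlast_succ : (lastIdx hn).1 + 1 = n := by simp only [lastIdx]; omega
  have hsegI : segment I (lastIdx hn) = mval n I := (segment_last_eq_iff hlast_succ).mpr hlast
  have hsegpen := segment_succ I hpen_lt
  rw [if_neg hpen, penultIdx_succ, hsegI] at hsegpen
  have hsegφ := segment_last (phiIdx n I) hlast_succ
  rw [if_neg (mt (lastIdx_mem_phiIdx_iff hn).mp hpen), mval_phiIdx hn] at hsegφ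
  have hpos := (segment_mem_Icc I (penultIdx hn)).1
  refine inSeg_iff_of_lt_qv_iff (mval_phiIdx hn I) ?_ (fun s h1 hs i => ?_) hs i
  · rw [qv, if_neg (by omega), qval, if_pos rfl]
  by_cases hsm : s = mval n I - 1
  · rw [qv, if_pos ⟨hI, hsm⟩]
    have := monotone_segment (phiIdx n I) (le_lastIdx hn i)
    exact iff_of_true i.2 (by omega)
  rw [qv, if_neg fun h => hsm h.2, lt_qval_iff I h1 hs]
  rcases eq_or_ne i (lastIdx hn) with rfl | hi
  · omega
  · rw [segment_phiIdx hn I hi]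

end LastTransposition

section Transport

variable {n : ℕ} (hn : 2 ≤ n) {I : Finset (Fin n)} {x y : V n}
include hn

theorem phiW_mem_rootSpan {v : V n} (hv : v ∈ rootSpan (phiIdx n I)) : phiW v ∈ rootSpan I := by
  suffices h : rootSpan (phiIdx n I) ≤
      (rootSpan I).comap ((isLinearMap_flipSign (lastIdx hn)).mk' _) by
    rw [phiW_eq_flipSign hn]
    exact h hv
  refine Submodule.span_le.mpr ?_
  rintro _ ⟨i, hi, rfl⟩
  rw [SetLike.mem_coe, Submodule.mem_comap, IsLinearMap.mk'_apply, ← phiW_eq_flipSign,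
    ← alphaR_swapLast hn]
  exact alphaR_mem_rootSpan ((mem_phiIdx_iff hn).mp hi)

theorem regI_phiW (h : RegI n CType.D I x) : RegI n CType.D (phiIdx n I) (phiW x) := by
  rintro β ⟨hβ, hspan⟩
  rw [phiW_eq_flipSign hn, inn_flipSign_left, ← phiW_eq_flipSign]
  exact h _ ⟨phiW_mem_DRoots hn hβ, phiW_mem_rootSpan hn hspan⟩

theorem sRefl_phiW (v : V n) : sRefl (phiW v) (phiW x) = phiW (sRefl v x) := by
  simp only [phiW_eq_flipSign hn, sRefl_flipSign]

theorem wiOrb_phiW (h : WIOrb n CType.D I x y) :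
    WIOrb n CType.D (phiIdx n I) (phiW x) (phiW y) := by
  refine Relation.ReflTransGen.lift phiW ?_ _ _ h
  rintro a _ ⟨i, hi, rfl⟩
  exact ⟨swapLast n i, by rwa [mem_phiIdx_iff hn, swapLast_swapLast hn],
    by rw [alphaR_swapLast hn, sRefl_phiW hn]⟩

theorem conn_phiW (hI : ¬StandardI n CType.D I) (h : Conn n CType.D (phiIdx n I) x y) :
    Conn n CType.D I (phiW x) (phiW y) := by
  have hreg : ∀ {z}, RegI n CType.D (phiIdx n I) z → RegI n CType.D I (phiW z) := fun hz => by
    simpa only [phiIdx_phiIdx hn] using regI_phiW hn hz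
  have horb : ∀ {z w}, WIOrb n CType.D (phiIdx n I) z w → WIOrb n CType.D I (phiW z) (phiW w) :=
    fun hz => by simpa only [phiIdx_phiIdx hn] using wiOrb_phiW hn hz
  refine ⟨hreg h.1, hreg h.2.1, Relation.ReflTransGen.lift phiW ?_ _ _ h.2.2⟩
  rintro a b ⟨ha, hb, hab | ⟨β, hβ, hab⟩⟩
  · exact ⟨hreg ha, hreg hb, Or.inl (horb hab)⟩
  · refine ⟨hreg ha, hreg hb, Or.inr ⟨phiW β, ?_, ?_⟩⟩
    · rw [LinkedRoot, if_pos (standardI_phiIdx hn hI)] at hβ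
      rwa [LinkedRoot, if_neg hI, phiW_phiW hn, phiW_phiW hn]
    · rw [sRefl_phiW hn]
      exact horb hab

end Transport

section StandardModels

variable {n : ℕ}

/-- A replacement of `I` by a standard set `I₀` with the same segments, along a map `ψ` of weights:
the identity if `I` is standard, and the isomorphism `φ` otherwise. -/
structure StandardModel (I I₀ : Finset (Fin n)) (ψ : V n → V n) : Prop where
  standard : StandardI n CType.D I₀
  mval_eq : mval n I₀ = mval n I
  inSeg_iff : ∀ {s}, s ∈ Set.Icc 1 (mval n I) → ∀ i, InSeg n CType.D I s i ↔ segment I₀ i = s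
  abs_apply : ∀ x i, |ψ x i| = |x i|
  rowRegular_of_regI : ∀ {x}, RegI n CType.D I x → RowRegular (segment I₀) (mval n I₀) (ψ x)
  rowRegular_of_lamIPlus :
    ∀ {x}, LamIPlus n CType.D I x → RowRegular (segment I₀) (mval n I₀) (ψ x)
  apply_flipSign : ∀ i x, ψ (flipSign i x) = flipSign i (ψ x)
  conn : ∀ {x y}, Conn n CType.D I₀ (ψ x) (ψ y) → Conn n CType.D I x y

theorem exists_standardModel (hn : 2 ≤ n) (I : Finset (Fin n)) :
    ∃ (I₀ : Finset (Fin n)) (ψ : V n → V n), StandardModel I I₀ ψ := by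
  by_cases hI : StandardI n CType.D I
  · exact ⟨I, id, hI, rfl, hI.inSeg_iff, fun _ _ => rfl, (hI.regI_iff hn _).mp,
      fun h => hI.rowRegular_of_pos hn h.2, fun _ _ => rfl, id⟩
  · have hφ := standardI_phiIdx hn hI
    refine ⟨phiIdx n I, phiW, hφ, mval_phiIdx hn I, inSeg_iff_of_not_standardI hn hI,
      fun x i => by rw [phiW_eq_flipSign hn, abs_flipSign_apply],
      fun h => (hφ.regI_iff hn _).mp (regI_phiW hn h),
      fun {x} h => hφ.rowRegular_of_pos hn fun i hi => ?_,
      fun i x => by rw [phiW_eq_flipSign hn, phiW_eq_flipSign hn, flipSign_comm], fun h => ?_⟩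
    · rw [phiW_eq_flipSign hn, inn_flipSign_left, ← phiW_eq_flipSign, ← alphaR_swapLast hn]
      exact h.2 _ ((mem_phiIdx_iff hn).mp hi)
    · simpa only [phiW_phiW hn] using conn_phiW hn hI h

end StandardModels

section AbsPerms

variable {ι : Type*} {x y z : ι → ℝ}

/-- The absolute values of the entries of `y` are a permutation of those of `x`. -/
def AbsPerm (x y : ι → ℝ) : Prop := ∃ σ : Equiv.Perm ι, ∀ k, |y k| = |x (σ k)|

theorem AbsPerm.symm (h : AbsPerm x y) : AbsPerm y x := by
  obtain ⟨σ, hσ⟩ := h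
  exact ⟨σ.symm, fun k => by rw [hσ, Equiv.apply_symm_apply]⟩

theorem AbsPerm.trans (hxy : AbsPerm x y) (hyz : AbsPerm y z) : AbsPerm x z := by
  obtain ⟨σ, hσ⟩ := hxy
  obtain ⟨τ, hτ⟩ := hyz
  exact ⟨τ.trans σ, fun k => by rw [hτ, hσ, Equiv.trans_apply]⟩

theorem absPerm_of_abs_eq (h : ∀ k, |y k| = |x k|) : AbsPerm x y := ⟨Equiv.refl _, h⟩

theorem AbsPerm.card_filter_abs_mem [Fintype ι] (h : AbsPerm x y) (B : Set ℝ)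
    [DecidablePred (· ∈ B)] :
    (Finset.univ.filter fun i => |x i| ∈ B).card =
      (Finset.univ.filter fun i => |y i| ∈ B).card := by
  obtain ⟨σ, hσ⟩ := h
  refine (Finset.card_equiv σ fun i => ?_).symm
  simp only [Finset.mem_filter, Finset.mem_univ, true_and, hσ]

variable {n : ℕ} {x y : V n}

theorem absPerm_sRefl_alphaR (hn : 2 ≤ n) (i : Fin n) (x : V n) :
    AbsPerm x (sRefl (alphaR n CType.D i) x) := by
  by_cases h : i.1 + 1 < n
  · have hne : i ≠ ⟨i.1 + 1, h⟩ := Fin.ne_of_lt (Nat.lt_succ_self i.1)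
    exact ⟨_, fun k => by rw [alphaR_of_lt h, sRefl_signedRoot hne, abs_signedSwap_apply]⟩
  · obtain rfl := eq_lastIdx_of_not_lt hn h
    exact ⟨_, fun k => by
      rw [alphaR_lastIdx, sRefl_signedRoot (penultIdx_lt_lastIdx hn).ne, abs_signedSwap_apply]⟩

theorem absPerm_of_wiOrb (hn : 2 ≤ n) {I : Finset (Fin n)} (h : WIOrb n CType.D I x y) :
    AbsPerm x y := by
  induction h with
  | refl => exact absPerm_of_abs_eq fun _ => rfl
  | tail _ h ih =>
    obtain ⟨i, -, rfl⟩ := h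
    exact ih.trans (absPerm_sRefl_alphaR hn i _)

end AbsPerms

section LastSegment

variable {n : ℕ} {I : Finset (Fin n)} {i : Fin n}

theorem nsval_mval (I : Finset (Fin n)) :
    nsval n CType.D I (mval n I) =
      (Finset.univ.filter fun i => InSeg n CType.D I (mval n I) i).card := by
  have hmap : (Finset.univ.filter fun i => InSeg n CType.D I (mval n I) i).map Fin.valEmbedding =
      Finset.Ico (qv n CType.D I (mval n I - 1)) n := by
    ext k
    simp only [InSeg, qv_mval, Finset.mem_map, Finset.mem_filter, Finset.mem_univ, true_and,
      Finset.mem_Ico, Fin.valEmbedding_apply]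
    constructor
    · rintro ⟨i, hi, rfl⟩
      omega
    · rintro ⟨hk, hkn⟩
      exact ⟨⟨k, hkn⟩, ⟨Nat.lt_succ_of_le hk, hkn⟩, rfl⟩
  rw [← Finset.card_map, hmap, Nat.card_Ico, nsval, qv_mval]

theorem exists_inSeg_mval (h : nsval n CType.D I (mval n I) ≠ 0) :
    ∃ i, InSeg n CType.D I (mval n I) i := by
  rw [nsval_mval, Finset.card_ne_zero] at h
  obtain ⟨i, hi⟩ := h
  exact ⟨i, (Finset.mem_filter.mp hi).2⟩

theorem standardI_of_inSeg_mval (h : InSeg n CType.D I (mval n I) i) : StandardI n CType.D I := by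
  by_contra hI
  have hq := h.1
  rw [qv, if_pos ⟨hI, rfl⟩] at hq
  have := i.2
  omega

theorem StandardI.nsval_mval (hI : StandardI n CType.D I) :
    nsval n CType.D I (mval n I) = (Finset.univ.filter fun i => segment I i = mval n I).card := by
  simp only [JantzenBlocks.nsval_mval, hI.inSeg_iff (mval_mem_Icc I)]

end LastSegment

section DominantWeights

variable {n : ℕ} {J : Finset (Fin n)} {lbar : V n} {i j : Fin n}

theorem aval_mval (J : Finset (Fin n)) (lbar : V n) : aval n CType.D J lbar (mval n J) = 0 := by
  rw [aval, if_neg (lt_irrefl _)]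

theorem aval_zero (J : Finset (Fin n)) (t : ℕ) : aval n CType.D J 0 t = 0 := by
  simp [aval]

theorem StandardI.exists_aval_eq (hJ : StandardI n CType.D J) (lbar : V n) {t : ℕ} (h1 : 1 ≤ t)
    (ht : t < mval n J) : ∃ k, segment J k = t ∧ aval n CType.D J lbar t = lbar k := by
  obtain ⟨k, hq, hk, -⟩ := exists_qval_eq J h1 ht
  refine ⟨k, hk, ?_⟩
  rw [aval, if_pos ht, hJ.qv_eq, hq, Nat.add_sub_cancel, dif_pos k.2]

section Ordering

variable (hdom : DominantW n CType.D lbar)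
  (hstab : ∀ i, i ∈ J ↔ inn lbar (alphaR n CType.D i) = 0)
include hdom hstab

theorem le_and_eq_iff_of_lt (hij : i < j) :
    lbar j ≤ lbar i ∧ (lbar i = lbar j ↔ segment J i = segment J j) := by
  refine rel_of_segment_eq (I := Finset.univ)
    (r := fun i j => lbar j ≤ lbar i ∧ (lbar i = lbar j ↔ segment J i = segment J j))
    (fun k _ h => ?_) (fun {a b c} hab hbc hrab hrbc => ?_) hij (by simp [segment])
  · have hk := hdom k
    have hkJ := hstab k
    rw [alphaR_of_lt h, inn_signedRoot, one_smul] at hk hkJ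
    rw [segment_succ_eq_iff h, hkJ, sub_eq_zero]
    exact ⟨sub_nonneg.mp hk, Iff.rfl⟩
  · have hsab := monotone_segment J hab.le
    have hsbc := monotone_segment J hbc.le
    refine ⟨hrbc.1.trans hrab.1, fun h => ?_, fun h => ?_⟩
    · exact (hrab.2.mp (le_antisymm (h.trans_le hrbc.1) hrab.1)).trans
        (hrbc.2.mp (le_antisymm (hrab.1.trans h.le) hrbc.1))
    · exact (hrab.2.mpr (le_antisymm hsab (h ▸ hsbc))).trans
        (hrbc.2.mpr (le_antisymm hsbc (h ▸ hsab)))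

theorem eq_of_segment_eq (h : segment J i = segment J j) : lbar i = lbar j := by
  rcases lt_trichotomy i j with hij | rfl | hji
  · exact (le_and_eq_iff_of_lt hdom hstab hij).2.mpr h
  · rfl
  · exact ((le_and_eq_iff_of_lt hdom hstab hji).2.mpr h.symm).symm

theorem lt_of_segment_lt (h : segment J i < segment J j) : lbar j < lbar i := by
  obtain ⟨hle, heq⟩ := le_and_eq_iff_of_lt hdom hstab ((monotone_segment J).reflect_lt h)
  exact lt_of_le_of_ne hle fun he => h.ne (heq.mp he.symm)

theorem StandardI.eq_zero_of_segment_eq_mval (hJ : StandardI n CType.D J)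
    (hi : segment J i = mval n J) : lbar i = 0 := by
  rcases le_or_gt 2 n with hn | hn
  · obtain ⟨hl, hp⟩ := hJ.segment_last_eq hn hi
    have hsum := (hstab _).mp (hJ.last_mem hn hi).1
    rw [alphaR_lastIdx, inn_signedRoot, Units.neg_smul, one_smul, sub_neg_eq_add,
      eq_of_segment_eq hdom hstab (hp.trans hi.symm),
      eq_of_segment_eq hdom hstab (hl.trans hi.symm)] at hsum
    linarith
  · have hin : i.1 + 1 = n := by have := i.2; omega
    have hi0 := (hstab i).mp ((segment_last_eq_iff hin).mp hi)
    have hsub : (⟨n - 2, by omega⟩ : Fin n) = i := Fin.ext (by simp only; omega)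
    simp only [alphaR, dif_neg (show ¬i.1 + 1 < n by omega), hsub] at hi0
    rw [inn_eq_dotProduct, dotProduct_add, ← inn_eq_dotProduct, inn_ee] at hi0
    linarith

end Ordering

/-- A description of the dominant weight `λ̄` by segments of `J`: the `t`-th segment is nonempty,
and its entries are all equal to `a_t`, where `a_1 > … > a_{m̄} = 0`. -/
structure SegmentData (J : Finset (Fin n)) (lbar : V n) : Prop where
  standard : StandardI n CType.D J
  two_le : 2 ≤ n
  one_lt_mval : 1 < mval n J
  apply_eq : ∀ k, lbar k = aval n CType.D J lbar (segment J k)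
  exists_segment_eq : ∀ {t}, t ∈ Set.Icc 1 (mval n J) → ∃ k, segment J k = t
  strictAntiOn : StrictAntiOn (aval n CType.D J lbar) (Set.Icc 1 (mval n J))

theorem SegmentData.of_dominantW (hdom : DominantW n CType.D lbar)
    (hstab : ∀ i, i ∈ J ↔ inn lbar (alphaR n CType.D i) = 0)
    (hpos : 0 < aval n CType.D J lbar (mval n J - 1))
    (hlast : nsval n CType.D J (mval n J) ≠ 0) : SegmentData J lbar := by
  obtain ⟨l, hl⟩ := exists_inSeg_mval hlast
  have hJ := standardI_of_inSeg_mval hl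
  rw [hJ.inSeg_iff (mval_mem_Icc J)] at hl
  have hzero : ∀ {k}, segment J k = mval n J → lbar k = 0 :=
    fun hk => hJ.eq_zero_of_segment_eq_mval hdom hstab hk
  have hne : lbar ≠ 0 := by
    rintro rfl
    exact hpos.ne' (aval_zero J _)
  have hrep : ∀ {t}, t ∈ Set.Icc 1 (mval n J) →
      ∃ k, segment J k = t ∧ aval n CType.D J lbar t = lbar k := by
    rintro t ⟨h1, ht⟩
    rcases ht.lt_or_eq with ht | rfl
    · exact hJ.exists_aval_eq lbar h1 ht
    · exact ⟨l, hl, by rw [aval_mval, hzero hl]⟩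
  refine ⟨hJ, ?_, ?_, fun k => ?_, fun ht => ?_, fun t ht u hu htu => ?_⟩
  · by_contra hn
    refine hne (funext fun k => hzero ?_)
    rwa [show k = l from Fin.ext (by have := k.2; have := l.2; omega)]
  · by_contra hm
    refine hne (funext fun k => hzero ?_)
    have := segment_mem_Icc J k
    rw [Set.mem_Icc] at this
    omega
  · obtain ⟨k', hk', haval⟩ := hrep (segment_mem_Icc J k)
    rw [haval, eq_of_segment_eq hdom hstab hk']
  · exact (hrep ht).imp fun _ h => h.1
  · obtain ⟨k, rfl, hk⟩ := hrep ht
    obtain ⟨k', rfl, hk'⟩ := hrep hu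
    rw [hk, hk']
    exact lt_of_segment_lt hdom hstab htu

namespace SegmentData

variable (hJ : SegmentData J lbar)
include hJ

theorem aval_nonneg {t : ℕ} (ht : t ∈ Set.Icc 1 (mval n J)) : 0 ≤ aval n CType.D J lbar t := by
  rw [← aval_mval J lbar]
  exact hJ.strictAntiOn.antitoneOn ht ⟨ht.1.trans ht.2, le_rfl⟩ ht.2

theorem abs_apply (k : Fin n) : |lbar k| = aval n CType.D J lbar (segment J k) := by
  rw [hJ.apply_eq k, abs_of_nonneg (hJ.aval_nonneg (segment_mem_Icc J k))]

end SegmentData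

end DominantWeights

section Counting

variable {ι ρ : Type*} {row : ι → ρ} {m : ρ} {x y : ι → ℝ}

/-- If row `s` of `x` has no room for `±t`, every regular `y` has at most as many entries `±t` in
row `s`; the embedding `f` realizes this inequality. -/
theorem RowRegular.exists_injOn_of_not_hasRoom (hy : RowRegular row m y) {A : Set ι}
    (hA : ∀ i ∈ A, ¬HasRoom row m x (row i) |y i|) :
    ∃ f : ι → ι, Set.InjOn f A ∧ ∀ i ∈ A, row (f i) = row i ∧ |x (f i)| = |y i| := by
  have hmatch : ∀ i ∈ A, ∃ j, row j = row i ∧ |x j| = |y i| ∧ (row i ≠ m → x j = y i) := by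
    intro i hi
    have hfits : ¬Fits row m x (row i) (y i) := fun h => hA i hi ⟨_, rfl, h⟩
    simp only [Fits, not_forall, not_and_or, not_not] at hfits
    obtain ⟨j, hj, hji | ⟨hm, hji⟩⟩ := hfits
    · exact ⟨j, hj, by rw [hji], fun _ => hji⟩
    · exact ⟨j, hj, by rw [hji, abs_neg], fun h => absurd hm h⟩
  choose! f hrow habs hval using hmatch
  refine ⟨f, fun i hi j hj hij => ?_, fun i hi => ⟨hrow i hi, habs i hi⟩⟩
  have hr : row i = row j := by rw [← hrow i hi, hij, hrow j hj]
  by_contra hne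
  by_cases hm : row i = m
  · exact hy.isSingle_of_row_eq (hr ▸ hm) i hne hr (by rw [← habs i hi, hij, habs j hj])
  · exact (hy i j hne hr).1 (by rw [← hval i hi hm, hij, hval j hj (hr ▸ hm)])

namespace ResidualClosed

variable {P : Set ρ} {Q : Set ℝ} (hc : ResidualClosed row m x P Q) (hy : RowRegular row m y)
  (hxy : AbsPerm x y)
include hc hy hxy

/-- Rows in `P` are saturated with values outside `Q`, and in `x` all values from `Q` lie in rows
from `P`. As `x` and `y` share their absolute values, both facts persist for `y`, by counting. -/
theorem exists_surjOn_and_mem [Finite ι] :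
    (∃ f : ι → ι, (∀ i, row i ∈ P → |y i| ∉ Q → row (f i) = row i ∧ |x (f i)| = |y i|) ∧
      Set.SurjOn f {i | row i ∈ P ∧ |y i| ∉ Q} {i | row i ∈ P ∧ |x i| ∉ Q}) ∧
    ∀ i, |y i| ∈ Q → row i ∈ P := by
  cases nonempty_fintype ι
  obtain ⟨f, hinj, hf⟩ := hy.exists_injOn_of_not_hasRoom (A := {i | row i ∈ P ∧ |y i| ∉ Q})
    fun i hi hroom => hi.2 (hc.mem_of_hasRoom hi.1 hroom)
  let R := Finset.univ.filter fun i => row i ∈ P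
  let X := Finset.univ.filter fun i => |x i| ∈ Q
  let Y := Finset.univ.filter fun i => |y i| ∈ Q
  have hXR : X ⊆ R := fun i hi => by
    simp only [X, R, Finset.mem_filter, Finset.mem_univ, true_and] at hi ⊢
    exact hc.mem_of_occurs hi ⟨i, rfl, rfl⟩
  have hYset : (↑(R \ Y) : Set ι) = {i | row i ∈ P ∧ |y i| ∉ Q} := by ext; simp [R, Y]
  have hXset : (↑(R \ X) : Set ι) = {i | row i ∈ P ∧ |x i| ∉ Q} := by ext; simp [R, X]
  have hmaps : Set.MapsTo f ↑(R \ Y) ↑(R \ X) := by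
    rw [hYset, hXset]
    intro i hi
    rwa [Set.mem_ofPred, (hf i hi).1, (hf i hi).2]
  rw [← hYset] at hinj
  have hXY : X.card = Y.card := hxy.card_filter_abs_mem Q
  have hle := Finset.card_le_card_of_injOn f hmaps hinj
  have hX := Finset.card_sdiff_add_card_eq_card hXR
  have hY := Finset.card_sdiff_add_card R Y
  have hunion : R = R ∪ Y := Finset.eq_of_subset_of_card_le Finset.subset_union_left (by omega)
  refine ⟨⟨f, fun i hi hiQ => hf i ⟨hi, hiQ⟩, ?_⟩, fun i hi => ?_⟩
  · rw [← hYset, ← hXset]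
    exact Finset.surjOn_of_injOn_of_card_le f hmaps hinj (by rw [← hunion] at hY; omega)
  · have hiR : i ∈ R := by
      rw [hunion]
      exact Finset.mem_union_right _ (by simpa [Y] using hi)
    simpa [R] using hiR

theorem mem_of_abs_mem [Finite ι] {i : ι} (hi : |y i| ∈ Q) : row i ∈ P :=
  (hc.exists_surjOn_and_mem hy hxy).2 i hi

end ResidualClosed

variable [Fintype ι]

/-- The multiplicity `n_s^x(t)` of `±t` in row `s` of `x`. -/
noncomputable def rowCount (row : ι → ρ) (x : ι → ℝ) (s : ρ) (t : ℝ) : ℕ :=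
  (Finset.univ.filter fun i => row i = s ∧ |x i| = t).card

theorem rowCount_eq_zero_iff {s : ρ} {t : ℝ} : rowCount row x s t = 0 ↔ ¬Occurs row x s t := by
  simp [rowCount, Occurs, Finset.filter_eq_empty_iff]

theorem RowRegular.rowCount_le_of_not_hasRoom (hy : RowRegular row m y) {s : ρ} {t : ℝ}
    (h : ¬HasRoom row m x s t) : rowCount row y s t ≤ rowCount row x s t := by
  obtain ⟨f, hinj, hf⟩ := hy.exists_injOn_of_not_hasRoom (A := {i | row i = s ∧ |y i| = t})
    (by rintro i ⟨rfl, rfl⟩; exact h)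
  refine Finset.card_le_card_of_injOn f (fun i hi => ?_) (by simpa using hinj)
  obtain ⟨rfl, rfl⟩ : row i = s ∧ |y i| = t := by simpa using hi
  simpa using hf i ⟨rfl, rfl⟩

theorem ResidualClosed.rowCount_le {P : Set ρ} {Q : Set ℝ} (hc : ResidualClosed row m x P Q)
    (hy : RowRegular row m y) (hxy : AbsPerm x y) {s : ρ} {t : ℝ} (hs : s ∈ P) (ht : t ∉ Q) :
    rowCount row x s t ≤ rowCount row y s t := by
  obtain ⟨⟨f, hf, hsurj⟩, -⟩ := hc.exists_surjOn_and_mem hy hxy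
  refine Finset.card_le_card_of_surjOn f fun j hj => ?_
  obtain ⟨rfl, rfl⟩ : row j = s ∧ |x j| = t := by simpa using hj
  obtain ⟨i, ⟨hiP, hiQ⟩, rfl⟩ := hsurj ⟨hs, ht⟩
  obtain ⟨hrow, habs⟩ := hf i hiP hiQ
  exact ⟨i, by simp [hrow, habs], rfl⟩

end Counting

section SeparablePairs

variable {n : ℕ} {I I₀ J : Finset (Fin n)} {ψ : V n → V n} {x lbar : V n} {P : Set ℕ} {Q : Set ℝ}

theorem SegmentData.image_abs (hJ : SegmentData J lbar) (hx : AbsPerm lbar x) :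
    Finset.univ.image (fun i => |x i|) =
      (Finset.Icc 1 (mval n J)).image (aval n CType.D J lbar) := by
  obtain ⟨σ, hσ⟩ := hx
  ext a
  simp only [Finset.mem_image, Finset.mem_univ, true_and, hσ, hJ.abs_apply, Finset.mem_Icc]
  constructor
  · rintro ⟨i, rfl⟩
    exact ⟨_, segment_mem_Icc J _, rfl⟩
  · rintro ⟨t, ht, rfl⟩
    obtain ⟨k, rfl⟩ := hJ.exists_segment_eq ht
    exact ⟨σ.symm k, by rw [Equiv.apply_symm_apply]⟩

theorem SegmentData.apply_eq_zero_iff (hJ : SegmentData J lbar) {k : Fin n} :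
    lbar k = 0 ↔ segment J k = mval n J := by
  rw [hJ.apply_eq, ← aval_mval J lbar]
  exact hJ.strictAntiOn.injOn.eq_iff (segment_mem_Icc J k) (mval_mem_Icc J)

theorem StandardModel.nsl_eq (M : StandardModel I I₀ ψ) {s : ℕ} (hs : s ∈ Set.Icc 1 (mval n I))
    (x : V n) (a : ℝ) : nsl n CType.D I x s a = rowCount (segment I₀) (ψ x) s a := by
  simp only [nsl, rowCount, M.inSeg_iff hs, M.abs_apply]

variable (I J lbar P Q) in
/-- The pair `(S, S̄)` of sets of segments cut out by a set `P` of rows and the complement of a set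
`Q` of absolute values. It is separable if `P` and `Q` are closed in the residual digraph. -/
noncomputable def closedPair : Finset ℕ × Finset ℕ :=
  ((Finset.Icc 1 (mval n I)).filter (· ∈ P),
    (Finset.Icc 1 (mval n J)).filter (aval n CType.D J lbar · ∉ Q))

theorem mem_closedPair_fst {s : ℕ} :
    s ∈ (closedPair I J lbar P Q).1 ↔ s ∈ Set.Icc 1 (mval n I) ∧ s ∈ P := by
  rw [closedPair, Finset.mem_filter, Finset.mem_Icc, Set.mem_Icc]

theorem mem_closedPair_snd {t : ℕ} : t ∈ (closedPair I J lbar P Q).2 ↔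
    t ∈ Set.Icc 1 (mval n J) ∧ aval n CType.D J lbar t ∉ Q := by
  rw [closedPair, Finset.mem_filter, Finset.mem_Icc, Set.mem_Icc]

theorem mval_mem_closedPair_fst : mval n I ∈ (closedPair I J lbar P Q).1 ↔ mval n I ∈ P := by
  rw [mem_closedPair_fst, and_iff_right (mval_mem_Icc I)]

theorem mval_mem_closedPair_snd : mval n J ∈ (closedPair I J lbar P Q).2 ↔ 0 ∉ Q := by
  rw [mem_closedPair_snd, aval_mval, and_iff_right (mval_mem_Icc J)]

theorem StandardModel.closedPair_mem_DSet (M : StandardModel I I₀ ψ) (hJ : SegmentData J lbar)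
    (hx : AbsPerm lbar x) (hc : ResidualClosed (segment I₀) (mval n I₀) x P Q)
    (hm : 1 < mval n I) (hPQ : mval n I ∈ P ↔ 0 ∉ Q) (hS : (closedPair I J lbar P Q).1.Nonempty)
    (hSb : (closedPair I J lbar P Q).2.Nonempty) :
    closedPair I J lbar P Q ∈ DSet n CType.D I J lbar := by
  rintro y ⟨horb, hy⟩
  have hxy : AbsPerm x (ψ y) := hx.symm.trans <|
    (absPerm_of_wiOrb hJ.two_le horb).trans (absPerm_of_abs_eq (M.abs_apply y))
  have hyreg := M.rowRegular_of_lamIPlus hy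
  refine ⟨hS, hSb, Finset.filter_subset _ _, Finset.filter_subset _ _, hm, hJ.one_lt_mval,
    fun s hs t ht z _ hz => ?_, fun s hs hsP t ht htQ => ?_, ?_⟩
  · obtain ⟨hs, hsP⟩ := mem_closedPair_fst.mp hs
    have htQ := (mem_closedPair_snd.mp ht).2
    rw [M.nsl_eq hs, M.nsl_eq hs]
    exact ((M.rowRegular_of_regI hz).rowCount_le_of_not_hasRoom
      fun hroom => htQ (hc.mem_of_hasRoom hsP hroom)).trans (hc.rowCount_le hyreg hxy hsP htQ)
  · rw [Finset.mem_Icc] at hs ht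
    rw [mem_closedPair_fst, Set.mem_Icc, and_iff_right hs] at hsP
    rw [mem_closedPair_snd, Set.mem_Icc, and_iff_right ht, not_not] at htQ
    rw [M.nsl_eq hs, rowCount_eq_zero_iff]
    rintro ⟨i, rfl, habs⟩
    exact hsP (hc.mem_of_abs_mem hyreg hxy (habs ▸ htQ))
  · rw [mval_mem_closedPair_fst, mval_mem_closedPair_snd, hPQ]

theorem IsWeakPair.mval_mem {p : Finset ℕ × Finset ℕ} (h : IsWeakPair n I J p) :
    mval n I ∈ p.1 ∨ mval n J ∈ p.2 := by
  rcases h with rfl | rfl | rfl | rfl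
  · exact Or.inr (Finset.mem_singleton_self _)
  · exact Or.inr (Finset.mem_singleton_self _)
  · exact Or.inl (Finset.mem_singleton_self _)
  · exact Or.inl (Finset.mem_singleton_self _)

theorem IsWeakPair.eq_of_mval_mem {p : Finset ℕ × Finset ℕ} (h : IsWeakPair n I J p)
    (hI : mval n I ∈ p.1) (hJ : mval n J ∈ p.2) :
    p = (Finset.Icc 1 (mval n I), {mval n J}) ∨ p = ({mval n I}, Finset.Icc 1 (mval n J)) := by
  rcases h with rfl | rfl | rfl | rfl
  · rw [Finset.mem_Icc] at hI
    omega
  · exact Or.inl rfl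
  · rw [Finset.mem_Icc] at hJ
    omega
  · exact Or.inr rfl

section NotStronglySeparable

variable (M : StandardModel I I₀ ψ) (hJ : SegmentData J lbar) (hx : AbsPerm lbar x)
  (hsep : ¬StronglySepSys n CType.D I J lbar)
  (hc : ResidualClosed (segment I₀) (mval n I₀) x P Q)
include M hJ hx hsep hc

theorem StandardModel.abs_mem_of_residualClosed (hP : mval n I₀ ∉ P) (hQ : 0 ∈ Q) (i : Fin n) :
    |x i| ∈ Q := by
  have himage := Finset.ext_iff.mp (hJ.image_abs hx)
  simp only [Finset.mem_image, Finset.mem_univ, true_and, Finset.mem_Icc] at himage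
  by_contra hiQ
  obtain ⟨t, ht, hti⟩ := (himage _).mp ⟨i, rfl⟩
  obtain ⟨k, hk⟩ := (himage 0).mpr ⟨mval n J, mval_mem_Icc J, aval_mval J lbar⟩
  have hkP := hc.mem_of_occurs hQ ⟨k, rfl, hk⟩
  have hkm := segment_mem_Icc I₀ k
  have hm : segment I₀ k < mval n I₀ := lt_of_le_of_ne hkm.2 fun h => hP (h ▸ hkP)
  rw [M.mval_eq] at hP hm hkm
  refine hsep ⟨_, M.closedPair_mem_DSet hJ hx hc (hkm.1.trans_lt hm) (by simp only [hP, hQ]; tauto)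
    ⟨_, mem_closedPair_fst.mpr ⟨hkm, hkP⟩⟩ ⟨t, mem_closedPair_snd.mpr ⟨ht, hti ▸ hiQ⟩⟩, ?_⟩
  intro hweak
  rcases hweak.mval_mem with h | h
  · exact hP (mval_mem_closedPair_fst.mp h)
  · exact mval_mem_closedPair_snd.mp h hQ

theorem StandardModel.eq_mval_or_subset_of_residualClosed (hm : 1 < mval n I₀) (hP : mval n I₀ ∈ P)
    (hQ : 0 ∉ Q) :
    ((∀ s ∈ Set.Icc 1 (mval n I₀), s ∈ P → s = mval n I₀) ∧ ∀ j, |x j| ∉ Q) ∨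
      (Set.Icc 1 (mval n I₀) ⊆ P ∧ ∀ j, x j ≠ 0 → |x j| ∈ Q) := by
  rw [M.mval_eq] at hm hP ⊢
  have hS := (mval_mem_closedPair_fst (J := J) (lbar := lbar) (Q := Q)).mpr hP
  have hSb := (mval_mem_closedPair_snd (I := I) (J := J) (lbar := lbar) (P := P)).mpr hQ
  have hD := M.closedPair_mem_DSet hJ hx hc hm (iff_of_true hP hQ) ⟨_, hS⟩ ⟨_, hSb⟩
  have habs : ∀ j, ∃ t ∈ Set.Icc 1 (mval n J), aval n CType.D J lbar t = |x j| := fun j => by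
    simpa using Finset.ext_iff.mp (hJ.image_abs hx) |x j|
  have hweak : IsWeakPair n I J (closedPair I J lbar P Q) := by
    by_contra h
    exact hsep ⟨_, hD, h⟩
  rcases hweak.eq_of_mval_mem hS hSb with h | h
  · refine Or.inr ⟨fun s hs => ?_, fun j hj => ?_⟩
    · have hsS : s ∈ (closedPair I J lbar P Q).1 := h ▸ Finset.mem_Icc.mpr hs
      exact (mem_closedPair_fst.mp hsS).2
    · obtain ⟨t, ht, htj⟩ := habs j
      by_contra hjQ
      have htSb : t ∈ (closedPair I J lbar P Q).2 := mem_closedPair_snd.mpr ⟨ht, htj ▸ hjQ⟩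
      rw [h, Finset.mem_singleton] at htSb
      rw [htSb, aval_mval] at htj
      exact hj (abs_eq_zero.mp htj.symm)
  · refine Or.inl ⟨fun s hs hsP => ?_, fun j => ?_⟩
    · have hsS : s ∈ (closedPair I J lbar P Q).1 := mem_closedPair_fst.mpr ⟨hs, hsP⟩
      rwa [h, Finset.mem_singleton] at hsS
    · obtain ⟨t, ht, htj⟩ := habs j
      have htSb : t ∈ (closedPair I J lbar P Q).2 := h ▸ Finset.mem_Icc.mpr ht
      exact htj ▸ (mem_closedPair_snd.mp htSb).2

end NotStronglySeparable

theorem StandardModel.nsval_mval_eq_of_occurs_last (M : StandardModel I I₀ ψ)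
    (hJ : SegmentData J lbar) (hp : AbsPerm lbar x) (hx : RowRegular (segment I₀) (mval n I₀) x)
    (hocc : ∀ j, Occurs (segment I₀) x (mval n I₀) |x j|) :
    nsval n CType.D I (mval n I) = mval n J := by
  have himage : (Finset.univ.filter fun i => segment I₀ i = mval n I).image (fun i => |x i|) =
      Finset.univ.image fun i => |x i| := by
    refine (Finset.image_subset_image (Finset.filter_subset _ _)).antisymm fun a ha => ?_
    obtain ⟨j, -, rfl⟩ := Finset.mem_image.mp ha
    obtain ⟨i, hi, hij⟩ := hocc j
    exact Finset.mem_image.mpr ⟨i, by simpa [M.mval_eq] using hi, hij⟩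
  rw [hJ.image_abs hp] at himage
  have hcard := congrArg Finset.card himage
  rw [Finset.card_image_of_injOn, Finset.card_image_of_injOn, Nat.card_Icc] at hcard
  · simpa only [nsval_mval, M.inSeg_iff (mval_mem_Icc I), Nat.add_sub_cancel] using hcard
  · simpa using hJ.strictAntiOn.injOn
  · intro i hi j hj hij
    have hi : segment I₀ i = mval n I₀ := by simpa [M.mval_eq] using hi
    have hj : segment I₀ j = mval n I₀ := by simpa [M.mval_eq] using hj
    by_contra hne
    exact hx.isSingle_of_row_eq hj i hne (hi.trans hj.symm) hij

theorem SegmentData.nsval_mval_eq_of_occurs_zero (hJ : SegmentData J lbar) (hp : AbsPerm lbar x)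
    (hx : RowRegular (segment I₀) (mval n I₀) x)
    (hocc : ∀ s ∈ Set.Icc 1 (mval n I₀), Occurs (segment I₀) x s 0) :
    nsval n CType.D J (mval n J) = mval n I₀ := by
  have himage : (Finset.univ.filter fun i => x i = 0).image (segment I₀) =
      Finset.Icc 1 (mval n I₀) := by
    ext s
    simp only [Finset.mem_image, Finset.mem_filter, Finset.mem_univ, true_and, Finset.mem_Icc]
    constructor
    · rintro ⟨i, -, rfl⟩
      exact segment_mem_Icc I₀ i
    · intro hs
      obtain ⟨i, hi, hi0⟩ := hocc s hs
      exact ⟨i, abs_eq_zero.mp hi0, hi⟩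
  have hcard := congrArg Finset.card himage
  rw [Finset.card_image_of_injOn, Nat.card_Icc, Nat.add_sub_cancel] at hcard
  · have hzeros := hp.card_filter_abs_mem {0}
    simp only [Set.mem_singleton_iff, abs_eq_zero, hJ.apply_eq_zero_iff] at hzeros
    rw [hJ.standard.nsval_mval, ← hcard]
    convert hzeros
  · intro i hi j hj hij
    have hi : x i = 0 := by simpa using hi
    have hj : x j = 0 := by simpa using hj
    by_contra hne
    exact (hx i j hne hij).1 (hi.trans hj.symm)

end SeparablePairs

/-- Proposition 5.7 / `ssprop2`. -/
theorem statement5 (n : ℕ) (I J : Finset (Fin n)) (lam lbar : V n)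
    (hint : IntegralW n CType.D lam) (hreg : RegI n CType.D I lam)
    (horb : WOrb n CType.D lam lbar) (hdom : DominantW n CType.D lbar)
    (hJ : ∀ i : Fin n, i ∈ J ↔ inn lbar (alphaR n CType.D i) = 0)
    (hA : 0 < aval n CType.D J lbar (mval n J - 1))
    (i : Fin n) (hregi : RegI n CType.D I (sRefl (ee i) lam))
    (hnc : ¬ Conn n CType.D I lam (sRefl (ee i) lam))
    (h1 : nsval n CType.D J (mval n J) ≠ 0)
    (h2 : ¬ (nsval n CType.D I (mval n I) = mval n J ∧
             nsval n CType.D J (mval n J) = mval n I)) :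
    StronglySepSys n CType.D I J lbar := by
  have hbar := SegmentData.of_dominantW hdom hJ hA h1
  obtain ⟨I₀, ψ, M⟩ := exists_standardModel hbar.two_le I
  rw [sRefl_ee] at hregi hnc
  have hne : ψ lam i ≠ 0 := by
    rw [← abs_ne_zero, M.abs_apply, abs_ne_zero]
    exact fun h0 => hnc ((flipSign_eq_self h0).symm ▸ ⟨hreg, hreg, .refl⟩)
  have hx := M.rowRegular_of_regI hreg
  have hx' := M.apply_flipSign _ _ ▸ M.rowRegular_of_regI hregi
  have hp : AbsPerm lbar (ψ lam) :=
    (absPerm_of_wiOrb hbar.two_le horb).symm.trans (absPerm_of_abs_eq (M.abs_apply lam))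
  by_contra hsep
  refine hnc (M.conn (M.apply_flipSign _ _ ▸
    ((M.standard.moveSystem hbar.two_le).flip_of_forall_residualClosed hx hne
      (hx.isSingle_of_flipSign hx') (segment_mem_Icc I₀)
      (fun P Q hc hP hQ => M.abs_mem_of_residualClosed hbar hp hsep hc hP hQ i)
      (fun hi P Q hc => M.eq_mval_or_subset_of_residualClosed hbar hp hsep hc
        ((segment_mem_Icc I₀ i).1.trans_lt (lt_of_le_of_ne (segment_mem_Icc I₀ i).2 hi)))
      (fun _ ⟨hzero, hlast⟩ => h2 ⟨M.nsval_mval_eq_of_occurs_last hbar hp hx hlast,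
        M.mval_eq ▸ hbar.nsval_mval_eq_of_occurs_zero hp hx hzero⟩)).1))

end JantzenBlocks
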